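/- arXiv:2101.09386 — 2 statements merged into one kernel-verified Lean document; each statement's English description precedes it below -/
import Mathlib

section
/- Let K be a field of characteristic zero, n ≥ 1, and let Γ be a subgroup of GL_n(K) all of whose elements are semi-simple (an anisotropic linear group). Then Γ is boundedly generated if and only if Γ is finitely generated and virtually abelian. -/
open Matrix

/-- An element of `GL n K` is semi-simple if the corresponding linear endomorphism
of `K^n` is a semisimple endomorphism. -/
def IsSemisimpleElt {n : ℕ} {K : Type*} [Field K] (g : GL (Fin n) K) : Prop :=
  Module.End.IsSemisimple ((g : Matrix (Fin n) (Fin n) K).mulVecLin)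

/-- A group `G` is boundedly generated if it is a finite product of cyclic subgroups:
there are `γ₁, …, γ_r ∈ G` such that every element is `γ₁^{k₁} ⋯ γ_r^{k_r}`. -/
def BoundedGeneration (G : Type*) [Group G] : Prop :=
  ∃ (r : ℕ) (γ : Fin r → G), ∀ x : G, ∃ k : Fin r → ℤ,
    x = (List.ofFn fun i => γ i ^ k i).prod

/-- A group is virtually abelian if it has an abelian subgroup of finite index. -/
def IsVirtuallyAbelian (G : Type*) [Group G] : Prop :=
  ∃ H : Subgroup G, H.FiniteIndex ∧ ∀ x y : ↥H, x * y = y * x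

/-!
Let `Γ` be boundedly generated by `r` semisimple elements. Since `Γ` is finitely generated, it
suffices to find `J` such that every `c ≠ 1` in `Γ` lies outside `⁅H, H⁆` for some subgroup `H` of
index at most `J`: the intersection of all subgroups of index at most `J` has finite index, and it
is then abelian.

After conjugating each of the `r` generators to a diagonal matrix, `Γ` is defined over a finitely
generated ring, and there is a number field `L` such that for all large primes `p` with a prime of
`L` of degree one above it, `Γ` has a specialization `σ_p : Γ → GL_n(𝔽_p)` with `σ_p c ≠ 1` that
maps every generator to an element of order dividing `p - 1`. For a finite set `S` of such primes
with all `p - 1` dividing `M`, the image of `Γ` in `∏_{p ∈ S} GL_n(𝔽_p)` has at most `M ^ r`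
elements. Prime ideals of degree one are frequent enough that `S` can be chosen with
`M ^ r < ∏_{p ∈ S} p`, hence some `p ∈ S` does not divide the order of `σ_p(Γ)`. For such `p` the
group `σ_p(Γ)` lifts to characteristic zero, where Jordan's theorem gives an abelian subgroup whose
index is bounded in terms of `n` alone.
-/

section BoundedGeneration

open scoped Pointwise

variable {G : Type*} [Group G]

/-- The subset `⟨g₁⟩ ⋯ ⟨g_r⟩` of `G`, the product of the cyclic subgroups generated by the entries
of the list `[g₁, …, g_r]`. -/
def cyclicProduct (l : List G) : Set G :=
  (l.map fun g => (Subgroup.zpowers g : Set G)).prod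

theorem boundedGeneration_iff_exists_cyclicProduct_eq_univ :
    BoundedGeneration G ↔ ∃ l : List G, cyclicProduct l = Set.univ := by
  have ofFn_iff (r : ℕ) (γ : Fin r → G) : cyclicProduct (List.ofFn γ) = Set.univ ↔
      ∀ x : G, ∃ k : Fin r → ℤ, x = (List.ofFn fun i => γ i ^ k i).prod := by
    simp only [cyclicProduct, List.map_ofFn, Set.eq_univ_iff_forall, Set.mem_prod_list_ofFn]
    refine forall_congr' fun x => ⟨?_, ?_⟩
    · rintro ⟨f, rfl⟩
      choose k hk using fun i => (f i).2
      exact ⟨k, by simp only [← hk]⟩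
    · rintro ⟨k, rfl⟩
      exact ⟨fun i => ⟨γ i ^ k i, k i, rfl⟩, rfl⟩
  constructor
  · rintro ⟨r, γ, hγ⟩
    exact ⟨List.ofFn γ, (ofFn_iff r γ).mpr hγ⟩
  · rintro ⟨l, hl⟩
    exact ⟨l.length, l.get, (ofFn_iff _ _).mp (by rwa [List.ofFn_get])⟩

theorem cyclicProduct_cons (g : G) (l : List G) :
    cyclicProduct (g :: l) = (Subgroup.zpowers g : Set G) * cyclicProduct l := by
  simp only [cyclicProduct, List.map_cons, List.prod_cons]

theorem cyclicProduct_append (l₁ l₂ : List G) :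
    cyclicProduct (l₁ ++ l₂) = cyclicProduct l₁ * cyclicProduct l₂ := by
  simp only [cyclicProduct, List.map_append, List.prod_append]

theorem one_mem_cyclicProduct (l : List G) : 1 ∈ cyclicProduct l := by
  induction l with
  | nil => exact Set.one_mem_one
  | cons g l ih => exact cyclicProduct_cons g l ▸ ⟨1, one_mem _, 1, ih, one_mul 1⟩

theorem mem_cyclicProduct_of_mem {l : List G} {g : G} (hg : g ∈ l) : g ∈ cyclicProduct l := by
  induction l with
  | nil => cases hg
  | cons a l ih =>
    rw [cyclicProduct_cons]
    rcases List.mem_cons.mp hg with rfl | hg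
    · exact ⟨g, Subgroup.mem_zpowers g, 1, one_mem_cyclicProduct l, mul_one g⟩
    · exact ⟨1, one_mem _, g, ih hg, one_mul g⟩

theorem cyclicProduct_subset_closure (l : List G) :
    cyclicProduct l ⊆ Subgroup.closure {g | g ∈ l} := by
  induction l with
  | nil => exact Set.singleton_subset_iff.mpr (one_mem _)
  | cons a l ih =>
    rw [cyclicProduct_cons]
    rintro _ ⟨x, hx, y, hy, rfl⟩
    have hmono : {g | g ∈ l} ⊆ {g | g ∈ a :: l} := fun _ => List.mem_cons_of_mem a
    have ha : a ∈ {g | g ∈ a :: l} := List.mem_cons_self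
    exact mul_mem (Subgroup.zpowers_le.mpr (Subgroup.subset_closure ha) hx)
      (Subgroup.closure_mono hmono (ih hy))

theorem closure_subset_cyclicProduct {A : Type*} [CommGroup A] (l : List A) :
    (Subgroup.closure {a | a ∈ l} : Set A) ⊆ cyclicProduct l := by
  induction l with
  | nil => simp [cyclicProduct]
  | cons a l ih =>
    have hinsert : {b | b ∈ a :: l} = {a} ∪ {b | b ∈ l} := by ext; simp
    rw [cyclicProduct_cons, hinsert, Subgroup.closure_union, Subgroup.mul_normal,
      ← Subgroup.zpowers_eq_closure]
    exact Set.mul_subset_mul_left ih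

theorem image_cyclicProduct {H : Type*} [Group H] (f : G →* H) (l : List G) :
    f '' cyclicProduct l = cyclicProduct (l.map f) := by
  have hzpowers (g : G) : f '' Subgroup.zpowers g = Subgroup.zpowers (f g) :=
    congrArg (fun K : Subgroup H => (K : Set H)) (f.map_zpowers g)
  simp only [cyclicProduct, Set.image_list_prod, List.map_map, Function.comp_def, hzpowers]

theorem finite_cyclicProduct {l : List G} (hl : ∀ g ∈ l, IsOfFinOrder g) :
    (cyclicProduct l).Finite := by
  induction l with
  | nil => exact Set.finite_one
  | cons g l ih =>
    rw [cyclicProduct_cons]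
    exact (finite_zpowers.mpr (hl g List.mem_cons_self)).mul
      (ih fun x hx => hl x (List.mem_cons_of_mem g hx))

theorem natCard_cyclicProduct_le {l : List G} {M : ℕ} (hM : 0 < M) (hl : ∀ g ∈ l, g ^ M = 1) :
    Nat.card (cyclicProduct l) ≤ M ^ l.length := by
  induction l with
  | nil => simp [cyclicProduct]
  | cons g l ih =>
    have hg : Nat.card (Subgroup.zpowers g) ≤ M := by
      rw [Nat.card_zpowers]
      exact orderOf_le_of_pow_eq_one hM (hl g List.mem_cons_self)
    calc Nat.card (cyclicProduct (g :: l))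
        ≤ Nat.card (Subgroup.zpowers g) * Nat.card (cyclicProduct l) :=
          cyclicProduct_cons g l ▸ Set.natCard_mul_le
      _ ≤ M * M ^ l.length := Nat.mul_le_mul hg (ih fun x hx => hl x (List.mem_cons_of_mem g hx))
      _ = M ^ (g :: l).length := (pow_succ' M l.length).symm

theorem closure_eq_top_of_cyclicProduct_eq_univ {l : List G} (hl : cyclicProduct l = Set.univ) :
    Subgroup.closure {g | g ∈ l} = ⊤ :=
  SetLike.coe_injective <| Set.univ_subset_iff.mp (hl ▸ cyclicProduct_subset_closure l)

theorem fg_of_cyclicProduct_eq_univ {l : List G} (hl : cyclicProduct l = Set.univ) :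
    Group.FG G :=
  Group.fg_iff.mpr ⟨{g | g ∈ l}, closure_eq_top_of_cyclicProduct_eq_univ hl, l.finite_toSet⟩

theorem finite_range_and_natCard_range_le_of_pow_eq_one {l : List G}
    (hl : cyclicProduct l = Set.univ) {A : Type*} [Group A] (f : G →* A) {M : ℕ} (hM : 0 < M)
    (hf : ∀ g ∈ l, f g ^ M = 1) : Finite f.range ∧ Nat.card f.range ≤ M ^ l.length := by
  have hpow : ∀ a ∈ l.map f, a ^ M = 1 := by simpa using hf
  have hrange : (f.range : Set A) = cyclicProduct (l.map f) := by
    rw [← image_cyclicProduct, hl, Set.image_univ, MonoidHom.coe_range]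
  constructor
  · rw [← SetLike.coe_sort_coe, hrange]
    exact finite_cyclicProduct fun a ha => isOfFinOrder_iff_pow_eq_one.mpr ⟨M, hM, hpow a ha⟩
  · rw [← SetLike.coe_sort_coe, hrange, ← List.length_map f]
    exact natCard_cyclicProduct_le hM hpow

theorem boundedGeneration_of_fg_of_isVirtuallyAbelian [Group.FG G] (h : IsVirtuallyAbelian G) :
    BoundedGeneration G := by
  obtain ⟨H, hH, hcomm⟩ := h
  let _ : CommGroup H := { (inferInstance : Group H) with mul_comm := hcomm }
  obtain ⟨S, hS⟩ := (Group.fg_def (G := H)).mp inferInstance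
  obtain ⟨T, hT, -⟩ := H.exists_isComplement_left 1
  have hTfin : T.Finite := Set.finite_of_ncard_ne_zero (hT.ncard_left ▸ hH.index_ne_zero)
  refine boundedGeneration_iff_exists_cyclicProduct_eq_univ.mpr
    ⟨hTfin.toFinset.toList ++ S.toList.map H.subtype, Set.eq_univ_of_univ_subset ?_⟩
  have hH_subset : (H : Set G) ⊆ cyclicProduct (S.toList.map H.subtype) := by
    rw [← image_cyclicProduct]
    intro x hx
    have hclosure : (⟨x, hx⟩ : H) ∈ Subgroup.closure {a | a ∈ S.toList} := by
      simp only [Finset.mem_toList, Finset.setOfPred_mem, hS, Subgroup.mem_top]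
    exact ⟨⟨x, hx⟩, closure_subset_cyclicProduct _ hclosure, rfl⟩
  rw [← hT.mul_eq, cyclicProduct_append]
  exact Set.mul_subset_mul (fun t ht => mem_cyclicProduct_of_mem (by simpa using ht)) hH_subset

end BoundedGeneration

section FinitelyGenerated

open scoped commutatorElement

variable {G : Type*} [Group G]

theorem finite_monoidHom_of_fg [Group.FG G] (A : Type*) [Group A] [Finite A] :
    Finite (G →* A) := by
  obtain ⟨S, hS⟩ := (Group.fg_def (G := G)).mp inferInstance
  exact Finite.of_injective (fun (f : G →* A) (s : S) => f s) fun f₁ f₂ h =>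
    MonoidHom.eq_of_eqOn_dense hS fun s hs => congrFun h ⟨s, hs⟩

theorem exists_finiteIndex_forall_le_of_index_le [Group.FG G] (J : ℕ) :
    ∃ N : Subgroup G, N.FiniteIndex ∧ ∀ H : Subgroup G, H.index ≠ 0 → H.index ≤ J → N ≤ H := by
  refine ⟨⨅ j : Fin (J + 1), ⨅ f : G →* Equiv.Perm (Fin j), f.ker, ?_, fun H h0 hJ => ?_⟩
  · refine Subgroup.finiteIndex_iInf fun j => ?_
    have := finite_monoidHom_of_fg (G := G) (Equiv.Perm (Fin j))
    exact Subgroup.finiteIndex_iInf fun f => inferInstance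
  · have : H.FiniteIndex := ⟨h0⟩
    let e : G ⧸ H ≃ Fin H.index := Finite.equivFinOfCardEq rfl
    let f : G →* Equiv.Perm (Fin H.index) :=
      e.permCongrHom.toMonoidHom.comp (MulAction.toPermHom G (G ⧸ H))
    have hker : f.ker = H.normalCore :=
      (MonoidHom.ker_mulEquiv_comp _ e.permCongrHom).trans H.normalCore_eq_ker.symm
    calc ⨅ j : Fin (J + 1), ⨅ f : G →* Equiv.Perm (Fin j), f.ker
        ≤ f.ker := (iInf_le _ (⟨H.index, by lia⟩ : Fin (J + 1))).trans (iInf_le _ f)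
      _ ≤ H := hker ▸ H.normalCore_le

/-- The group `G` has an abelian subgroup of (finite) index at most `J`, as in the conclusion of
Jordan's theorem on finite linear groups. -/
def VirtuallyAbelianOfIndexLE (G : Type*) [Group G] (J : ℕ) : Prop :=
  ∃ H : Subgroup G, H.index ≠ 0 ∧ H.index ≤ J ∧ ∀ x ∈ H, ∀ y ∈ H, Commute x y

theorem VirtuallyAbelianOfIndexLE.exists_commutator_le_ker {A : Type*} [Group A] {J : ℕ}
    {f : G →* A} (h : VirtuallyAbelianOfIndexLE f.range J) :
    ∃ H : Subgroup G, H.index ≠ 0 ∧ H.index ≤ J ∧ ⁅H, H⁆ ≤ f.ker := by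
  obtain ⟨H, h0, hJ, hcomm⟩ := h
  have hindex : (H.comap f.rangeRestrict).index = H.index :=
    H.index_comap_of_surjective f.rangeRestrict_surjective
  refine ⟨H.comap f.rangeRestrict, hindex ▸ h0, hindex ▸ hJ,
    Subgroup.commutator_le.mpr fun x hx y hy => ?_⟩
  rw [← f.ker_rangeRestrict, MonoidHom.mem_ker, map_commutatorElement,
    commutatorElement_eq_one_iff_commute]
  exact hcomm _ hx _ hy

theorem isVirtuallyAbelian_of_forall_exists_notMem_commutator [Group.FG G] (J : ℕ)
    (h : ∀ c : G, c ≠ 1 → ∃ H : Subgroup G, H.index ≠ 0 ∧ H.index ≤ J ∧ c ∉ ⁅H, H⁆) :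
    IsVirtuallyAbelian G := by
  obtain ⟨N, hN, hle⟩ := exists_finiteIndex_forall_le_of_index_le (G := G) J
  refine ⟨N, hN, fun x y => Subtype.ext ?_⟩
  by_contra hxy
  obtain ⟨H, h0, hJ, hc⟩ := h ⁅(x : G), y⁆ (mt commutatorElement_eq_one_iff_mul_comm.mp hxy)
  exact hc (Subgroup.commutator_mem_commutator (hle H h0 hJ x.2) (hle H h0 hJ y.2))

end FinitelyGenerated

section ComplexJordan

open scoped commutatorElement InnerProductSpace

theorem exists_unitary_conj {A : Type*} [CStarAlgebra A] [PartialOrder A]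
    [StarOrderedRing A] {G : Type*} [Group G] [Finite G] (ρ : G →* A) :
    ∃ (σ : G →* unitary A) (y : Aˣ), ∀ g, (σ g : A) = y * ρ g * (y⁻¹ : Aˣ) := by
  have := Fintype.ofFinite G
  classical
  let P : A := ∑ g, star (ρ g) * ρ g
  have hP : IsStrictlyPositive P := by
    have hone : IsStrictlyPositive (star (ρ 1) * ρ 1) := by simp
    simp only [P, ← Finset.add_sum_erase _ _ (Finset.mem_univ (1 : G))]
    exact hone.add_nonneg (Finset.sum_nonneg fun g _ => star_mul_self_nonneg _)
  have hinvariant (g : G) : star (ρ g) * P * ρ g = P := by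
    simp only [P, Finset.mul_sum, Finset.sum_mul]
    exact Fintype.sum_equiv (Equiv.mulRight g) _ _ fun x => by simp [mul_assoc]
  obtain ⟨_, ⟨y, rfl⟩, hPy⟩ := CStarAlgebra.isStrictlyPositive_iff_eq_star_mul_self.mp hP
  have hunitary (g : G) : (y : A) * ρ g * (y⁻¹ : Aˣ) ∈ unitary A := by
    obtain ⟨u, hu⟩ : IsUnit ((y : A) * ρ g * (y⁻¹ : Aˣ)) :=
      (y.isUnit.mul ((Group.isUnit g).map ρ)).mul y⁻¹.isUnit
    have hstar_mul : star (u : A) * u = 1 := by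
      calc star (u : A) * u
          = star ((y⁻¹ : Aˣ) : A) * (star (ρ g) * (star (y : A) * y) * ρ g) * (y⁻¹ : Aˣ) := by
            simp [hu, mul_assoc]
        _ = star ((y : A) * (y⁻¹ : Aˣ)) * ((y : A) * (y⁻¹ : Aˣ)) := by
            rw [← hPy, hinvariant g, hPy, star_mul]; simp only [mul_assoc]
        _ = 1 := by simp
    rw [← hu, Unitary.mem_iff]
    exact ⟨hstar_mul, by rw [Units.eq_inv_of_mul_eq_one_right hstar_mul, Units.mul_inv]⟩
  exact ⟨{ toFun := fun g => ⟨_, hunitary g⟩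
           map_one' := Subtype.ext (by simp)
           map_mul' := fun a b => Subtype.ext (by simp [mul_assoc]) }, y, fun g => rfl⟩

theorem norm_inv_mul_sub_one {A : Type*} [CStarAlgebra A] (g h : unitary A) :
    ‖((g⁻¹ * h : unitary A) : A) - 1‖ = dist (h : A) g := by
  have hone : ((g⁻¹ : unitary A) : A) * g = 1 := congrArg Subtype.val (inv_mul_cancel g)
  rw [← hone, Submonoid.coe_mul, ← mul_sub, CStarRing.norm_coe_unitary_mul, dist_eq_norm]

theorem norm_commutatorElement_sub_one_le {A : Type*} [CStarAlgebra A] (g h : unitary A) :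
    ‖((⁅g, h⁆ : unitary A) : A) - 1‖ ≤ 2 * ‖(g : A) - 1‖ * ‖(h : A) - 1‖ := by
  have hcomm : ((⁅g, h⁆ : unitary A) : A) - 1 =
      (((g : A) - 1) * (h - 1) - ((h : A) - 1) * (g - 1)) * ((h * g)⁻¹ : unitary A) := by
    have hinv : (h : A) * g * ((h * g)⁻¹ : unitary A) = 1 :=
      congrArg Subtype.val (mul_inv_cancel (h * g))
    calc ((⁅g, h⁆ : unitary A) : A) - 1
        = (g : A) * h * ((h * g)⁻¹ : unitary A) - h * g * ((h * g)⁻¹ : unitary A) := by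
          rw [hinv]; simp [commutatorElement_def, mul_assoc]
      _ = _ := by noncomm_ring
  rw [hcomm, CStarRing.norm_mul_coe_unitary]
  calc ‖((g : A) - 1) * (h - 1) - ((h : A) - 1) * (g - 1)‖
      ≤ ‖(g : A) - 1‖ * ‖(h : A) - 1‖ + ‖(h : A) - 1‖ * ‖(g : A) - 1‖ :=
        (norm_sub_le _ _).trans (add_le_add (norm_mul_le _ _) (norm_mul_le _ _))
    _ = 2 * ‖(g : A) - 1‖ * ‖(h : A) - 1‖ := by ring

theorem exists_common_eigenvector_of_commute {K V : Type*} [Field K] [IsAlgClosed K]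
    [AddCommGroup V] [Module K V] [FiniteDimensional K V] {f g : Module.End K V}
    (hfg : Commute f g) {α : K} (hα : f.HasEigenvalue α) :
    ∃ v ≠ 0, f v = α • v ∧ ∃ β : K, g v = β • v := by
  have : Nontrivial (f.eigenspace α) := (Submodule.nontrivial_iff_ne_bot).mpr hα
  obtain ⟨β, hβ⟩ := Module.End.exists_eigenvalue
    (g.restrict (Module.End.mapsTo_genEigenspace_of_comm hfg α 1))
  obtain ⟨v, hv⟩ := hβ.exists_hasEigenvector
  exact ⟨v, by simpa using hv.2, Module.End.mem_eigenspace_iff.mp v.2, β,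
    congrArg Subtype.val hv.apply_eq_smul⟩

section Hilbert

variable {𝕜 V : Type*} [RCLike 𝕜] [NormedAddCommGroup V] [InnerProductSpace 𝕜 V]

theorem eq_zero_of_inner_apply_self_eq_zero {T : V →L[𝕜] V} (hT : ‖T - 1‖ < 1) {v : V}
    (hv : ⟪T v, v⟫_𝕜 = 0) : v = 0 := by
  by_contra hne
  have hpos : 0 < ‖v‖ := norm_pos_iff.mpr hne
  have hle : ‖v‖ * ‖v‖ ≤ ‖T - 1‖ * ‖v‖ * ‖v‖ :=
    calc ‖v‖ * ‖v‖ = ‖⟪(T - 1) v, v⟫_𝕜‖ := by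
          simp [inner_sub_left, hv, sq]
      _ ≤ ‖(T - 1) v‖ * ‖v‖ := norm_inner_le_norm _ _
      _ ≤ ‖T - 1‖ * ‖v‖ * ‖v‖ := by gcongr; exact (T - 1).le_opNorm v
  nlinarith [mul_pos hpos hpos]

theorem inner_eq_zero_of_unitary_apply_eq_smul [CompleteSpace V] (u : unitary (V →L[𝕜] V))
    {a b : 𝕜} (hab : a ≠ b) {v w : V} (hv : (u : V →L[𝕜] V) v = a • v)
    (hw : (u : V →L[𝕜] V) w = b • w) : ⟪v, w⟫_𝕜 = 0 := by
  rcases eq_or_ne v 0 with rfl | hv0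
  · exact inner_zero_left w
  have hone : starRingEnd 𝕜 a * a = 1 := by
    have hinner : starRingEnd 𝕜 a * a * ⟪v, v⟫_𝕜 = ⟪v, v⟫_𝕜 := by
      rw [mul_assoc, ← inner_smul_right, ← inner_smul_left, ← hv, Unitary.inner_map_map]
    exact (mul_eq_right₀ (inner_self_ne_zero.mpr hv0)).mp hinner
  have hinner : starRingEnd 𝕜 a * (b * ⟪v, w⟫_𝕜) = ⟪v, w⟫_𝕜 := by
    rw [← inner_smul_right, ← inner_smul_left, ← hv, ← hw, Unitary.inner_map_map]
  have hprod : (a - b) * ⟪v, w⟫_𝕜 = 0 := by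
    linear_combination b * ⟪v, w⟫_𝕜 * hone - a * hinner
  exact (mul_eq_zero.mp hprod).resolve_left (sub_ne_zero.mpr hab)

end Hilbert

variable {V : Type*} [NormedAddCommGroup V] [InnerProductSpace ℂ V] [CompleteSpace V]
  [FiniteDimensional ℂ V]

theorem exists_hasEigenvalue_ne_zero {T : V →L[ℂ] V} [IsStarNormal T] (hT : T ≠ 0) :
    ∃ α ≠ 0, Module.End.HasEigenvalue (T : V →ₗ[ℂ] V) α := by
  have : Nontrivial (V →L[ℂ] V) := ⟨⟨T, 0, hT⟩⟩
  obtain ⟨α, hα, hradius⟩ := spectrum.exists_nnnorm_eq_spectralRadius T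
  rw [IsStarNormal.spectralRadius_eq_nnnorm] at hradius
  rw [ContinuousLinearMap.spectrum_eq, ← Module.End.hasEigenvalue_iff_mem_spectrum] at hα
  refine ⟨α, ?_, hα⟩
  rintro rfl
  exact hT (by simpa using hradius.symm)

theorem exists_common_eigenvector_of_commute_unitary {g u : unitary (V →L[ℂ] V)}
    (hgu : Commute g u) (hu : u ≠ 1) :
    ∃ (v : V) (α β : ℂ), v ≠ 0 ∧ α ≠ 1 ∧ β ≠ 0 ∧
      (u : V →L[ℂ] V) v = α • v ∧ (g : V →L[ℂ] V) v = β • v := by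
  obtain ⟨α, hα0, hα⟩ := exists_hasEigenvalue_ne_zero (T := 1 - (u : V →L[ℂ] V))
    (sub_ne_zero.mpr fun h1 => hu (Subtype.ext h1.symm))
  have hcomm : Commute (1 - (u : V →L[ℂ] V)) g :=
    (Commute.one_left _).sub_left (congrArg Subtype.val hgu.symm)
  obtain ⟨v, hv0, hv, β, hβ⟩ := exists_common_eigenvector_of_commute
    (g := ((g : V →L[ℂ] V) : V →ₗ[ℂ] V)) (congrArg ContinuousLinearMap.toLinearMap hcomm.eq) hα
  refine ⟨v, 1 - α, β, hv0, by simpa using hα0, ?_, by rw [sub_smul, one_smul, ← hv]; simp, hβ⟩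
  rintro rfl
  have hnorm := Unitary.norm_map g v
  rw [show (g : V →L[ℂ] V) v = 0 from hβ.trans (zero_smul ℂ v), norm_zero] at hnorm
  exact hv0 (norm_eq_zero.mp hnorm.symm)

-- Otherwise some eigenvector `v` of `g` and its image `h⁻¹ v` are orthogonal, being eigenvectors of
-- `g` with distinct eigenvalues; but `h` is too close to `1` to move `h⁻¹ v` to an orthogonal
-- vector.
theorem commute_of_commute_conj_of_norm_sub_one_lt_one {g h : unitary (V →L[ℂ] V)}
    (hh : ‖(h : V →L[ℂ] V) - 1‖ < 1) (hcomm : Commute g (h * g * h⁻¹)) : Commute g h := by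
  by_contra hne
  set u : unitary (V →L[ℂ] V) := g⁻¹ * (h * g * h⁻¹) with hu
  have hconj : h * g * h⁻¹ = g * u := by rw [hu, mul_inv_cancel_left]
  have hu1 : u ≠ 1 := fun h1 => hne <| by
    rw [h1, mul_one, mul_inv_eq_iff_eq_mul] at hconj
    exact hconj.symm
  obtain ⟨v, α, β, hv0, hα1, hβ0, huv, hgv⟩ :=
    exists_common_eigenvector_of_commute_unitary ((Commute.refl g).inv_right.mul_right hcomm) hu1
  let w : V := ((h⁻¹ : unitary (V →L[ℂ] V)) : V →L[ℂ] V) v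
  have hhw : (h : V →L[ℂ] V) w = v :=
    DFunLike.congr_fun (congrArg Subtype.val (mul_inv_cancel h)) v
  have hgw : (g : V →L[ℂ] V) w = (α * β) • w := by
    have hcomp : g * h⁻¹ = h⁻¹ * (g * u) := by rw [← hconj]; group
    calc (g : V →L[ℂ] V) w = ((h⁻¹ * (g * u) : unitary (V →L[ℂ] V)) : V →L[ℂ] V) v :=
          hcomp ▸ rfl
      _ = ((h⁻¹ : unitary (V →L[ℂ] V)) : V →L[ℂ] V) ((g : V →L[ℂ] V) ((u : V →L[ℂ] V) v)) := rfl
      _ = (α * β) • w := by rw [huv, map_smul, hgv, map_smul, map_smul, smul_smul]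
  have hinner : ⟪v, w⟫_ℂ = 0 :=
    inner_eq_zero_of_unitary_apply_eq_smul g
      (fun hβα => hα1 (mul_right_cancel₀ hβ0 (by rw [one_mul, ← hβα]))) hgv hgw
  have hw0 : w = 0 := eq_zero_of_inner_apply_self_eq_zero hh (by rwa [hhw])
  exact hv0 (by rw [← hhw, hw0, map_zero])

-- In a counterexample with `h` as close to `1` as possible, `⁅g, h⁆` is closer to `1` than `h`,
-- hence commutes with `g`.
theorem commute_of_norm_sub_one_lt {G : Type*} [Group G] [Finite G]
    (σ : G →* unitary (V →L[ℂ] V)) {g h : G} (hg : ‖(σ g : V →L[ℂ] V) - 1‖ < 1 / 2)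
    (hh : ‖(σ h : V →L[ℂ] V) - 1‖ < 1) : Commute (σ g) (σ h) := by
  by_contra hgh
  obtain ⟨h, ⟨hh, hgh⟩, hmin⟩ := Set.exists_min_image
    {h : G | ‖(σ h : V →L[ℂ] V) - 1‖ < 1 ∧ ¬ Commute (σ g) (σ h)}
    (fun h => ‖(σ h : V →L[ℂ] V) - 1‖) (Set.toFinite _) ⟨h, hh, hgh⟩
  have hpos : 0 < ‖(σ h : V →L[ℂ] V) - 1‖ := norm_pos_iff.mpr <| sub_ne_zero.mpr fun h1 =>
    hgh ((Subtype.ext h1 : σ h = 1) ▸ Commute.one_right _)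
  have hlt : ‖(σ ⁅g, h⁆ : V →L[ℂ] V) - 1‖ < ‖(σ h : V →L[ℂ] V) - 1‖ := by
    rw [map_commutatorElement]
    nlinarith [norm_commutatorElement_sub_one_le (σ g) (σ h)]
  have hcomm : Commute (σ g) ⁅σ g, σ h⁆ := by
    by_contra hc
    exact hlt.not_ge (hmin ⁅g, h⁆ ⟨hlt.trans hh, by rwa [map_commutatorElement]⟩)
  refine hgh (commute_of_commute_conj_of_norm_sub_one_lt_one hh ?_)
  have hconj : σ h * σ g * (σ h)⁻¹ = (⁅σ g, σ h⁆)⁻¹ * σ g := by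
    rw [commutatorElement_inv, commutatorElement_def]; group
  exact hconj ▸ hcomm.inv_right.mul_right (Commute.refl _)

theorem virtuallyAbelianOfIndexLE_of_ball_cover {G : Type*} [Group G] [Finite G]
    {σ : G →* unitary (V →L[ℂ] V)} (hσ : Function.Injective σ) {t : Set (V →L[ℂ] V)}
    (ht : t.Finite)
    (hcover : Metric.closedBall (0 : V →L[ℂ] V) 1 ⊆ ⋃ c ∈ t, Metric.ball c (1 / 4)) :
    VirtuallyAbelianOfIndexLE G t.ncard := by
  have := ht.to_subtype
  let s : Set G := {g | ‖(σ g : V →L[ℂ] V) - 1‖ < 1 / 2}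
  have hs : ∀ x ∈ s, ∀ y ∈ s, x * y = y * x := fun x hx y hy => hσ <| by
    simpa using (commute_of_norm_sub_one_lt σ hx (hy.out.trans (by norm_num))).eq
  have hclose (g : G) : ∃ c : t, dist (σ g : V →L[ℂ] V) c < 1 / 4 := by
    have hmem : (σ g : V →L[ℂ] V) ∈ Metric.closedBall (0 : V →L[ℂ] V) 1 := by
      rw [mem_closedBall_zero_iff, ← mul_one (σ g : V →L[ℂ] V), CStarRing.norm_coe_unitary_mul]
      exact ContinuousLinearMap.norm_id_le
    simpa using hcover hmem
  choose c hc using hclose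
  refine ⟨Subgroup.closure s, Subgroup.index_ne_zero_of_finite, ?_, fun x hx y hy => ?_⟩
  · refine Nat.card_le_card_of_injective (fun q : G ⧸ Subgroup.closure s => c q.out)
      fun q₁ q₂ (hq : c q₁.out = c q₂.out) => ?_
    rw [← q₁.out_eq', ← q₂.out_eq', QuotientGroup.eq]
    refine Subgroup.subset_closure ?_
    change ‖(σ (q₁.out⁻¹ * q₂.out) : V →L[ℂ] V) - 1‖ < 1 / 2
    have h₁ := hc q₁.out
    rw [hq] at h₁
    rw [map_mul, map_inv, norm_inv_mul_sub_one]
    linarith [dist_triangle_right (σ q₂.out : V →L[ℂ] V) (σ q₁.out) (c q₂.out), hc q₂.out]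
  · have := Subgroup.isMulCommutative_closure hs
    exact congrArg Subtype.val (mul_comm' (⟨x, hx⟩ : Subgroup.closure s) ⟨y, hy⟩)

theorem jordan_complex (n : Type*) [Fintype n] [DecidableEq n] :
    ∃ J : ℕ, ∀ (G : Type*) [Group G] [Finite G] (ρ : G →* GL n ℂ), Function.Injective ρ →
      VirtuallyAbelianOfIndexLE G J := by
  let V := EuclideanSpace ℂ n
  have : ProperSpace (V →L[ℂ] V) := FiniteDimensional.proper ℂ _
  obtain ⟨t, ht, hcover⟩ := Metric.totallyBounded_iff.mp
    (isCompact_closedBall (0 : V →L[ℂ] V) 1).totallyBounded (1 / 4) (by norm_num)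
  refine ⟨t.ncard, fun G _ _ ρ hρ => ?_⟩
  let τ : G →* (V →L[ℂ] V) :=
    ((Matrix.toEuclideanCLM (n := n) (𝕜 := ℂ) : Matrix n n ℂ →* (V →L[ℂ] V)).comp
      (Units.coeHom _)).comp ρ
  have hτ : Function.Injective τ :=
    ((Matrix.toEuclideanCLM (n := n) (𝕜 := ℂ)).injective.comp Units.val_injective).comp hρ
  obtain ⟨σ, y, hy⟩ := exists_unitary_conj τ
  have hσ : Function.Injective σ := fun a b hab => hτ <| by
    simpa [hy] using congrArg (Subtype.val : unitary (V →L[ℂ] V) → V →L[ℂ] V) hab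
  exact virtuallyAbelianOfIndexLE_of_ball_cover hσ ht hcover

end ComplexJordan

section Lifting

theorem isLocalHom_mapMatrix {n R S : Type*} [Fintype n] [DecidableEq n] [CommRing R] [CommRing S]
    (f : R →+* S) [IsLocalHom f] : IsLocalHom (f.mapMatrix : Matrix n n R →+* Matrix n n S) where
  map_nonunit A hA := by
    rw [Matrix.isUnit_iff_isUnit_det] at hA ⊢
    exact IsUnit.of_map f _ (f.map_det A ▸ hA)

theorem mapMatrix_surjective {n R S : Type*} [Fintype n] [DecidableEq n] [CommRing R] [CommRing S]
    {f : R →+* S} (hf : Function.Surjective f) :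
    Function.Surjective (f.mapMatrix : Matrix n n R →+* Matrix n n S) := fun A =>
  ⟨A.map (Function.surjInv hf), Matrix.ext fun _ _ => Function.surjInv_eq hf _⟩

theorem GL_map_surjective {n R S : Type*} [Fintype n] [DecidableEq n] [CommRing R] [CommRing S]
    {f : R →+* S} (hf : Function.Surjective f) [IsLocalHom f] :
    Function.Surjective (GeneralLinearGroup.map (n := n) f) :=
  IsLocalRing.surjective_units_map_of_local_ringHom _ (mapMatrix_surjective hf)
    (isLocalHom_mapMatrix f)

theorem exists_one_add_natCast_mul_pow {R : Type*} [Ring R] (p : ℕ) (z : R) (k : ℕ) :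
    ∃ w, (1 + p * z) ^ p ^ k = 1 + p ^ (k + 1) * w := by
  have hdvd : (p : Polynomial ℤ) ∣ (1 + (p : Polynomial ℤ) * .X) - 1 :=
    ⟨.X, add_sub_cancel_left _ _⟩
  obtain ⟨q, hq⟩ := dvd_sub_pow_of_dvd_sub hdvd k
  refine ⟨q.aeval z, ?_⟩
  simpa [sub_eq_iff_eq_add'] using congrArg (Polynomial.aeval z) hq

theorem isPGroup_ker_GL_map {n R S : Type*} [Fintype n] [DecidableEq n] [CommRing R] [CommRing S]
    {p k : ℕ} (hpk : (p : R) ^ k = 0) {f : R →+* S} (hf : ∀ x, f x = 0 → (p : R) ∣ x) :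
    IsPGroup p (GeneralLinearGroup.map (n := n) f).ker := by
  rintro ⟨g, hg⟩
  have hdvd : ∀ i j, (p : R) ∣ (g.1 - 1) i j := fun i j => by
    apply hf
    rw [MonoidHom.mem_ker] at hg
    have hij : f (g.1 i j) = (1 : Matrix n n S) i j := by
      rw [← GeneralLinearGroup.map_apply, hg, GeneralLinearGroup.coe_one]
    rw [Matrix.sub_apply, map_sub, hij, one_apply, one_apply, apply_ite f, map_one, map_zero,
      sub_self]
  choose z hz using hdvd
  have hgz : g.1 = 1 + p * Matrix.of z := by
    rw [← sub_eq_iff_eq_add', ← nsmul_eq_mul]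
    ext i j
    rw [hz, Matrix.smul_apply, of_apply, nsmul_eq_mul]
  have hpk' : (p : Matrix n n R) ^ k = 0 := by
    rw [← map_natCast (Matrix.scalar n), ← map_pow, hpk, map_zero]
  obtain ⟨w, hw⟩ := exists_one_add_natCast_mul_pow p (Matrix.of z) k
  refine ⟨k, Subtype.ext (Units.ext ?_)⟩
  simpa [pow_succ', hpk', ← hgz] using hw

theorem exists_monoidHom_section {E Q : Type*} [Group E] [Group Q] {f : E →* Q}
    (hf : Function.Surjective f) (hcoprime : (Nat.card f.ker).Coprime (Nat.card Q)) :
    ∃ s : Q →* E, ∀ q, f (s q) = q := by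
  obtain ⟨H, hH⟩ := Subgroup.exists_right_complement'_of_coprime (N := f.ker)
    (by rwa [Subgroup.index_ker, MonoidHom.range_eq_top.mpr hf, Subgroup.card_top])
  have hinj : Function.Injective (f.comp H.subtype) := by
    refine (injective_iff_map_eq_one _).mpr fun h hh => ?_
    have hmem : (h : E) ∈ f.ker ⊓ H := ⟨hh, h.2⟩
    rw [hH.disjoint.eq_bot, Subgroup.mem_bot] at hmem
    exact Subtype.ext hmem
  have hsurj : Function.Surjective (f.comp H.subtype) := by
    intro q
    obtain ⟨e, rfl⟩ := hf q
    obtain ⟨⟨u, h⟩, rfl : (u : E) * h = e⟩ := hH.2 e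
    exact ⟨h, by simp [MonoidHom.mem_ker.mp u.2]⟩
  let φ : H ≃* Q := MulEquiv.ofBijective (f.comp H.subtype) ⟨hinj, hsurj⟩
  exact ⟨H.subtype.comp φ.symm.toMonoidHom, φ.apply_symm_apply⟩

theorem exists_monoidHom_lift_of_isPGroup_ker {E Q : Type*} [Group E] [Group Q] [Finite E]
    {f : E →* Q} (hf : Function.Surjective f) {p : ℕ} [hp : Fact p.Prime] (hker : IsPGroup p f.ker)
    (G : Subgroup Q) (hG : ¬ p ∣ Nat.card G) : ∃ s : G →* E, ∀ g : G, f (s g) = g := by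
  have hker' : IsPGroup p (f.subgroupComap G).ker := by
    rintro ⟨e, he⟩
    obtain ⟨k, hk⟩ := hker ⟨e, congrArg Subtype.val he⟩
    refine ⟨k, Subtype.ext (Subtype.ext ?_)⟩
    simpa using congrArg Subtype.val hk
  obtain ⟨k, hk⟩ := IsPGroup.iff_card.mp hker'
  obtain ⟨s, hs⟩ := exists_monoidHom_section (f.subgroupComap_surjective_of_surjective G hf)
    (hk ▸ ((Nat.Prime.coprime_iff_not_dvd hp.out).mpr hG).pow_left k)
  exact ⟨(G.comap f).subtype.comp s, fun g => congrArg Subtype.val (hs g)⟩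

theorem exists_monoidHom_GL_zmod_pow {n : Type*} [Fintype n] [DecidableEq n] {p : ℕ}
    [Fact p.Prime] {k : ℕ} (hk : k ≠ 0) (G : Subgroup (GL n (ZMod p))) (hG : ¬ p ∣ Nat.card G) :
    ∃ s : G →* GL n (ZMod (p ^ k)),
      ∀ g : G, GeneralLinearGroup.map (ZMod.castHom (dvd_pow_self p hk) (ZMod p)) (s g) = g := by
  have : NeZero (p ^ k) := ⟨pow_ne_zero _ (Fact.out : p.Prime).ne_zero⟩
  let c := ZMod.castHom (dvd_pow_self p hk) (ZMod p)
  have hker : ∀ x, c x = 0 → (p : ZMod (p ^ k)) ∣ x := fun x hx => by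
    rw [← ZMod.natCast_zmod_val x] at hx ⊢
    rw [map_natCast, ZMod.natCast_eq_zero_iff] at hx
    exact Nat.cast_dvd_cast hx
  have : IsLocalHom c := ⟨fun x hx => by
    rw [← ZMod.natCast_zmod_val x] at hx ⊢
    rw [map_natCast, ZMod.isUnit_iff_coprime] at hx
    exact (ZMod.isUnit_iff_coprime _ _).mpr (hx.pow_right k)⟩
  exact exists_monoidHom_lift_of_isPGroup_ker (GL_map_surjective (ZMod.castHom_surjective _))
    (isPGroup_ker_GL_map (by rw [← Nat.cast_pow, ZMod.natCast_self]) hker) G hG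

open Filter Topology in
theorem exists_map_mul_of_tendsto_sub {G R : Type*} [Mul G] [Ring R] [TopologicalSpace R]
    [IsTopologicalRing R] [T2Space R] [CompactSpace R] (φ : ℕ → G → R)
    (hφ : ∀ g h, Tendsto (fun k => φ k (g * h) - φ k g * φ k h) atTop (𝓝 0)) :
    ∃ ψ : G → R, (∀ g h, ψ (g * h) = ψ g * ψ h) ∧
      ∀ g, ∀ C : Set R, IsClosed C → (∀ k, φ k g ∈ C) → ψ g ∈ C := by
  let U : Ultrafilter ℕ := hyperfilter ℕ
  have hlim : ∀ g, ∃ x, Tendsto (fun k => φ k g) U (𝓝 x) := fun g =>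
    ⟨(U.map fun k => φ k g).lim, (U.map fun k => φ k g).le_nhds_lim⟩
  choose ψ hψ using hlim
  refine ⟨ψ, fun g h => ?_, fun g C hC hmem => hC.mem_of_tendsto (hψ g) (.of_forall hmem)⟩
  have hU : (U : Filter ℕ) ≤ atTop := by
    rw [← Nat.cofinite_eq_atTop]
    exact hyperfilter_le_cofinite
  rw [← sub_eq_zero]
  exact tendsto_nhds_unique ((hψ _).sub ((hψ g).mul (hψ h))) ((hφ g h).mono_left hU)

section Padic

variable {n : Type*} [Fintype n] [DecidableEq n] {p : ℕ} [Fact p.Prime]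

theorem padicInt_ringHom_zmod_eq (f g : ℤ_[p] →+* ZMod p) : f = g := by
  have hzero : ∀ (h : ℤ_[p] →+* ZMod p) (x : ℤ_[p]) (m : ℕ),
      x - m ∈ IsLocalRing.maximalIdeal ℤ_[p] → h x = m := fun h x m hx => by
    rw [PadicInt.maximalIdeal_eq_span_p, Ideal.mem_span_singleton] at hx
    obtain ⟨y, hy⟩ := hx
    rw [← sub_eq_zero, ← map_natCast h, ← map_sub, hy, map_mul, map_natCast, ZMod.natCast_self,
      zero_mul]
  ext x
  obtain ⟨m, -, hm⟩ := PadicInt.exists_mem_range x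
  rw [hzero f x m hm, hzero g x m hm]

theorem isLocallyConstant_toZMod : IsLocallyConstant (PadicInt.toZMod : ℤ_[p] →+* ZMod p) := by
  refine (IsLocallyConstant.iff_exists_open _).mpr fun x =>
    ⟨Metric.ball x 1, Metric.isOpen_ball, Metric.mem_ball_self one_pos, fun y hy => ?_⟩
  rwa [mem_ball_iff_norm, ← PadicInt.mem_nonunits, ← IsLocalRing.mem_maximalIdeal,
    ← PadicInt.ker_toZMod, RingHom.mem_ker, map_sub, sub_eq_zero] at hy

theorem exists_approx_monoidHom_padicInt (G : Subgroup (GL n (ZMod p))) (hG : ¬ p ∣ Nat.card G)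
    (k : ℕ) : ∃ φ : G → Matrix n n ℤ_[p],
      (∀ g h i j, ‖(φ (g * h) - φ g * φ h) i j‖ ≤ (p : ℝ) ^ (-((k + 1 : ℕ) : ℤ))) ∧
      ∀ g : G, PadicInt.toZMod.mapMatrix (φ g) = g.1.1 := by
  obtain ⟨s, hs⟩ := exists_monoidHom_GL_zmod_pow k.succ_ne_zero G hG
  have hsurj : Function.Surjective (PadicInt.toZModPow (p := p) (k + 1)) :=
    ZMod.ringHom_surjective _
  choose φ hφ using fun g => mapMatrix_surjective hsurj (s g).1
  refine ⟨φ, fun g h i j => ?_, fun g => ?_⟩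
  · have hzero : (PadicInt.toZModPow (k + 1)).mapMatrix (φ (g * h) - φ g * φ h) = 0 := by
      rw [map_sub, map_mul, hφ, hφ, hφ, map_mul, Units.val_mul, sub_self]
    rw [PadicInt.norm_le_pow_iff_mem_span_pow, ← PadicInt.ker_toZModPow, RingHom.mem_ker]
    exact congrFun₂ hzero i j
  · rw [padicInt_ringHom_zmod_eq PadicInt.toZMod ((ZMod.castHom (dvd_pow_self p k.succ_ne_zero)
      (ZMod p)).comp (PadicInt.toZModPow (k + 1))), ← RingHom.mapMatrix_comp, RingHom.comp_apply,
      hφ, ← hs g]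
    rfl

theorem exists_monoidHom_GL_padicInt (G : Subgroup (GL n (ZMod p))) (hG : ¬ p ∣ Nat.card G) :
    ∃ s : G →* GL n ℤ_[p], ∀ g : G, GeneralLinearGroup.map PadicInt.toZMod (s g) = g := by
  choose φ hmul hred using exists_approx_monoidHom_padicInt G hG
  have : CompactSpace (Matrix n n ℤ_[p]) := inferInstanceAs (CompactSpace (n → n → ℤ_[p]))
  have : T2Space (Matrix n n ℤ_[p]) := inferInstanceAs (T2Space (n → n → ℤ_[p]))
  have htendsto : ∀ g h, Filter.Tendsto (fun k => φ k (g * h) - φ k g * φ k h) .atTop (nhds 0) := by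
    refine fun g h => tendsto_pi_nhds.mpr fun i => tendsto_pi_nhds.mpr fun j =>
      squeeze_zero_norm (fun k => hmul k g h i j) ?_
    have hp : 1 < (p : ℝ) := mod_cast (Fact.out : p.Prime).one_lt
    simpa only [_root_.zpow_neg, zpow_natCast, Function.comp_def] using
      (tendsto_inv_atTop_zero.comp (tendsto_pow_atTop_atTop_of_one_lt hp)).comp
        (Filter.tendsto_add_atTop_nat 1)
  obtain ⟨ψ, hψmul, hψclosed⟩ := exists_map_mul_of_tendsto_sub φ htendsto
  have hψred : ∀ g : G, PadicInt.toZMod.mapMatrix (ψ g) = g.1.1 := fun g => by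
    ext i j
    exact hψclosed g {A | PadicInt.toZMod (A i j) = g.1.1 i j}
      ((isLocallyConstant_toZMod.isClosed_fiber _).preimage (continuous_id.matrix_elem i j))
      fun k => congrFun₂ (hred k g) i j
  have hψone : ψ 1 = 1 := by
    have := (ZMod.ringHom_surjective (PadicInt.toZMod (p := p))).isLocalHom
    have := isLocalHom_mapMatrix (n := n) (PadicInt.toZMod (p := p))
    have hunit : IsUnit (ψ 1) := .of_map PadicInt.toZMod.mapMatrix _ (hψred 1 ▸ Units.isUnit _)
    have hidem : IsIdempotentElem (ψ 1) := by rw [IsIdempotentElem, ← hψmul, one_mul]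
    exact (IsIdempotentElem.iff_eq_one_of_isUnit hunit).mp hidem
  let Ψ : G →* Matrix n n ℤ_[p] := ⟨⟨ψ, hψone⟩, hψmul⟩
  exact ⟨Ψ.toHomUnits, fun g => Units.ext (hψred g)⟩

end Padic

section Cardinality

open Cardinal

theorem cardinalMk_padic (p : ℕ) [Fact p.Prime] : #ℚ_[p] = 𝔠 := by
  refine le_antisymm ?_ (continuum_le_cardinal_of_nontriviallyNormedField ℚ_[p])
  calc #ℚ_[p] ≤ #(PadicSeq p) := mk_le_of_surjective Quotient.mk_surjective
    _ ≤ #(ℕ → ℚ) := mk_le_of_injective Subtype.val_injective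
    _ = 𝔠 := by simp

theorem nonempty_ringHom_complex_of_cardinalMk_eq {F : Type*} [Field F] [CharZero F]
    (hF : #F = 𝔠) : Nonempty (F →+* ℂ) := by
  let A := AlgebraicClosure F
  have hA : #A = 𝔠 := by
    refine le_antisymm ((Algebra.IsAlgebraic.cardinalMk_le_max F A).trans ?_) (hF ▸ ?_)
    · exact max_le hF.le aleph0_le_continuum
    · exact mk_le_of_injective (algebraMap F A).injective
  have hequiv : Nonempty (A ≃ ℂ) := lift_mk_eq'.mp (by simp [hA])
  have : CharZero A := charZero_of_injective_algebraMap (algebraMap F A).injective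
  obtain ⟨e⟩ := IsAlgClosed.ringEquiv_of_equiv_of_charZero (hA ▸ aleph0_lt_continuum) hequiv
  exact ⟨e.toRingHom.comp (algebraMap F A)⟩

end Cardinality

theorem jordan_zmod (n : Type*) [Fintype n] [DecidableEq n] :
    ∃ J, ∀ (p : ℕ) [Fact p.Prime] (G : Subgroup (GL n (ZMod p))), ¬ p ∣ Nat.card G →
      VirtuallyAbelianOfIndexLE G J := by
  obtain ⟨J, hJ⟩ := jordan_complex n
  refine ⟨J, fun p _ G hG => ?_⟩
  obtain ⟨s, hs⟩ := exists_monoidHom_GL_padicInt G hG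
  obtain ⟨f⟩ := nonempty_ringHom_complex_of_cardinalMk_eq (cardinalMk_padic p)
  let f' : ℤ_[p] →+* ℂ := f.comp PadicInt.Coe.ringHom
  have hf' : Function.Injective f' := f.injective.comp Subtype.val_injective
  have hs' : Function.Injective s := fun g h hgh => Subtype.ext (by rw [← hs g, hgh, hs h])
  have hmap : Function.Injective (GeneralLinearGroup.map (n := n) f') := fun A B hAB =>
    Units.ext (Matrix.map_injective hf' (congrArg Units.val hAB))
  exact hJ G ((GeneralLinearGroup.map f').comp s) (hmap.comp hs')

end Lifting

section IdealSums

open NumberField Filter Topology UniqueFactorizationMonoid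

theorem prod_pow_count_normalizedFactors {R : Type*} [CommRing R] [IsDedekindDomain R]
    [DecidableEq (Ideal R)] {I : Ideal R} (hI : I ≠ ⊥) {T : Finset (Ideal R)}
    (hT : ∀ P : Ideal R, P.IsPrime → I ≤ P → P ∈ T) :
    ∏ P ∈ T, P ^ (normalizedFactors I).count P = I := by
  conv_rhs => rw [← Ideal.prod_normalizedFactors_eq_self hI]
  refine (Finset.prod_multiset_count_of_subset _ _ fun P hP => ?_).symm
  rw [Multiset.mem_toFinset] at hP
  exact hT P (Ideal.isPrime_of_prime (prime_of_normalized_factor P hP))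
    (Ideal.le_of_dvd (dvd_of_mem_normalizedFactors hP))

theorem sum_range_pow_le_inv_one_sub {t : ℝ} (h0 : 0 ≤ t) (h1 : t < 1) (n : ℕ) :
    ∑ k ∈ Finset.range n, t ^ k ≤ (1 - t)⁻¹ :=
  tsum_geometric_of_lt_one h0 h1 ▸
    (summable_geometric_of_lt_one h0 h1).sum_le_tsum _ fun k _ => pow_nonneg h0 k

theorem sum_le_prod_inv_one_sub {R : Type*} [CommRing R] [IsDedekindDomain R]
    {A T : Finset (Ideal R)} {f : Ideal R →*₀ ℝ} (hA : ∀ I ∈ A, I ≠ ⊥)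
    (hAT : ∀ I ∈ A, ∀ P : Ideal R, P.IsPrime → I ≤ P → P ∈ T)
    (hf : ∀ I, 0 ≤ f I) (hT : ∀ P ∈ T, f P < 1) :
    ∑ I ∈ A, f I ≤ ∏ P ∈ T, (1 - f P)⁻¹ := by
  classical
  let multiplicities (I : Ideal R) (P : T) : ℕ := (normalizedFactors I).count P.1
  let N := ∑ I ∈ A, ∑ P : T, multiplicities I P
  have prod_eq (I) (hI : I ∈ A) : ∏ P : T, P.1 ^ multiplicities I P = I :=
    (Finset.prod_coe_sort T fun P => P ^ (normalizedFactors I).count P).trans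
      (prod_pow_count_normalizedFactors (hA I hI) (hAT I hI))
  have multiplicities_injOn : Set.InjOn multiplicities A := fun I hI J hJ h => by
    rw [← prod_eq I hI, ← prod_eq J hJ, h]
  have multiplicities_mem :
      A.image multiplicities ⊆ Fintype.piFinset fun _ => Finset.range (N + 1) := by
    refine Finset.image_subset_iff.mpr fun I hI => Fintype.mem_piFinset.mpr fun P => ?_
    refine Finset.mem_range_succ_iff.mpr (le_trans ?_ (Finset.single_le_sum
      (f := fun I => ∑ P : T, multiplicities I P) (fun _ _ => Nat.zero_le _) hI))
    exact Finset.single_le_sum (f := multiplicities I) (fun _ _ => Nat.zero_le _)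
      (Finset.mem_univ P)
  calc ∑ I ∈ A, f I
      = ∑ I ∈ A, ∏ P : T, f P ^ multiplicities I P :=
        Finset.sum_congr rfl fun I hI => by
          conv_lhs => rw [← prod_eq I hI]
          simp only [map_prod, map_pow]
    _ = ∑ e ∈ A.image multiplicities, ∏ P : T, f P ^ e P := by
        rw [Finset.sum_image multiplicities_injOn]
    _ ≤ ∑ e ∈ Fintype.piFinset fun _ => Finset.range (N + 1), ∏ P : T, f P ^ e P :=
        Finset.sum_le_sum_of_subset_of_nonneg multiplicities_mem fun _ _ _ =>
          Finset.prod_nonneg fun _ _ => pow_nonneg (hf _) _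
    _ = ∏ P : T, ∑ k ∈ Finset.range (N + 1), f P ^ k := by rw [Finset.prod_univ_sum]
    _ ≤ ∏ P : T, (1 - f P)⁻¹ :=
        Finset.prod_le_prod (fun P _ => Finset.sum_nonneg fun _ _ => pow_nonneg (hf P) _)
          fun P _ => sum_range_pow_le_inv_one_sub (hf P) (hT P P.2) _
    _ = ∏ P ∈ T, (1 - f P)⁻¹ := Finset.prod_coe_sort T fun P => (1 - f P)⁻¹

theorem inv_one_sub_le_exp {t : ℝ} (ht : t ≤ 1 / 2) : (1 - t)⁻¹ ≤ Real.exp (t + 2 * t ^ 2) := by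
  have hpos : 0 < 1 - t := by linarith
  have hinv : (1 - t)⁻¹ ≤ 1 + t + 2 * t ^ 2 := by
    rw [inv_le_iff_one_le_mul₀ hpos]
    nlinarith [mul_nonneg (sq_nonneg t) (show 0 ≤ 1 - 2 * t by linarith)]
  linarith [Real.add_one_le_exp (t + 2 * t ^ 2)]

variable (F : Type*) [Field F] [NumberField F]

/-- The nonzero integral ideals of norm at most `N`. -/
noncomputable def idealsNormLE (N : ℕ) : Finset (Ideal (𝓞 F)) :=
  ((Ideal.finite_setOfPred_absNorm_le (S := 𝓞 F) N).sdiff (t := {⊥})).toFinset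

/-- The primes `p` for which `𝓞 F` has a prime ideal of residue field `ZMod p`. -/
def degreeOnePrimes : Set ℕ := {p | p.Prime ∧ Nonempty (𝓞 F →+* ZMod p)}

variable {F}

theorem mem_idealsNormLE {N : ℕ} {I : Ideal (𝓞 F)} :
    I ∈ idealsNormLE F N ↔ Ideal.absNorm I ≤ N ∧ I ≠ ⊥ := by
  simp [idealsNormLE]

theorem idealsNormLE_subset {M N : ℕ} (h : M ≤ N) : idealsNormLE F M ⊆ idealsNormLE F N :=
  fun _ hI => mem_idealsNormLE.mpr ((mem_idealsNormLE.mp hI).imp_left h.trans')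

theorem absNorm_pos_of_mem_idealsNormLE {N : ℕ} {I : Ideal (𝓞 F)} (hI : I ∈ idealsNormLE F N) :
    0 < Ideal.absNorm I :=
  Nat.pos_of_ne_zero (Ideal.absNorm_eq_zero_iff.not.mpr (mem_idealsNormLE.mp hI).2)

theorem mem_idealsNormLE_of_le {N : ℕ} {I J : Ideal (𝓞 F)} (hI : I ∈ idealsNormLE F N)
    (h : I ≤ J) : J ∈ idealsNormLE F N := by
  have ⟨hN, hbot⟩ := mem_idealsNormLE.mp hI
  exact mem_idealsNormLE.mpr ⟨(Nat.le_of_dvd (absNorm_pos_of_mem_idealsNormLE hI)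
    (Ideal.absNorm_dvd_absNorm_of_le h)).trans hN, fun hJ => hbot (le_bot_iff.mp (hJ ▸ h))⟩

variable (F) in
theorem exists_tendsto_card_idealsNormLE_two_pow :
    ∃ κ > 0, Tendsto (fun K : ℕ => ((idealsNormLE F (2 ^ K)).card : ℝ) / 2 ^ K) atTop (𝓝 κ) := by
  refine ⟨_, dedekindZeta_residue_def F ▸ dedekindZeta_residue_pos F,
    ((NumberField.Ideal.tendsto_norm_le_div_atTop₀ F).comp
      (tendsto_pow_atTop_atTop_of_one_lt one_lt_two)).congr fun K => ?_⟩
  rw [Function.comp_apply, ← Nat.card_eq_finsetCard]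
  congr 2
  refine Nat.card_congr
    { toFun I := ⟨I.1.1, mem_idealsNormLE.mpr ⟨?_, nonZeroDivisors.ne_zero I.1.2⟩⟩
      invFun I := ⟨⟨I.1, mem_nonZeroDivisors_of_ne_zero (mem_idealsNormLE.mp I.2).2⟩, ?_⟩
      left_inv _ := rfl
      right_inv _ := rfl }
  · exact_mod_cast I.2
  · exact_mod_cast (mem_idealsNormLE.mp I.2).1

variable (F) in
theorem card_sub_card_div_le_sum_inv_absNorm (K : ℕ) :
    (((idealsNormLE F (2 ^ (K + 1))).card : ℝ) - (idealsNormLE F (2 ^ K)).card) / 2 ^ (K + 1) ≤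
      ∑ I ∈ idealsNormLE F (2 ^ (K + 1)), (Ideal.absNorm I : ℝ)⁻¹ -
        ∑ I ∈ idealsNormLE F (2 ^ K), (Ideal.absNorm I : ℝ)⁻¹ := by
  classical
  have hsub : idealsNormLE F (2 ^ K) ⊆ idealsNormLE F (2 ^ (K + 1)) :=
    idealsNormLE_subset (Nat.pow_le_pow_right two_pos K.le_succ)
  rw [← Finset.sum_sdiff_eq_sub hsub, ← Finset.cast_card_sdiff hsub, div_eq_mul_inv,
    ← nsmul_eq_mul]
  refine Finset.card_nsmul_le_sum _ _ _ fun I hI => ?_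
  have hI' := (Finset.mem_sdiff.mp hI).1
  exact inv_anti₀ (Nat.cast_pos.mpr (absNorm_pos_of_mem_idealsNormLE hI'))
    (by exact_mod_cast (mem_idealsNormLE.mp hI').1)

variable (F) in
theorem exists_mul_le_sum_inv_absNorm :
    ∃ κ > 0, ∀ᶠ K : ℕ in atTop,
      κ * K ≤ ∑ I ∈ idealsNormLE F (2 ^ K), (Ideal.absNorm I : ℝ)⁻¹ := by
  obtain ⟨κ, hκ, hlim⟩ := exists_tendsto_card_idealsNormLE_two_pow F
  have hlim_diff : Tendsto (fun K : ℕ => (((idealsNormLE F (2 ^ (K + 1))).card : ℝ) -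
      (idealsNormLE F (2 ^ K)).card) / 2 ^ (K + 1)) atTop (𝓝 (κ - κ / 2)) := by
    refine ((hlim.comp (tendsto_add_atTop_nat 1)).sub (hlim.div_const 2)).congr fun K => ?_
    rw [Function.comp_apply, sub_div, div_div, ← pow_succ]
  obtain ⟨m, hm⟩ := eventually_atTop.mp
    (hlim_diff.eventually_const_le (show κ / 4 < κ - κ / 2 by linarith))
  have hlinear (K : ℕ) (hK : m ≤ K) :
      κ / 4 * (K - m) ≤ ∑ I ∈ idealsNormLE F (2 ^ K), (Ideal.absNorm I : ℝ)⁻¹ := by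
    induction K, hK using Nat.le_induction with
    | base => simpa using Finset.sum_nonneg fun _ _ => by positivity
    | succ K hK ih =>
      push_cast
      linarith [hm K hK, card_sub_card_div_le_sum_inv_absNorm F K]
  refine ⟨κ / 8, by positivity, eventually_atTop.mpr ⟨2 * m, fun K hK => ?_⟩⟩
  have hmK : (2 * m : ℝ) ≤ K := by exact_mod_cast hK
  refine le_trans ?_ (hlinear K (by omega))
  nlinarith

open scoped Classical in
theorem sum_inv_absNorm_le_exp (N : ℕ) :
    ∑ I ∈ idealsNormLE F N, (Ideal.absNorm I : ℝ)⁻¹ ≤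
      Real.exp (∑ P ∈ idealsNormLE F N with P.IsPrime,
        ((Ideal.absNorm P : ℝ)⁻¹ + 2 * (Ideal.absNorm P : ℝ)⁻¹ ^ 2)) := by
  let f : Ideal (𝓞 F) →*₀ ℝ := (invMonoidWithZeroHom (G₀ := ℝ)).comp
    ((Nat.castRingHom ℝ).toMonoidWithZeroHom.comp Ideal.absNorm)
  have f_prime_le (P) (hP : P ∈ {P ∈ idealsNormLE F N | P.IsPrime}) : f P ≤ 1 / 2 := by
    have ⟨hPN, hprime⟩ := Finset.mem_filter.mp hP
    have : Ideal.absNorm P ≠ 1 := Ideal.absNorm_eq_one_iff.not.mpr hprime.ne_top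
    have hpos := absNorm_pos_of_mem_idealsNormLE hPN
    have two_le : (2 : ℝ) ≤ Ideal.absNorm P := by
      exact_mod_cast (by omega : 2 ≤ Ideal.absNorm P)
    exact (inv_anti₀ two_pos two_le).trans_eq (one_div 2).symm
  refine (sum_le_prod_inv_one_sub (f := f) (T := {P ∈ idealsNormLE F N | P.IsPrime})
    (fun I hI => (mem_idealsNormLE.mp hI).2)
    (fun I hI P hP hIP => Finset.mem_filter.mpr ⟨mem_idealsNormLE_of_le hI hIP, hP⟩)
    (fun I => inv_nonneg.mpr (Nat.cast_nonneg _))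
    fun P hP => (f_prime_le P hP).trans_lt one_half_lt_one).trans ?_
  rw [Real.exp_sum]
  exact Finset.prod_le_prod
    (fun P hP => inv_nonneg.mpr (by linarith [f_prime_le P hP]))
    fun P hP => inv_one_sub_le_exp (f_prime_le P hP)

theorem natCast_minFac_absNorm_mem (P : Ideal (𝓞 F)) [P.IsMaximal] :
    ((Ideal.absNorm P).minFac : 𝓞 F) ∈ P := by
  obtain ⟨p, n, hn, hmem, hp, hnorm⟩ := P.exists_prime_and_absNorm_eq_pow
  rwa [hnorm, hp.pow_minFac hn.ne']

theorem minFac_absNorm_mem_degreeOnePrimes_or_sq_le (P : Ideal (𝓞 F)) [P.IsMaximal] :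
    (Ideal.absNorm P).minFac ∈ degreeOnePrimes F ∧ (Ideal.absNorm P).minFac = Ideal.absNorm P ∨
      (Ideal.absNorm P).minFac ^ 2 ≤ Ideal.absNorm P := by
  obtain ⟨p, n, hn, -, hp, hnorm⟩ := P.exists_prime_and_absNorm_eq_pow
  rw [hnorm, hp.pow_minFac hn.ne']
  refine (eq_or_ne n 1).imp ?_ fun hn1 => Nat.pow_le_pow_right hp.pos (by omega : 2 ≤ n)
  rintro rfl
  let := Ideal.Quotient.field P
  have : Finite (𝓞 F ⧸ P) := Nat.finite_of_card_ne_zero (hnorm.trans_ne (pow_pos hp.pos 1).ne')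
  have := Fintype.ofFinite (𝓞 F ⧸ P)
  have hcard : Fintype.card (𝓞 F ⧸ P) = p :=
    Nat.card_eq_fintype_card.symm.trans (hnorm.trans (pow_one p))
  exact ⟨⟨hp, ⟨(ZMod.ringEquivOfPrime (𝓞 F ⧸ P) hp hcard).symm.toRingHom.comp
    (Ideal.Quotient.mk P)⟩⟩, (pow_one p).symm⟩

theorem absNorm_span_natCast (p : ℕ) :
    Ideal.absNorm (Ideal.span {(p : 𝓞 F)}) = p ^ Module.finrank ℚ F := by
  rw [Ideal.absNorm_span_singleton, ← map_natCast (algebraMap ℤ (𝓞 F)) p, Algebra.norm_algebraMap,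
    RingOfIntegers.rank, Int.natAbs_pow, Int.natAbs_natCast]

theorem le_absNorm_of_natCast_mem {p : ℕ} (hp : p.Prime) {P : Ideal (𝓞 F)} (hP : P ≠ ⊤)
    (hmem : (p : 𝓞 F) ∈ P) : p ≤ Ideal.absNorm P := by
  obtain ⟨k, -, hk⟩ := (Nat.dvd_prime_pow hp).mp
    (absNorm_span_natCast (F := F) p ▸ map_dvd Ideal.absNorm (Ideal.dvd_span_singleton.mpr hmem))
  have hk0 : k ≠ 0 := fun h => hP (Ideal.absNorm_eq_one_iff.mp (by rw [hk, h, pow_zero]))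
  exact hk ▸ Nat.le_self_pow hk0 p

theorem card_le_finrank_of_natCast_mem {p : ℕ} (hp : p.Prime) {T : Finset (Ideal (𝓞 F))}
    (hT : ∀ P ∈ T, P.IsPrime) (hmem : ∀ P ∈ T, (p : 𝓞 F) ∈ P) :
    T.card ≤ Module.finrank ℚ F := by
  have ne_bot (P) (hP : P ∈ T) : P ≠ ⊥ := by
    rintro rfl
    exact hp.ne_zero (Nat.cast_eq_zero.mp (Ideal.mem_bot.mp (hmem _ hP)))
  have hdvd : ∏ P ∈ T, P ∣ Ideal.span {(p : 𝓞 F)} :=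
    Finset.prod_primes_dvd _ (fun P hP => (Ideal.prime_iff_isPrime (ne_bot P hP)).mpr (hT P hP))
      fun P hP => Ideal.dvd_span_singleton.mpr (hmem P hP)
  refine (Nat.pow_le_pow_iff_right hp.one_lt).mp ?_
  calc p ^ T.card ≤ ∏ P ∈ T, Ideal.absNorm P :=
        Finset.pow_card_le_prod _ _ _ fun P hP =>
          le_absNorm_of_natCast_mem hp (hT P hP).ne_top (hmem P hP)
    _ = Ideal.absNorm (∏ P ∈ T, P) := (map_prod _ _ _).symm
    _ ≤ p ^ Module.finrank ℚ F :=
        Nat.le_of_dvd (pow_pos hp.pos _) (absNorm_span_natCast (F := F) p ▸ map_dvd _ hdvd)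

open scoped Classical in
theorem sum_primes_minFac_absNorm_le {g : ℕ → ℝ} (hg : ∀ n, 0 ≤ g n) (N : ℕ) :
    ∑ P ∈ idealsNormLE F N with P.IsPrime, g (Ideal.absNorm P).minFac ≤
      Module.finrank ℚ F * ∑ p ∈ Finset.Ioc 0 N, g p := by
  have minFac_mem (P) (hP : P ∈ {P ∈ idealsNormLE F N | P.IsPrime}) :
      (Ideal.absNorm P).minFac ∈ Finset.Ioc 0 N := by
    have hPN := (Finset.mem_filter.mp hP).1
    exact Finset.mem_Ioc.mpr ⟨Nat.minFac_pos _, (Nat.minFac_le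
      (absNorm_pos_of_mem_idealsNormLE hPN)).trans (mem_idealsNormLE.mp hPN).1⟩
  rw [← Finset.sum_fiberwise_of_maps_to minFac_mem, Finset.mul_sum]
  refine Finset.sum_le_sum fun p _ => ?_
  rw [Finset.sum_congr rfl fun P hP => congrArg g (Finset.mem_filter.mp hP).2, Finset.sum_const,
    nsmul_eq_mul]
  refine mul_le_mul_of_nonneg_right (Nat.cast_le.mpr ?_) (hg p)
  obtain h | ⟨P₀, hP₀⟩ := Finset.eq_empty_or_nonempty
    {P ∈ {P ∈ idealsNormLE F N | P.IsPrime} | (Ideal.absNorm P).minFac = p}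
  · simp [h]
  simp only [Finset.mem_filter] at hP₀
  have hp : p.Prime :=
    hP₀.2 ▸ Nat.minFac_prime (Ideal.absNorm_eq_one_iff.not.mpr hP₀.1.2.ne_top)
  refine card_le_finrank_of_natCast_mem hp (fun P hP => ?_) fun P hP => ?_ <;>
    simp only [Finset.mem_filter] at hP
  · exact hP.1.2
  · have := hP.1.2.isMaximal (mem_idealsNormLE.mp hP.1.1).2
    exact hP.2 ▸ natCast_minFac_absNorm_mem P

theorem inv_absNorm_add_sq_le (P : Ideal (𝓞 F)) [P.IsMaximal] :
    (Ideal.absNorm P : ℝ)⁻¹ + 2 * (Ideal.absNorm P : ℝ)⁻¹ ^ 2 ≤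
      (degreeOnePrimes F).indicator 1 (Ideal.absNorm P).minFac / (Ideal.absNorm P).minFac +
        3 * ((Ideal.absNorm P).minFac ^ 2 : ℝ)⁻¹ := by
  have indicator_nonneg : 0 ≤ (degreeOnePrimes F).indicator (1 : ℕ → ℝ)
      (Ideal.absNorm P).minFac / (Ideal.absNorm P).minFac :=
    div_nonneg (Set.indicator_nonneg (fun _ _ => zero_le_one) _) (Nat.cast_nonneg _)
  obtain ⟨hmem, heq⟩ | hsq := minFac_absNorm_mem_degreeOnePrimes_or_sq_le P
  · rw [Set.indicator_of_mem hmem, heq, inv_pow, Pi.one_apply, one_div]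
    linarith [show 0 ≤ ((Ideal.absNorm P : ℝ) ^ 2)⁻¹ by positivity]
  · have hpos : 0 < ((Ideal.absNorm P).minFac : ℝ) ^ 2 :=
      pow_pos (Nat.cast_pos.mpr (Nat.minFac_pos _)) 2
    have hinv : (Ideal.absNorm P : ℝ)⁻¹ ≤ ((Ideal.absNorm P).minFac ^ 2 : ℝ)⁻¹ :=
      inv_anti₀ hpos (by exact_mod_cast hsq)
    have hinv_sq : (Ideal.absNorm P : ℝ)⁻¹ ^ 2 ≤ (Ideal.absNorm P : ℝ)⁻¹ :=
      pow_le_of_le_one (by positivity) (Nat.cast_inv_le_one _) two_ne_zero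
    linarith

variable (F) in
theorem exists_sum_inv_absNorm_le_exp_sum_degreeOnePrimes :
    ∃ B : ℝ, ∀ N : ℕ, ∑ I ∈ idealsNormLE F N, (Ideal.absNorm I : ℝ)⁻¹ ≤
      Real.exp (Module.finrank ℚ F *
        (∑ p ∈ Finset.Ioc 0 N, (degreeOnePrimes F).indicator 1 p / (p : ℝ) + B)) := by
  classical
  have summable : Summable fun n : ℕ => 3 * ((n : ℝ) ^ 2)⁻¹ :=
    (Real.summable_nat_pow_inv.mpr one_lt_two).mul_left 3
  refine ⟨∑' n : ℕ, 3 * ((n : ℝ) ^ 2)⁻¹, fun N =>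
    (sum_inv_absNorm_le_exp N).trans (Real.exp_le_exp.mpr ?_)⟩
  calc ∑ P ∈ idealsNormLE F N with P.IsPrime,
        ((Ideal.absNorm P : ℝ)⁻¹ + 2 * (Ideal.absNorm P : ℝ)⁻¹ ^ 2)
      ≤ _ := Finset.sum_le_sum fun P hP => by
        have ⟨hPN, hprime⟩ := Finset.mem_filter.mp hP
        have := hprime.isMaximal (mem_idealsNormLE.mp hPN).2
        exact inv_absNorm_add_sq_le P
    _ ≤ Module.finrank ℚ F * ∑ p ∈ Finset.Ioc 0 N,
          ((degreeOnePrimes F).indicator 1 p / (p : ℝ) + 3 * ((p : ℝ) ^ 2)⁻¹) :=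
        sum_primes_minFac_absNorm_le (g := fun p =>
          (degreeOnePrimes F).indicator 1 p / (p : ℝ) + 3 * ((p : ℝ) ^ 2)⁻¹)
          (fun p => add_nonneg (div_nonneg (Set.indicator_nonneg (fun _ _ => zero_le_one) _)
            (Nat.cast_nonneg _)) (by positivity)) N
    _ ≤ _ := by
        rw [Finset.sum_add_distrib]
        gcongr
        exact summable.sum_le_tsum _ fun _ _ => by positivity

variable (F) in
theorem exists_log_le_finrank_mul_sum_degreeOnePrimes :
    ∃ C : ℝ, ∀ᶠ K : ℕ in atTop, Real.log K ≤ C + Module.finrank ℚ F *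
      ∑ p ∈ Finset.Ioc 0 (2 ^ K), (degreeOnePrimes F).indicator 1 p / (p : ℝ) := by
  obtain ⟨κ, hκ, hlower⟩ := exists_mul_le_sum_inv_absNorm F
  obtain ⟨B, hupper⟩ := exists_sum_inv_absNorm_le_exp_sum_degreeOnePrimes F
  refine ⟨Module.finrank ℚ F * B - Real.log κ, ?_⟩
  filter_upwards [hlower, eventually_gt_atTop 0] with K hK hpos
  have hlog := Real.log_le_log (by positivity) (hK.trans (hupper (2 ^ K)))
  rw [Real.log_exp, Real.log_mul hκ.ne' (by positivity)] at hlog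
  linarith

end IdealSums

section Density

open Filter

variable {a : ℕ → ℝ} {δ : ℝ}

theorem sum_Ioc_two_pow_div_le (ha : ∀ n, 0 ≤ a n) {B k : ℕ} (hk : 0 < k) (hB : B ≤ 2 ^ k)
    (h : ∑ n ∈ Finset.Ioc B (2 ^ (k + 1)), a n * Real.log n ≤ δ * 2 ^ (k + 1)) :
    ∑ n ∈ Finset.Ioc (2 ^ k) (2 ^ (k + 1)), a n / n ≤ 2 * δ / Real.log 2 * (k : ℝ)⁻¹ := by
  have : 0 < k * Real.log 2 := by positivity
  have term_le (n) (hn : n ∈ Finset.Ioc (2 ^ k) (2 ^ (k + 1))) :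
      a n / n ≤ a n * Real.log n * (2 ^ k * (k * Real.log 2))⁻¹ := by
    have hkn : (2 : ℝ) ^ k ≤ n := by exact_mod_cast (Finset.mem_Ioc.mp hn).1.le
    have hn0 : (0 : ℝ) < n := lt_of_lt_of_le (by positivity) hkn
    have hlogn : k * Real.log 2 ≤ Real.log n :=
      Real.log_pow 2 k ▸ Real.log_le_log (by positivity) hkn
    rw [← div_eq_mul_inv, div_le_div_iff₀ hn0 (by positivity), mul_assoc]
    refine mul_le_mul_of_nonneg_left ?_ (ha n)
    rw [mul_comm (Real.log _)]
    gcongr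
  calc ∑ n ∈ Finset.Ioc (2 ^ k) (2 ^ (k + 1)), a n / n
      ≤ (∑ n ∈ Finset.Ioc (2 ^ k) (2 ^ (k + 1)), a n * Real.log n) *
          (2 ^ k * (k * Real.log 2))⁻¹ := by
        rw [Finset.sum_mul]
        exact Finset.sum_le_sum term_le
    _ ≤ (∑ n ∈ Finset.Ioc B (2 ^ (k + 1)), a n * Real.log n) * (2 ^ k * (k * Real.log 2))⁻¹ := by
        gcongr
        exact fun n _ _ => mul_nonneg (ha n) (Real.log_natCast_nonneg n)
    _ ≤ δ * 2 ^ (k + 1) * (2 ^ k * (k * Real.log 2))⁻¹ := by gcongr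
    _ = 2 * δ / Real.log 2 * (k : ℝ)⁻¹ := by
        rw [pow_succ]
        field_simp

theorem exists_sum_div_le_of_sum_mul_log_le (ha : ∀ n, 0 ≤ a n) (hδ : 0 ≤ δ) {B : ℕ}
    (h : ∀ᶠ N : ℕ in atTop, ∑ n ∈ Finset.Ioc B N, a n * Real.log n ≤ δ * N) :
    ∃ C : ℝ, ∀ᶠ K : ℕ in atTop,
      ∑ n ∈ Finset.Ioc 0 (2 ^ K), a n / n ≤ C + 2 * δ / Real.log 2 * Real.log K := by
  obtain ⟨Y, hY⟩ := eventually_atTop.mp h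
  set c := 2 * δ / Real.log 2
  have hc0 : 0 ≤ c := by positivity
  let S (K : ℕ) : ℝ := ∑ n ∈ Finset.Ioc 0 (2 ^ K), a n / n
  have step (k : ℕ) (hk : B + Y < k) : S (k + 1) ≤ S k + c * (k : ℝ)⁻¹ := by
    have hk2 : k < 2 ^ k := Nat.lt_two_pow_self
    have hkk : 2 ^ k ≤ 2 ^ (k + 1) := Nat.pow_le_pow_right two_pos k.le_succ
    have hYk := hY (2 ^ (k + 1)) (by omega)
    push_cast at hYk
    calc S (k + 1) = S k + ∑ n ∈ Finset.Ioc (2 ^ k) (2 ^ (k + 1)), a n / n :=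
          (Finset.sum_Ioc_consecutive _ (Nat.zero_le _) hkk).symm
      _ ≤ S k + c * (k : ℝ)⁻¹ := by
          gcongr
          exact sum_Ioc_two_pow_div_le ha (by omega) (by omega) hYk
  have harmonic_bound (K : ℕ) (hK : B + Y < K) : S (K + 1) ≤ S (B + Y + 2) + c * harmonic K := by
    induction K, hK using Nat.le_induction with
    | base =>
      have : (0 : ℝ) ≤ harmonic (B + Y + 1) := by
        exact_mod_cast (harmonic_pos (Nat.succ_ne_zero _)).le
      exact le_add_of_nonneg_right (mul_nonneg hc0 this)
    | succ K hK ih =>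
      rw [harmonic_succ]
      push_cast
      have := step (K + 1) (by omega)
      push_cast at this
      linarith
  refine ⟨S (B + Y + 2) + c, ?_⟩
  filter_upwards [eventually_gt_atTop (B + Y)] with K hK
  have hmono : S K ≤ S (K + 1) := Finset.sum_le_sum_of_subset_of_nonneg
    (Finset.Ioc_subset_Ioc_right (Nat.pow_le_pow_right two_pos K.le_succ))
    fun n _ _ => div_nonneg (ha n) n.cast_nonneg
  have := mul_le_mul_of_nonneg_left (harmonic_le_one_add_log K) hc0
  linarith [harmonic_bound K hK]

theorem exists_div_lt_sum_mul_log (ha : ∀ n, 0 ≤ a n) {C D : ℝ} (hD : 0 < D)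
    (h : ∀ᶠ K : ℕ in atTop, Real.log K ≤ C + D * ∑ n ∈ Finset.Ioc 0 (2 ^ K), a n / n)
    (B Y₀ : ℕ) : ∃ Y ≥ Y₀, Y / (4 * D) < ∑ n ∈ Finset.Ioc B Y, a n * Real.log n := by
  by_contra! hcon
  obtain ⟨C', hC'⟩ := exists_sum_div_le_of_sum_mul_log_le ha (δ := (4 * D)⁻¹) (by positivity)
    (eventually_atTop.mpr ⟨Y₀, fun N hN => (hcon N hN).trans_eq (div_eq_inv_mul _ _)⟩)
  have hcoeff : D * (2 * (4 * D)⁻¹ / Real.log 2) ≤ 3 / 4 := by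
    have := Real.log_two_gt_d9
    field_simp
    linarith
  have log_large := (Real.tendsto_log_atTop.comp tendsto_natCast_atTop_atTop).eventually_gt_atTop
    (max 0 (4 * (C + D * C')))
  obtain ⟨K, hK, hCK, hlarge⟩ := (h.and (hC'.and log_large)).exists
  have ⟨hlog0, hlogC⟩ := max_lt_iff.mp hlarge
  simp only [Function.comp_apply] at hlog0 hlogC
  have := mul_le_mul_of_nonneg_right hcoeff hlog0.le
  have := mul_le_mul_of_nonneg_left hCK hD.le
  linarith

end Density

section LcmUpto

theorem totient_primorial_le (N : ℕ) :
    (Nat.totient (primorial N) : ℝ) ≤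
      primorial N * Real.exp (-∑ p ∈ Nat.primesLE N, (1 : ℝ) / p) := by
  have htotient : (Nat.totient (primorial N) : ℝ) =
      primorial N * ∏ p ∈ (primorial N).primeFactors, (1 - (p : ℝ)⁻¹) := by
    have h := congrArg (Rat.cast (K := ℝ)) (Nat.totient_eq_mul_prod_factors (primorial N))
    push_cast at h
    exact h
  rw [htotient, primeFactors_primorial, ← Finset.sum_neg_distrib, Real.exp_sum]
  gcongr with p
  · exact fun p _ => sub_nonneg.mpr (Nat.cast_inv_le_one p)
  · linarith [Real.add_one_le_exp (-((1 : ℝ) / p)), one_div (p : ℝ)]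

theorem tendsto_sum_primesLE_one_div :
    Filter.Tendsto (fun N => ∑ p ∈ Nat.primesLE N, (1 : ℝ) / p) Filter.atTop Filter.atTop := by
  have h := (not_summable_iff_tendsto_nat_atTop_of_nonneg fun n =>
    Set.indicator_nonneg (fun _ _ => by positivity) n).mp not_summable_one_div_on_primes
  refine (h.comp (Filter.tendsto_add_atTop_nat 1)).congr fun N => ?_
  rw [Function.comp_apply, Nat.primesLE_eq_filter_range, Finset.sum_filter]
  exact Finset.sum_congr rfl fun p _ => Set.indicator_apply _ _ _

theorem exists_mul_totient_le (R : ℝ) : ∃ Q : ℕ, 2 ≤ Q ∧ R * Nat.totient Q ≤ Q := by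
  obtain ⟨N, hN, hsum⟩ := ((Filter.eventually_ge_atTop 2).and
    (tendsto_sum_primesLE_one_div.eventually_ge_atTop (Real.log (max R 1)))).exists
  refine ⟨primorial N, hN.trans le_primorial_self, ?_⟩
  have hR : 0 < max R 1 := by positivity
  calc R * Nat.totient (primorial N)
      ≤ max R 1 * (primorial N * Real.exp (-∑ p ∈ Nat.primesLE N, (1 : ℝ) / p)) := by
        gcongr
        · exact le_max_left R 1
        · exact totient_primorial_le N
    _ ≤ max R 1 * (primorial N * Real.exp (-Real.log (max R 1))) := by gcongr
    _ = primorial N := by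
        rw [Real.exp_neg, Real.exp_log hR]
        field_simp

theorem sub_one_dvd_mul_lcmUpto {p Q Y : ℕ} (hp : p.Prime) (hQ : 0 < Q) (hpY : p ≤ Y)
    (hdvd : Q ∣ p - 1) : p - 1 ∣ Q * Nat.lcmUpto (Y / Q) := by
  obtain ⟨t, ht⟩ := hdvd
  have ht0 : t ≠ 0 := by
    rintro rfl
    have := hp.two_le
    omega
  rw [ht]
  refine Nat.mul_dvd_mul_left Q (Finset.dvd_lcm (f := id) (Finset.mem_Icc.mpr ⟨?_, ?_⟩))
  · omega
  · rw [Nat.le_div_iff_mul_le hQ, mul_comm, ← ht]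
    omega

theorem log_mul_lcmUpto_le {Q Y : ℕ} (hQ : 0 < Q) (hY : Q ^ 2 ≤ Y) :
    Real.log (Q * Nat.lcmUpto (Y / Q)) ≤ 2 * (Real.log 4 + 4) * (Y / Q) := by
  have hQ0 : (0 : ℝ) < Q := Nat.cast_pos.mpr hQ
  have hlogQ : Real.log Q ≤ Y / Q := by
    have hQY : (Q : ℝ) ^ 2 ≤ Y := by exact_mod_cast hY
    refine (Real.log_le_self hQ0.le).trans ((le_div_iff₀ hQ0).mpr ?_)
    linarith
  have hlogLcm : Real.log (Nat.lcmUpto (Y / Q)) ≤ (Real.log 4 + 4) * (Y / Q) := by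
    rw [← Chebyshev.psi_eq_log_lcmUpto]
    refine (Chebyshev.psi_le_const_mul_self (by positivity)).trans ?_
    gcongr
    exact Nat.cast_div_le
  rw [Real.log_mul hQ0.ne' (Nat.cast_ne_zero.mpr (Nat.lcmUpto_ne_zero _))]
  have : Y / Q ≤ (Real.log 4 + 4) * (Y / Q : ℝ) :=
    le_mul_of_one_le_left (by positivity) (by linarith [Real.log_nonneg (x := 4) (by norm_num)])
  linarith

end LcmUpto

section Cyclotomic

open NumberField

theorem degreeOnePrimes_subset (K L : Type*) [Field K] [Field L] [Algebra K L] :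
    degreeOnePrimes L ⊆ degreeOnePrimes K :=
  fun _ ⟨hp, ⟨f⟩⟩ => ⟨hp, ⟨f.comp (algebraMap (𝓞 K) (𝓞 L))⟩⟩

theorem dvd_sub_one_of_mem_degreeOnePrimes {F : Type*} [Field F] {Q p : ℕ} [NeZero Q] {ζ : F}
    (hζ : IsPrimitiveRoot ζ Q) (hp : p ∈ degreeOnePrimes F) (hQp : Q < p) : Q ∣ p - 1 := by
  obtain ⟨hprime, ⟨f⟩⟩ := hp
  have := Fact.mk hprime
  have hQ : 0 < Q := NeZero.pos Q
  have : NeZero (Q : ZMod p) := ⟨fun h =>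
    Nat.not_le_of_lt hQp (Nat.le_of_dvd hQ ((ZMod.natCast_eq_zero_iff Q p).mp h))⟩
  have hroot : (Polynomial.cyclotomic Q (ZMod p)).IsRoot (f hζ.toInteger) :=
    Polynomial.map_cyclotomic Q f ▸ (hζ.toInteger_isPrimitiveRoot.isRoot_cyclotomic hQ).map
  have hprimitive := Polynomial.isRoot_cyclotomic_iff.mp hroot
  exact hprimitive.dvd_of_pow_eq_one _ (ZMod.pow_card_sub_one_eq_one (hprimitive.ne_zero hQ.ne'))

theorem finrank_cyclotomicField_le (F : Type*) [Field F] [NumberField F] (Q : ℕ) [NeZero Q] :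
    Module.finrank ℚ (CyclotomicField Q F) ≤ Module.finrank ℚ F * Nat.totient Q := by
  have hζ := IsCyclotomicExtension.zeta_spec Q F (CyclotomicField Q F)
  have := IsCyclotomicExtension.finiteDimensional {Q} F (CyclotomicField Q F)
  rw [← Module.finrank_mul_finrank ℚ F (CyclotomicField Q F), (hζ.powerBasis F).finrank,
    ← (hζ.powerBasis F).natDegree_minpoly, IsPrimitiveRoot.powerBasis_gen,
    ← Polynomial.natDegree_cyclotomic Q F]
  refine Nat.mul_le_mul_left _ (Polynomial.natDegree_le_of_dvd (minpoly.dvd _ _ ?_)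
    (Polynomial.cyclotomic_ne_zero Q F))
  rw [Polynomial.aeval_def, Polynomial.eval₂_eq_eval_map, Polynomial.map_cyclotomic]
  exact hζ.isRoot_cyclotomic (NeZero.pos Q)

theorem log_pow_mul_lcmUpto_le {Q Y r d D : ℕ} (hD : 0 < D) (hQ : 0 < Q) (hY : Q ^ 2 ≤ Y)
    (hDd : D ≤ d * Nat.totient Q) (htotient : 8 * r * (Real.log 4 + 4) * d * Nat.totient Q ≤ Q) :
    Real.log ((Q * Nat.lcmUpto (Y / Q)) ^ r) ≤ Y / (4 * D) := by
  have hQ0 : (0 : ℝ) < Q := Nat.cast_pos.mpr hQ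
  have : (0 : ℝ) < D := Nat.cast_pos.mpr hD
  have : 0 ≤ Real.log 4 := Real.log_nonneg (by norm_num)
  have hDQ : 8 * r * (Real.log 4 + 4) * D ≤ Q := by
    calc 8 * r * (Real.log 4 + 4) * D
        ≤ 8 * r * (Real.log 4 + 4) * (d * Nat.totient Q : ℕ) := by gcongr
      _ ≤ Q := by
        push_cast
        linarith
  rw [Real.log_pow, le_div_iff₀ (by positivity)]
  calc r * Real.log (Q * Nat.lcmUpto (Y / Q)) * (4 * D)
      ≤ r * (2 * (Real.log 4 + 4) * (Y / Q)) * (4 * D) := by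
        gcongr
        exact log_mul_lcmUpto_le hQ hY
    _ = 8 * r * (Real.log 4 + 4) * D * (Y / Q) := by ring
    _ ≤ Q * (Y / Q) := by gcongr
    _ = Y := mul_div_cancel₀ _ hQ0.ne'

-- `S` consists of the primes up to `Y` of degree one in `F(ζ_Q)`, which are `1` modulo `Q`, so that
-- `M = Q * lcm (1, …, Y / Q)` is a common multiple of all `p - 1`. Then `log M = O(Y / Q)`, whereas
-- `∑ p ∈ S, log p` is at least of order `Y / φ(Q)` for suitable `Y`; so `Q / φ(Q)` is chosen large.
theorem exists_finset_degreeOnePrimes_pow_lt_prod (F : Type*) [Field F] [NumberField F]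
    (r b : ℕ) :
    ∃ (S : Finset ℕ) (M : ℕ), 0 < M ∧ (∀ p ∈ S, p ∈ degreeOnePrimes F ∧ b < p ∧ p - 1 ∣ M) ∧
      M ^ r < ∏ p ∈ S, p := by
  classical
  obtain ⟨Q, hQ2, htotient⟩ :=
    exists_mul_totient_le (8 * r * (Real.log 4 + 4) * Module.finrank ℚ F)
  have hQ : 0 < Q := by omega
  have : NeZero Q := ⟨hQ.ne'⟩
  let E := CyclotomicField Q F
  have hE : 0 < Module.finrank ℚ E := Module.finrank_pos
  obtain ⟨C, hC⟩ := exists_log_le_finrank_mul_sum_degreeOnePrimes E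
  obtain ⟨Y, hY, hlt⟩ := exists_div_lt_sum_mul_log
    (fun n => Set.indicator_nonneg (fun _ _ => zero_le_one) n) (Nat.cast_pos.mpr hE) hC
    (b + Q) (Q ^ 2)
  let S := {p ∈ Finset.Ioc (b + Q) Y | p ∈ degreeOnePrimes E}
  have mem_S (p) (hp : p ∈ S) : (b + Q < p ∧ p ≤ Y) ∧ p ∈ degreeOnePrimes E := by
    simpa only [S, Finset.mem_filter, Finset.mem_Ioc] using hp
  have hlog_prod : Real.log (∏ p ∈ S, p : ℕ) =
      ∑ n ∈ Finset.Ioc (b + Q) Y, (degreeOnePrimes E).indicator 1 n * Real.log n := by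
    rw [Nat.cast_prod, Real.log_prod fun p hp => Nat.cast_ne_zero.mpr (mem_S p hp).2.1.ne_zero,
      Finset.sum_filter]
    simp only [Set.indicator_apply, Pi.one_apply, ite_mul, one_mul, zero_mul]
  have hM : 0 < Q * Nat.lcmUpto (Y / Q) := Nat.mul_pos hQ (Nat.lcmUpto_pos _)
  refine ⟨S, Q * Nat.lcmUpto (Y / Q), hM, fun p hp => ?_, ?_⟩
  · have ⟨⟨hbp, hpY⟩, hpE⟩ := mem_S p hp
    have hQp := dvd_sub_one_of_mem_degreeOnePrimes (IsCyclotomicExtension.zeta_spec Q F E) hpE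
      (by omega)
    exact ⟨degreeOnePrimes_subset F E hpE, by omega, sub_one_dvd_mul_lcmUpto hpE.1 hQ hpY hQp⟩
  · have hprod : 0 < ∏ p ∈ S, p := Finset.prod_pos fun p hp => (mem_S p hp).2.1.pos
    refine Nat.cast_lt.mp ((Real.log_lt_log_iff (by exact_mod_cast pow_pos hM r)
      (Nat.cast_pos.mpr hprod)).mp ?_)
    rw [hlog_prod]
    push_cast
    exact (log_pow_mul_lcmUpto_le hE hQ hY (finrank_cyclotomicField_le F Q) htotient).trans_lt hlt

end Cyclotomic

section Diagonalization

theorem exists_basis_forall_apply_eq_smul {E V ι : Type*} [Field E] [IsAlgClosed E]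
    [AddCommGroup V] [Module E V] [Finite ι] (b₀ : Module.Basis ι E V) {f : Module.End E V}
    (hf : f.IsSemisimple) :
    ∃ (b : Module.Basis ι E V) (d : ι → E), ∀ i, f (b i) = d i • b i := by
  classical
  have := Module.Basis.finiteDimensional_of_finite b₀
  have hinternal : DirectSum.IsInternal f.eigenspace :=
    DirectSum.isInternal_submodule_of_iSupIndep_of_iSup_eq_top f.eigenspaces_iSupIndep
      hf.iSup_eigenspace_eq_top
  let b := hinternal.collectedBasis fun μ => Module.finBasis E (f.eigenspace μ)
  let e := b.indexEquiv b₀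
  refine ⟨b.reindex e, fun i => (e.symm i).1, fun i => ?_⟩
  rw [b.reindex_apply]
  exact Module.End.mem_eigenspace_iff.mp (hinternal.collectedBasis_mem _ (e.symm i))

variable {n : Type*} [Fintype n] [DecidableEq n]

/-- The inclusion of the group of invertible diagonal matrices in `GL n R`; its source is the group
of units of the ring `n → R`. -/
def diagonalGL {R : Type*} [CommRing R] : (n → R)ˣ →* GL n R :=
  Units.map (diagonalRingHom n R).toMonoidHom

theorem map_diagonalGL {R S : Type*} [CommRing R] [CommRing S] (f : R →+* S) (d : (n → R)ˣ) :
    GeneralLinearGroup.map f (diagonalGL d) = diagonalGL (Units.map (f.compLeft n).toMonoidHom d) :=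
  Units.ext (diagonal_map (map_zero f))

theorem isSemisimple_toLin'_map {K L : Type*} [Field K] [PerfectField K] [Field L] [Algebra K L]
    {M : Matrix n n K} (hM : Module.End.IsSemisimple (toLin' M)) :
    Module.End.IsSemisimple (toLin' (M.map (algebraMap K L))) := by
  have hseparable : (minpoly K M).Separable :=
    PerfectField.separable_iff_squarefree.mpr (minpoly_toLin' M ▸ hM.minpoly_squarefree)
  refine Module.End.isSemisimple_of_squarefree_aeval_eq_zero
    (p := (minpoly K M).map (algebraMap K L)) hseparable.map.squarefree ?_
  have haeval : Polynomial.aeval (M.map (algebraMap K L)) (minpoly K M) = 0 := by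
    rw [show M.map (algebraMap K L) = (Algebra.ofId K L).mapMatrix M from rfl,
      Polynomial.aeval_algHom_apply, minpoly.aeval, map_zero]
  change Polynomial.aeval (toLinAlgEquiv' (M.map (algebraMap K L))) _ = 0
  rw [Polynomial.aeval_algHom_apply, Polynomial.aeval_map_algebraMap, haeval, map_zero]

theorem exists_eq_conj_diagonal {E : Type*} [Field E] [IsAlgClosed E] {g : GL n E}
    (hg : Module.End.IsSemisimple (toLin' (g : Matrix n n E))) :
    ∃ (P : GL n E) (d : (n → E)ˣ), g = P * diagonalGL d * P⁻¹ := by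
  let e := Pi.basisFun E n
  obtain ⟨b, d, hd⟩ := exists_basis_forall_apply_eq_smul e hg
  let P : GL n E := ⟨e.toMatrix b, b.toMatrix e, e.toMatrix_mul_toMatrix_flip b,
    b.toMatrix_mul_toMatrix_flip e⟩
  have hgP : (g : Matrix n n E) * P = P * diagonal d := by
    ext i j
    have hij := congrFun (hd j) i
    rw [toLin'_apply, Pi.smul_apply, smul_eq_mul, mul_comm] at hij
    rw [mul_diagonal]
    exact hij
  have hunit : IsUnit d := by
    rw [← isUnit_diagonal, ← Units.isUnit_units_mul P, ← hgP]
    exact (g * P).isUnit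
  refine ⟨P, hunit.unit, eq_mul_inv_of_mul_eq (Units.ext ?_)⟩
  exact hgP

end Diagonalization

section SpreadingOut

open NumberField

theorem exists_numberField_nonempty_ringHom.{u} (A : Type u) [CommRing A] [CharZero A]
    [Algebra.FiniteType ℤ A] :
    ∃ (L : Type u) (_ : Field L) (_ : NumberField L), Nonempty (A →+* L) := by
  have hinjective : Function.Injective
      (Algebra.TensorProduct.includeLeft : ℚ →ₐ[ℤ] TensorProduct ℤ ℚ A) :=
    Algebra.TensorProduct.includeLeft_injective (RingHom.injective_int _)
  have : Nontrivial (TensorProduct ℤ ℚ A) := hinjective.nontrivial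
  obtain ⟨𝔪, h𝔪⟩ := Ideal.exists_maximal (TensorProduct ℤ ℚ A)
  let L := TensorProduct ℤ ℚ A ⧸ 𝔪
  let _ : Field L := Ideal.Quotient.field 𝔪
  have hfinite : Module.Finite ℚ L := finite_of_finite_type_of_isJacobsonRing ℚ L
  have : CharZero L := charZero_of_injective_algebraMap (algebraMap ℚ L).injective
  have : NumberField L :=
    { to_finiteDimensional := by
        convert! hfinite
        exact Subsingleton.elim _ _ }
  exact ⟨L, inferInstance, inferInstance, ⟨(Ideal.Quotient.mk 𝔪).comp
    (Algebra.TensorProduct.includeRight : A →ₐ[ℤ] TensorProduct ℤ ℚ A)⟩⟩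

theorem nonempty_ringHom_of_range_le {A B L R : Type*} [Ring A] [Ring B] [Ring L] [Ring R]
    {ψ : A →+* L} {g : B →+* L} (hg : Function.Injective g) (h : ψ.range ≤ g.range)
    (f : B →+* R) : Nonempty (A →+* R) :=
  let e := RingEquiv.ofBijective g.rangeRestrict
    ⟨fun _ _ hxy => hg (congrArg Subtype.val hxy), g.rangeRestrict_surjective⟩
  ⟨f.comp (e.symm.toRingHom.comp ((Subring.inclusion h).comp ψ.rangeRestrict))⟩

theorem exists_forall_nonempty_ringHom_zmod {A L : Type*} [CommRing A] [Algebra.FiniteType ℤ A]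
    [Field L] [NumberField L] (ψ : A →+* L) :
    ∃ b : ℕ, ∀ p ∈ degreeOnePrimes L, b < p → Nonempty (A →+* ZMod p) := by
  classical
  obtain ⟨s, hs⟩ := Algebra.FiniteType.out (R := ℤ) (A := A)
  obtain ⟨N, hN, hintegral⟩ := exists_integral_multiples ℤ ℚ (s.image ψ)
  refine ⟨N.natAbs, fun p ⟨hp, ⟨f⟩⟩ hNp => ?_⟩
  have := Fact.mk hp
  let B := Localization.Away (N : 𝓞 L)
  let g : B →+* L := IsLocalization.Away.lift (N : 𝓞 L) (g := algebraMap (𝓞 L) L) (by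
    rw [map_intCast]
    exact (Int.cast_ne_zero.mpr hN).isUnit)
  have hg : Function.Injective g := by
    have hN0 : (N : 𝓞 L) ≠ 0 := Int.cast_ne_zero.mpr hN
    refine (IsLocalization.lift_injective_iff _).mpr fun x y => ?_
    rw [(IsLocalization.injective B (powers_le_nonZeroDivisors_of_noZeroDivisors hN0)).eq_iff,
      RingOfIntegers.coe_injective.eq_iff]
  have hrange : ψ.range ≤ g.range := by
    suffices Algebra.adjoin ℤ s ≤ subalgebraOfSubring (g.range.comap ψ) by
      rintro _ ⟨x, rfl⟩
      exact this (hs ▸ Algebra.mem_top : x ∈ Algebra.adjoin ℤ s)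
    refine Algebra.adjoin_le fun x hx => ?_
    let y : 𝓞 L := ⟨N • ψ x, hintegral _ (Finset.mem_image_of_mem ψ hx)⟩
    refine ⟨IsLocalization.mk' B y ⟨(N : 𝓞 L), Submonoid.mem_powers _⟩, ?_⟩
    refine (IsLocalization.lift_mk'_spec _ _ _ _).mpr ?_
    simp [y]
  let h : B →+* ZMod p := IsLocalization.Away.lift (N : 𝓞 L) (g := f) (by
    rw [map_intCast, isUnit_iff_ne_zero, Ne, ZMod.intCast_zmod_eq_zero_iff_dvd, Int.natCast_dvd]
    exact Nat.not_dvd_of_pos_of_lt (Int.natAbs_pos.mpr hN) hNp)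
  exact nonempty_ringHom_of_range_le hg hrange h

theorem exists_numberField_forall_ringHom_zmod_apply_ne_zero.{u} {A : Type u} [CommRing A]
    [IsDomain A] [CharZero A] [Algebra.FiniteType ℤ A] {a : A} (ha : a ≠ 0) :
    ∃ (L : Type u) (_ : Field L) (_ : NumberField L) (b : ℕ), ∀ p ∈ degreeOnePrimes L, b < p →
      ∃ f : A →+* ZMod p, f a ≠ 0 := by
  obtain ⟨B, _, _, _⟩ :
      ∃ (B : Type u) (_ : CommRing B) (_ : Algebra A B), IsLocalization.Away a B :=
    ⟨Localization.Away a, inferInstance, inferInstance, inferInstance⟩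
  have hinjective : Function.Injective (algebraMap A B) :=
    IsLocalization.injective B (powers_le_nonZeroDivisors_of_noZeroDivisors ha)
  have : CharZero B := charZero_of_injective_algebraMap hinjective
  have : Algebra.FiniteType A B := IsLocalization.finiteType_of_monoid_fg (Submonoid.powers a) B
  have : Algebra.FiniteType ℤ B := Algebra.FiniteType.trans (S := A) inferInstance inferInstance
  obtain ⟨L, hfield, hnumberField, ⟨ψ⟩⟩ := exists_numberField_nonempty_ringHom B
  obtain ⟨b, hb⟩ := exists_forall_nonempty_ringHom_zmod ψ
  refine ⟨L, hfield, hnumberField, b, fun p hp hbp => ?_⟩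
  have := Fact.mk hp.1
  obtain ⟨f⟩ := hb p hp hbp
  exact ⟨f.comp (algebraMap A B), ((IsLocalization.Away.algebraMap_isUnit a).map f).ne_zero⟩

end SpreadingOut

section Specialization

variable {n : Type*} [Fintype n] [DecidableEq n]

theorem exists_subring_finiteType_subset {E : Type*} [CommRing E] {t : Set E} (ht : t.Finite) :
    ∃ A : Subring E, Algebra.FiniteType ℤ A ∧ t ⊆ A :=
  ⟨(Algebra.adjoin ℤ t).toSubring,
    (Algebra.adjoin ℤ t).fg_iff_finiteType.mp (Subalgebra.fg_def.mpr ⟨t, ht, rfl⟩),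
    Algebra.subset_adjoin⟩

theorem generalLinearGroup_map_injective {R S : Type*} [CommRing R] [CommRing S] {f : R →+* S}
    (hf : Function.Injective f) :
    Function.Injective (GeneralLinearGroup.map f : GL n R →* GL n S) :=
  Units.map_injective (Matrix.map_injective hf)

theorem mem_range_unitsMap {M N : Type*} [Monoid M] [Monoid N] {f : M →* N}
    (hf : Function.Injective f) {u : Nˣ} {a b : M} (ha : f a = u) (hb : f b = ↑u⁻¹) :
    u ∈ (Units.map f).range :=
  ⟨⟨a, b, hf (by simp [ha, hb]), hf (by simp [ha, hb])⟩, Units.ext ha⟩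

theorem mem_range_generalLinearGroup_map {R S : Type*} [CommRing R] [CommRing S] {f : R →+* S}
    (hf : Function.Injective f) {g : GL n S} (hg : ∀ i j, g i j ∈ f.range)
    (hg' : ∀ i j, g⁻¹ i j ∈ f.range) : g ∈ (GeneralLinearGroup.map f).range := by
  choose a ha using hg
  choose b hb using hg'
  let F : Matrix n n R →* Matrix n n S := (f.mapMatrix (m := n)).toMonoidHom
  exact mem_range_unitsMap (f := F) (Matrix.map_injective hf) (a := .of a) (b := .of b)
    (Matrix.ext ha) (Matrix.ext hb)

theorem exists_subring_finiteType_forall_mem_range {E ι : Type*} [CommRing E] [Finite ι]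
    (P : ι → GL n E) (d : ι → (n → E)ˣ) :
    ∃ A : Subring E, Algebra.FiniteType ℤ A ∧
      (∀ i, P i ∈ (GeneralLinearGroup.map A.subtype).range) ∧
      ∀ i, d i ∈ (Units.map (A.subtype.compLeft n).toMonoidHom).range := by
  let t : Set E := Set.range (fun x : ι × n × n => P x.1 x.2.1 x.2.2) ∪
    Set.range (fun x : ι × n × n => (P x.1)⁻¹ x.2.1 x.2.2) ∪
    Set.range (fun x : ι × n => (d x.1).1 x.2) ∪ Set.range (fun x : ι × n => (d x.1)⁻¹.1 x.2)
  obtain ⟨A, hA, htA⟩ := exists_subring_finiteType_subset (Set.toFinite t)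
  simp only [t, Set.union_subset_iff, Set.range_subset_iff, Prod.forall] at htA
  obtain ⟨⟨⟨hP, hP'⟩, hd⟩, hd'⟩ := htA
  refine ⟨A, hA, fun i => ?_, fun i => ?_⟩
  · exact mem_range_generalLinearGroup_map A.subtype_injective
      (fun j k => ⟨⟨_, hP i j k⟩, rfl⟩) fun j k => ⟨⟨_, hP' i j k⟩, rfl⟩
  · let a : n → A := fun k => ⟨(d i).1 k, hd i k⟩
    let b : n → A := fun k => ⟨(d i)⁻¹.1 k, hd' i k⟩
    exact mem_range_unitsMap (f := (A.subtype.compLeft n).toMonoidHom) (a := a) (b := b)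
      A.subtype_injective.comp_left (funext fun _ => rfl) (funext fun _ => rfl)

theorem exists_comp_eq_of_closure_eq_top {G H H' : Type*} [Group G] [Group H] [Group H']
    {j : H' →* H} (hj : Function.Injective j) (ρ : G →* H) {s : Set G}
    (hs : Subgroup.closure s = ⊤) (hρ : ∀ g ∈ s, ρ g ∈ j.range) :
    ∃ σ : G →* H', j.comp σ = ρ := by
  have hrange (g : G) : ρ g ∈ j.range :=
    (Subgroup.closure_le (j.range.comap ρ)).mpr hρ (hs ▸ Subgroup.mem_top g)
  refine ⟨(MonoidHom.ofInjective hj).symm.toMonoidHom.comp (ρ.codRestrict j.range hrange), ?_⟩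
  ext g
  exact congrArg Subtype.val ((MonoidHom.ofInjective hj).apply_symm_apply ⟨ρ g, hrange g⟩)

theorem exists_subring_finiteType_monoidHom {E : Type*} [CommRing E] {G : Type*} [Group G]
    (ρ : G →* GL n E) {s : Set G} (hs : s.Finite) (hgen : Subgroup.closure s = ⊤)
    (hρ : ∀ g ∈ s, ∃ (P : GL n E) (d : (n → E)ˣ), ρ g = P * diagonalGL d * P⁻¹) :
    ∃ A : Subring E, Algebra.FiniteType ℤ A ∧ ∃ σ : G →* GL n A,
      (GeneralLinearGroup.map A.subtype).comp σ = ρ ∧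
      ∀ g ∈ s, ∃ (P : GL n A) (d : (n → A)ˣ), σ g = P * diagonalGL d * P⁻¹ := by
  have := hs.to_subtype
  choose P d hPd using fun g : s => hρ g g.2
  obtain ⟨A, hA, hP, hd⟩ := exists_subring_finiteType_forall_mem_range P d
  choose P' hP' using hP
  choose d' hd' using hd
  let j : GL n A →* GL n E := GeneralLinearGroup.map A.subtype
  have hj : Function.Injective j := generalLinearGroup_map_injective A.subtype_injective
  have hconj (g : s) : j (P' g * diagonalGL (d' g) * (P' g)⁻¹) = ρ g := by
    rw [map_mul, map_mul, map_inv, hP', map_diagonalGL, hd', hPd]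
  obtain ⟨σ, hσ⟩ := exists_comp_eq_of_closure_eq_top hj ρ hgen fun g hg => ⟨_, hconj ⟨g, hg⟩⟩
  exact ⟨A, hA, σ, hσ, fun g hg => ⟨P' ⟨g, hg⟩, d' ⟨g, hg⟩,
    hj ((DFunLike.congr_fun hσ g).trans (hconj ⟨g, hg⟩).symm)⟩⟩

theorem diagonalGL_pow_card_sub_one_eq_one {p : ℕ} [Fact p.Prime] (d : (n → ZMod p)ˣ) :
    diagonalGL d ^ (p - 1) = 1 := by
  have hd : d ^ (p - 1) = 1 := by
    refine MulEquiv.piUnits.injective (funext fun i => ?_)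
    rw [map_pow, map_one, Pi.pow_apply, Pi.one_apply, ZMod.units_pow_card_sub_one_eq_one]
  rw [← map_pow, hd, map_one]

theorem exists_numberField_forall_exists_monoidHom.{u} {E : Type u} [Field E] [CharZero E]
    {G : Type*} [Group G] (ρ : G →* GL n E) {s : Set G} (hs : s.Finite)
    (hgen : Subgroup.closure s = ⊤)
    (hρ : ∀ g ∈ s, ∃ (P : GL n E) (d : (n → E)ˣ), ρ g = P * diagonalGL d * P⁻¹)
    {c : G} (hc : ρ c ≠ 1) :
    ∃ (L : Type u) (_ : Field L) (_ : NumberField L) (b : ℕ), ∀ p ∈ degreeOnePrimes L, b < p →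
      ∃ σ : G →* GL n (ZMod p), (∀ g ∈ s, σ g ^ (p - 1) = 1) ∧ σ c ≠ 1 := by
  obtain ⟨A, _, σ, hσ, hconj⟩ := exists_subring_finiteType_monoidHom ρ hs hgen hρ
  have hσc : σ c ≠ 1 := fun h => hc (by rw [← hσ, MonoidHom.comp_apply, h, map_one])
  obtain ⟨k, l, hkl⟩ : ∃ k l, σ c k l - (1 : Matrix n n A) k l ≠ 0 := by
    by_contra! h
    exact hσc (Units.ext (Matrix.ext fun k l => sub_eq_zero.mp (h k l)))
  obtain ⟨L, hfield, hnumberField, b, hb⟩ :=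
    exists_numberField_forall_ringHom_zmod_apply_ne_zero hkl
  refine ⟨L, hfield, hnumberField, b, fun p hp hbp => ?_⟩
  have := Fact.mk hp.1
  obtain ⟨f, hf⟩ := hb p hp hbp
  refine ⟨(GeneralLinearGroup.map f).comp σ, fun g hg => ?_, fun h => hf ?_⟩
  · obtain ⟨P, d, hPd⟩ := hconj g hg
    rw [MonoidHom.comp_apply, hPd, map_mul, map_mul, map_inv, map_diagonalGL, conj_pow,
      diagonalGL_pow_card_sub_one_eq_one, mul_one, mul_inv_cancel]
  · have hentry : f (σ c k l) = (1 : Matrix n n (ZMod p)) k l :=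
      congrArg (fun g : GL n (ZMod p) => g k l) h
    rw [map_sub, hentry, one_apply, one_apply, apply_ite f, map_one, map_zero, sub_self]

theorem exists_numberField_forall_exists_monoidHom_of_isSemisimple.{u} {K : Type u} [Field K]
    [CharZero K] {G : Type*} [Group G] (ρ : G →* GL n K) {s : Set G} (hs : s.Finite)
    (hgen : Subgroup.closure s = ⊤)
    (hρ : ∀ g ∈ s, Module.End.IsSemisimple (toLin' (ρ g : Matrix n n K)))
    {c : G} (hc : ρ c ≠ 1) :
    ∃ (L : Type u) (_ : Field L) (_ : NumberField L) (b : ℕ), ∀ p ∈ degreeOnePrimes L, b < p →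
      ∃ σ : G →* GL n (ZMod p), (∀ g ∈ s, σ g ^ (p - 1) = 1) ∧ σ c ≠ 1 := by
  let j : GL n K →* GL n (AlgebraicClosure K) := GeneralLinearGroup.map (algebraMap K _)
  have hj : Function.Injective j := generalLinearGroup_map_injective (algebraMap K _).injective
  exact exists_numberField_forall_exists_monoidHom (j.comp ρ) hs hgen
    (fun g hg => exists_eq_conj_diagonal (isSemisimple_toLin'_map (hρ g hg)))
    ((map_ne_one_iff j hj).mpr hc)

end Specialization

section Conclusion

theorem exists_not_dvd_natCard_range_of_lt_prod {G : Type*} [Group G] {S : Finset ℕ}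
    (hS : ∀ p ∈ S, p.Prime) {B : S → Type*} [∀ p, Group (B p)] (σ : ∀ p : S, G →* B p)
    [Finite (MonoidHom.pi σ).range] (hlt : Nat.card (MonoidHom.pi σ).range < ∏ p ∈ S, p) :
    ∃ p : S, ¬ (p : ℕ) ∣ Nat.card (σ p).range := by
  by_contra! hdvd
  have hprod : ∏ p ∈ S, p ∣ Nat.card (MonoidHom.pi σ).range := by
    refine Finset.prod_primes_dvd _ (fun p hp => (hS p hp).prime) fun p hp => ?_
    have hrange : (σ ⟨p, hp⟩).range = (MonoidHom.pi σ).range.map (Pi.evalMonoidHom B ⟨p, hp⟩) := by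
      rw [MonoidHom.map_range]
      rfl
    exact (hrange ▸ hdvd ⟨p, hp⟩).trans (Subgroup.card_map_dvd _ _)
  exact hlt.not_ge (Nat.le_of_dvd Nat.card_pos hprod)

variable {K : Type*} [Field K] [CharZero K] {n : Type*} [Fintype n] [DecidableEq n]
  {G : Type*} [Group G]

theorem exists_not_dvd_natCard_range_of_cyclicProduct_eq_univ (ρ : G →* GL n K) {l : List G}
    (hl : cyclicProduct l = Set.univ)
    (hρ : ∀ g ∈ l, Module.End.IsSemisimple (toLin' (ρ g : Matrix n n K)))
    {c : G} (hc : ρ c ≠ 1) :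
    ∃ (p : ℕ) (_ : Fact p.Prime) (σ : G →* GL n (ZMod p)),
      ¬ p ∣ Nat.card σ.range ∧ σ c ≠ 1 := by
  obtain ⟨L, _, _, b, hb⟩ := exists_numberField_forall_exists_monoidHom_of_isSemisimple ρ
    l.finite_toSet (closure_eq_top_of_cyclicProduct_eq_univ hl) hρ hc
  obtain ⟨S, M, hM, hS, hlt⟩ := exists_finset_degreeOnePrimes_pow_lt_prod L l.length b
  choose σ hσ hσc using fun p : S => hb p (hS p p.2).1 (hS p p.2).2.1
  have hσM : ∀ g ∈ l, MonoidHom.pi σ g ^ M = 1 := fun g hg => funext fun p => by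
    obtain ⟨m, rfl⟩ := (hS p p.2).2.2
    change σ p g ^ _ = 1
    rw [pow_mul, hσ p g hg, one_pow]
  obtain ⟨hfinite, hcard⟩ := finite_range_and_natCard_range_le_of_pow_eq_one hl _ hM hσM
  obtain ⟨p, hp⟩ := exists_not_dvd_natCard_range_of_lt_prod (fun p hp => (hS p hp).1.1) σ
    (hcard.trans_lt hlt)
  exact ⟨p, ⟨(hS p p.2).1.1⟩, σ p, hp, hσc p⟩

theorem stmt_2_general (Γ : Subgroup (GL n K)) {l : List Γ} (hl : cyclicProduct l = Set.univ)
    (hss : ∀ g ∈ l, Module.End.IsSemisimple (toLin' (g : GL n K).1)) :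
    Group.FG Γ ∧ IsVirtuallyAbelian Γ := by
  have hfg : Group.FG Γ := fg_of_cyclicProduct_eq_univ hl
  obtain ⟨J, hJ⟩ := jordan_zmod n
  refine ⟨hfg, isVirtuallyAbelian_of_forall_exists_notMem_commutator J fun c hc => ?_⟩
  obtain ⟨p, _, σ, hp, hσc⟩ :=
    exists_not_dvd_natCard_range_of_cyclicProduct_eq_univ Γ.subtype hl hss
      (mt OneMemClass.coe_eq_one.mp hc)
  obtain ⟨H, h0, hle, hker⟩ := (hJ p σ.range hp).exists_commutator_le_ker
  exact ⟨H, h0, hle, fun hmem => hσc (hker hmem)⟩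

end Conclusion

/-- An anisotropic linear group over a field of characteristic zero is boundedly generated
if and only if it is finitely generated and virtually abelian. -/
theorem stmt_2 {K : Type*} [Field K] [CharZero K] {n : ℕ} (hn : 1 ≤ n)
    (Γ : Subgroup (GL (Fin n) K)) (hani : ∀ g ∈ Γ, IsSemisimpleElt g) :
    BoundedGeneration ↥Γ ↔ Group.FG ↥Γ ∧ IsVirtuallyAbelian ↥Γ := by
  refine ⟨fun h => ?_, fun ⟨_, h⟩ => boundedGeneration_of_fg_of_isVirtuallyAbelian h⟩
  obtain ⟨l, hl⟩ := boundedGeneration_iff_exists_cyclicProduct_eq_univ.mp h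
  exact stmt_2_general Γ hl fun g _ => hani g g.2
end

section
/- Let R be a finitely generated ℚ-algebra that is an integral domain, with field of fractions L, and let n ≥ 1. Let Γ be a subgroup of GL_n(R) that is not virtually solvable, and let γ₁, …, γ_r ∈ Γ be elements that are semi-simple when regarded as elements of GL_n(L). Then there exists a number field F and a ℚ-algebra homomorphism θ : R → F such that for the induced group homomorphism Θ : GL_n(R) → GL_n(F), the image Θ(Γ) is not virtually solvable and each of the elements Θ(γ₁), …, Θ(γ_r) is semi-simple. -/
open Matrix

/-- A group is virtually solvable if it has a solvable subgroup of finite index. -/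
def IsVirtuallySolvable (G : Type*) [Group G] : Prop :=
  ∃ H : Subgroup G, H.FiniteIndex ∧ IsSolvable ↥H

/-!
For a group `Γ` of matrices over a domain of characteristic zero, virtual solvability is detected by
traces of products. If `Γ` is virtually solvable, then for a suitable exponent `M` the subgroup
generated by the `M`-th powers of its elements is simultaneously triangularisable, so that
`tr (a * b * c) = tr (b * a * c)` on it. Conversely, these identities for a single `M ≠ 0` force `Γ`
to be virtually solvable. The exponent depends only on the size of the matrices and the degree of
the number field containing their entries: it has to kill the roots of unity occurring as ratios of
eigenvalues.

By Noether normalisation, `R` has specialisations into number fields of bounded degree at which any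
given `f ≠ 0` does not vanish, so one exponent `M` serves all of them. Take for `f` a nonzero
difference `tr (a * b * c) - tr (b * a * c)` over `R`, multiplied by the denominators of Bézout
identities expressing separability of the minimal polynomials of the given semisimple matrices.
-/

/-- A representation is strongly irreducible if no subgroup of finite index stabilises a proper
nonzero subspace. The zero representation is allowed. -/
def IsStronglyIrreducible {K G V : Type*} [Field K] [Group G] [AddCommGroup V] [Module K V]
    (ρ : Representation K G V) : Prop :=
  ∀ N : Subgroup G, N.FiniteIndex → ∀ W : Submodule K V,
    (∀ g ∈ N, W ≤ W.comap (ρ g)) → W = ⊥ ∨ W = ⊤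

/-- McCoy's condition on the algebra spanned by the image of a representation: every multiple of a
commutator is nilpotent. For finite-dimensional representations over an algebraically closed field
it characterises simultaneous triangularisability. -/
def HasNilCommutators {K G V : Type*} [Field K] [Group G] [AddCommGroup V] [Module K V]
    (ρ : Representation K G V) : Prop :=
  ∀ x y z : MonoidAlgebra K G, IsNilpotent (ρ.asAlgebraHom (z * (x * y - y * x)))

/-- The kernel of the representation contains a term of the derived series of the group; that is,
the image of the group is solvable. -/
def HasSolvableImage {K G V : Type*} [Field K] [Group G] [AddCommGroup V] [Module K V]
    (ρ : Representation K G V) : Prop :=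
  ∃ k, derivedSeries G k ≤ MonoidHom.ker ρ

/-- The subgroup generated by the `M`-th powers. -/
def powSubgroup (G : Type*) [Group G] (M : ℕ) : Subgroup G :=
  Subgroup.closure (Set.range fun g : G ↦ g ^ M)

/-- An exponent `M` that makes `M`-th powers of `n × n` matrices over number fields of degree at
most `D` neat: any two eigenvalues of a matrix whose ratio is a root of unity have the same `M`-th
power, because that ratio lies in a number field of degree at most `D * n ^ 2`. -/
def neatExponent (D n : ℕ) : ℕ :=
  (2 * (D * n ^ 2)).factorial

/-- The representation of `GL n R` on `n → K` obtained by extending scalars along `φ : R →+* K`. -/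
def glRep {n R K : Type*} [Fintype n] [DecidableEq n] [CommRing R] [Field K] (φ : R →+* K) :
    Representation K (GL n R) (n → K) :=
  (Units.coeHom _).comp
    (Matrix.GeneralLinearGroup.toLin.toMonoidHom.comp (Matrix.GeneralLinearGroup.map φ))

theorem finiteIndex_of_finite_range {G X : Type*} [Group G] {N : Subgroup G} (f : G → X)
    (hf : (Set.range f).Finite) (hN : ∀ a b, f a = f b → a⁻¹ * b ∈ N) : N.FiniteIndex := by
  have : Finite (Set.range f) := hf
  have : Finite (G ⧸ N) := by
    refine .of_injective (fun q ↦ (⟨f q.out, q.out, rfl⟩ : Set.range f)) fun p q hpq ↦ ?_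
    simpa using QuotientGroup.eq.2 (hN _ _ (Subtype.ext_iff.1 hpq))
  exact Subgroup.finiteIndex_of_finite_quotient

theorem finiteIndex_map_subtype {G : Type*} [Group G] {N : Subgroup G} (P : Subgroup N)
    [N.FiniteIndex] [P.FiniteIndex] : (P.map N.subtype).FiniteIndex := by
  constructor
  rw [Subgroup.index_map_subtype]
  exact mul_ne_zero Subgroup.FiniteIndex.index_ne_zero Subgroup.FiniteIndex.index_ne_zero

section StronglyIrreducible

variable {K G V : Type*} [Field K] [Group G] [AddCommGroup V] [Module K V]

theorem map_eigenspace_representation (ρ : Representation K G V) (g b : G) (c : K) :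
    (Module.End.eigenspace (ρ b) c).map (ρ g) = Module.End.eigenspace (ρ (g * b * g⁻¹)) c := by
  ext v
  simp only [Submodule.mem_map, Module.End.mem_eigenspace_iff, map_mul, Module.End.mul_apply]
  constructor
  · rintro ⟨w, hw, rfl⟩
    rw [ρ.inv_self_apply, hw, map_smul]
  · intro hv
    refine ⟨ρ g⁻¹ v, ?_, ρ.self_inv_apply g v⟩
    rw [← map_smul, ← hv, ρ.inv_self_apply]

theorem IsStronglyIrreducible.eq_bot_or_eq_top_of_finite_orbit {ρ : Representation K G V}
    (hρ : IsStronglyIrreducible ρ) {W : Submodule K V}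
    (hW : (Set.range fun g ↦ W.map (ρ g)).Finite) : W = ⊥ ∨ W = ⊤ := by
  have map_mul_eq (a b : G) : W.map (ρ (a * b)) = (W.map (ρ b)).map (ρ a) := by
    rw [map_mul, Module.End.mul_eq_comp, Submodule.map_comp]
  have map_inv_eq {a : G} {U : Submodule K V} (h : U = W.map (ρ a)) : U.map (ρ a⁻¹) = W := by
    rw [h, ← map_mul_eq, inv_mul_cancel, map_one, Module.End.one_eq_id, Submodule.map_id]
  let stab : Subgroup G :=
    { carrier := {g | W.map (ρ g) = W}
      one_mem' := by simp [Module.End.one_eq_id]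
      mul_mem' {a b} ha hb := ((map_mul_eq a b).trans (congrArg _ hb)).trans ha
      inv_mem' ha := map_inv_eq ha.symm }
  have stab_finiteIndex : stab.FiniteIndex :=
    finiteIndex_of_finite_range _ hW fun a b hab ↦
      (map_mul_eq a⁻¹ b).trans (map_inv_eq hab.symm)
  exact hρ stab stab_finiteIndex W fun g hg ↦ Submodule.map_le_iff_le_comap.1 (le_of_eq hg)

theorem IsStronglyIrreducible.exists_eq_smul_one_of_finite_conj [IsAlgClosed K]
    [FiniteDimensional K V] {ρ : Representation K G V} (hρ : IsStronglyIrreducible ρ) {b : G}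
    (hb : (Set.range fun g ↦ ρ (g * b * g⁻¹)).Finite) : ∃ c : K, ρ b = c • 1 := by
  rcases subsingleton_or_nontrivial V with hV | hV
  · exact ⟨0, Subsingleton.elim _ _⟩
  obtain ⟨c, hc⟩ := Module.End.exists_eigenvalue (ρ b)
  have orbit_finite : (Set.range fun g ↦ (Module.End.eigenspace (ρ b) c).map (ρ g)).Finite := by
    simp_rw [map_eigenspace_representation]
    rw [← Set.image_univ] at hb ⊢
    exact (hb.image (Module.End.eigenspace · c)).subset (by rw [Set.image_image])
  have htop := (hρ.eq_bot_or_eq_top_of_finite_orbit orbit_finite).resolve_left hc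
  refine ⟨c, LinearMap.ext fun v ↦ ?_⟩
  exact Module.End.mem_eigenspace_iff.1 (htop.symm ▸ Submodule.mem_top)

theorem coe_asAlgebraHom_subrepresentation_apply (ρ : Representation K G V) (W : Submodule K V)
    (hW : ∀ g, W ≤ W.comap (ρ g)) (x : MonoidAlgebra K G) (w : W) :
    ((ρ.subrepresentation W hW).asAlgebraHom x w : V) = ρ.asAlgebraHom x w := by
  induction x using MonoidAlgebra.induction_linear with
  | zero => simp
  | add x y hx hy => simp [hx, hy]
  | single g c => simp

theorem asAlgebraHom_quotient_mk (ρ : Representation K G V) (W : Submodule K V)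
    (hW : ∀ g, W ≤ W.comap (ρ g)) (x : MonoidAlgebra K G) (v : V) :
    (ρ.quotient W hW).asAlgebraHom x (Submodule.Quotient.mk v) =
      Submodule.Quotient.mk (ρ.asAlgebraHom x v) := by
  induction x using MonoidAlgebra.induction_linear with
  | zero => simp
  | add x y hx hy => simp [hx, hy]
  | single g c => simp

theorem apply_mem_range_asAlgebraHom (ρ : Representation K G V) (g : G) :
    ρ g ∈ ρ.asAlgebraHom.range :=
  ⟨MonoidAlgebra.single g 1, ρ.asAlgebraHom_single_one g⟩

namespace HasNilCommutators

variable {ρ : Representation K G V}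

theorem of_mem_range {H : Type*} [Group H] {σ : Representation K H V} (hρ : HasNilCommutators ρ)
    (hσ : ∀ h, σ h ∈ ρ.asAlgebraHom.range) : HasNilCommutators σ := by
  have asAlgebraHom_mem (x : MonoidAlgebra K H) : ∃ x', ρ.asAlgebraHom x' = σ.asAlgebraHom x := by
    change σ.asAlgebraHom x ∈ ρ.asAlgebraHom.range
    induction x using MonoidAlgebra.induction_linear with
    | zero => simp
    | add x y hx hy => simpa using add_mem hx hy
    | single h c => simpa using Subalgebra.smul_mem _ (hσ h) c
  intro x y z
  obtain ⟨x', hx⟩ := asAlgebraHom_mem x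
  obtain ⟨y', hy⟩ := asAlgebraHom_mem y
  obtain ⟨z', hz⟩ := asAlgebraHom_mem z
  simpa only [map_mul, map_sub, hx, hy, hz] using hρ x' y' z'

theorem of_commute (hρ : ∀ a b, Commute (ρ a) (ρ b)) : HasNilCommutators ρ := by
  have commute_single (x : MonoidAlgebra K G) (g : G) : Commute (ρ.asAlgebraHom x) (ρ g) := by
    induction x using MonoidAlgebra.induction_linear with
    | zero => simp
    | add x y hx hy => simpa using hx.add_left hy
    | single h c => simpa using (hρ h g).smul_left c
  have commute (x y : MonoidAlgebra K G) : Commute (ρ.asAlgebraHom x) (ρ.asAlgebraHom y) := by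
    induction y using MonoidAlgebra.induction_linear with
    | zero => simp
    | add y z hy hz => simpa using hy.add_right hz
    | single h c => simpa using (commute_single x h).smul_right c
  intro x y z
  simp [(commute x y).eq]

theorem subrepresentation (hρ : HasNilCommutators ρ) (W : Submodule K V)
    (hW : ∀ g, W ≤ W.comap (ρ g)) : HasNilCommutators (ρ.subrepresentation W hW) := by
  intro x y z
  obtain ⟨k, hk⟩ := hρ x y z
  refine ⟨k, ?_⟩
  rw [← map_pow] at hk ⊢
  ext w
  rw [coe_asAlgebraHom_subrepresentation_apply, hk]
  rfl

theorem quotient (hρ : HasNilCommutators ρ) (W : Submodule K V)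
    (hW : ∀ g, W ≤ W.comap (ρ g)) : HasNilCommutators (ρ.quotient W hW) := by
  intro x y z
  obtain ⟨k, hk⟩ := hρ x y z
  refine ⟨k, ?_⟩
  rw [← map_pow] at hk ⊢
  ext v
  change (ρ.quotient W hW).asAlgebraHom _ (Submodule.Quotient.mk v) = 0
  rw [asAlgebraHom_quotient_mk, hk]
  rfl

theorem of_extension {W : Submodule K V} (hW : ∀ g, W ≤ W.comap (ρ g))
    (hsub : HasNilCommutators (ρ.subrepresentation W hW))
    (hquot : HasNilCommutators (ρ.quotient W hW)) : HasNilCommutators ρ := by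
  intro x y z
  obtain ⟨k, hk⟩ := hsub x y z
  obtain ⟨l, hl⟩ := hquot x y z
  refine ⟨k + l, ?_⟩
  rw [← map_pow] at hk hl ⊢
  ext v
  set u := z * (x * y - y * x)
  have hmem : ρ.asAlgebraHom (u ^ l) v ∈ W := by
    rw [← Submodule.Quotient.mk_eq_zero, ← asAlgebraHom_quotient_mk ρ W hW, hl]
    rfl
  rw [pow_add, map_mul, Module.End.mul_apply]
  simpa [hk] using (coe_asAlgebraHom_subrepresentation_apply ρ W hW (u ^ k) ⟨_, hmem⟩).symm

-- If a commutator moved `w` to some `u ≠ 0`, minimality would give `w = z u`, so that `z` times the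
-- commutator, which is nilpotent, would fix `w`.
theorem commute_apply_of_minimal (hρ : HasNilCommutators ρ) {W : Submodule K V}
    (hW : Minimal (fun U ↦ U ≠ ⊥ ∧ ∀ g, U ≤ U.comap (ρ g)) W) {w : V} (hw : w ∈ W) (a b : G) :
    ρ a (ρ b w) = ρ b (ρ a w) := by
  let u := (ρ a * ρ b - ρ b * ρ a) w
  have hnil (z : MonoidAlgebra K G) :
      IsNilpotent (ρ.asAlgebraHom z * (ρ a * ρ b - ρ b * ρ a)) := by
    simpa using hρ (MonoidAlgebra.single a 1) (MonoidAlgebra.single b 1) z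
  by_contra hne
  let U : Submodule K V := LinearMap.range ((LinearMap.applyₗ u).comp ρ.asAlgebraHom.toLinearMap)
  have mem_U (z : MonoidAlgebra K G) : ρ.asAlgebraHom z u ∈ U := ⟨z, rfl⟩
  have hU : U ≠ ⊥ ∧ ∀ g, U ≤ U.comap (ρ g) := by
    refine ⟨(Submodule.ne_bot_iff _).2 ⟨u, by simpa using mem_U 1, sub_ne_zero.2 hne⟩, ?_⟩
    rintro g _ ⟨z, rfl⟩
    have hgz := mem_U (MonoidAlgebra.single g 1 * z)
    rwa [map_mul, ρ.asAlgebraHom_single_one] at hgz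
  have hUW : U ≤ W := by
    rintro _ ⟨z, rfl⟩
    have hu_mem : u ∈ W :=
      sub_mem (hW.prop.2 a (hW.prop.2 b hw)) (hW.prop.2 b (hW.prop.2 a hw))
    exact coe_asAlgebraHom_subrepresentation_apply ρ W hW.prop.2 z ⟨u, hu_mem⟩ ▸
      Subtype.coe_prop _
  obtain ⟨z, hz⟩ : w ∈ U := hW.le_of_le hU hUW hw
  obtain ⟨k, hk⟩ := hnil z
  have hw0 : w = 0 := by
    have hfix := Function.iterate_fixed (f := ρ.asAlgebraHom z * (ρ a * ρ b - ρ b * ρ a)) hz k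
    rw [← Module.End.pow_apply, hk] at hfix
    exact hfix.symm
  exact hne (by simp [hw0])

theorem exists_iInf_eigenspace_ne_bot [IsAlgClosed K] [FiniteDimensional K V] [Nontrivial V]
    (hρ : HasNilCommutators ρ) :
    ∃ χ : G → K, ⨅ g, Module.End.eigenspace (ρ g) (χ g) ≠ ⊥ := by
  obtain ⟨W, hW⟩ := exists_minimal_of_wellFoundedLT
    (fun U : Submodule K V ↦ U ≠ ⊥ ∧ ∀ g, U ≤ U.comap (ρ g)) ⟨⊤, top_ne_bot, by simp⟩
  have : Nontrivial W := Submodule.nontrivial_iff_ne_bot.2 hW.prop.1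
  have exists_le_eigenspace (g : G) : ∃ c, W ≤ Module.End.eigenspace (ρ g) c := by
    obtain ⟨c, hc⟩ := Module.End.exists_eigenvalue ((ρ g).restrict (hW.prop.2 g))
    obtain ⟨w, hw, hw0⟩ := hc.exists_hasEigenvector
    refine ⟨c, inf_eq_left.1 ((inf_le_left).antisymm (hW.le_of_le ⟨?_, ?_⟩ inf_le_left))⟩
    · refine (Submodule.ne_bot_iff _).2 ⟨w, ⟨w.2, ?_⟩, by simpa using hw0⟩
      exact Module.End.mem_eigenspace_iff.2
        (congrArg Subtype.val (Module.End.mem_eigenspace_iff.1 hw))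
    · rintro h v ⟨hv, hvc⟩
      refine ⟨hW.prop.2 h hv, ?_⟩
      rw [SetLike.mem_coe, Module.End.mem_eigenspace_iff] at hvc ⊢
      rw [hρ.commute_apply_of_minimal hW hv, hvc, map_smul]
  choose χ hχ using exists_le_eigenspace
  exact ⟨χ, ne_bot_of_le_ne_bot hW.prop.1 (le_iInf hχ)⟩

end HasNilCommutators

theorem map_iInf_eigenspace_of_normal (ρ : Representation K G V) (P : Subgroup G) [P.Normal]
    (χ : P → K) (g : G) :
    (⨅ p : P, Module.End.eigenspace (ρ p) (χ p)).map (ρ g) =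
      ⨅ p : P, Module.End.eigenspace (ρ p) (χ ((MulAut.conjNormal g)⁻¹ p)) := by
  rw [Submodule.map_iInf _ (ρ.apply_bijective g).injective]
  simp only [map_eigenspace_representation]
  exact (MulAut.conjNormal g).toEquiv.iInf_congr fun p ↦ by simp

section Scalars

variable [IsAlgClosed K] [FiniteDimensional K V] {ρ : Representation K G V}

theorem IsStronglyIrreducible.commute_of_hasNilCommutators (hρ : IsStronglyIrreducible ρ)
    {P : Subgroup G} [hP : P.Normal] (hnil : HasNilCommutators (ρ.comp P.subtype)) (a b : P) :
    Commute (ρ a) (ρ b) := by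
  rcases subsingleton_or_nontrivial V with hV | hV
  · exact Subsingleton.elim _ _
  let W : Submodule K V := ⨅ p : P × P, LinearMap.ker (ρ p.1 * ρ p.2 - ρ p.2 * ρ p.1)
  have mem_W {v : V} : v ∈ W ↔ ∀ p q : P, ρ p (ρ q v) = ρ q (ρ p v) := by
    simp [W, sub_eq_zero]
  have W_stable (g : G) : W ≤ W.comap (ρ g) := by
    intro v hv
    refine mem_W.2 fun p q ↦ ?_
    have push (p : P) (v : V) : ρ p (ρ g v) = ρ g (ρ ((MulAut.conjNormal g)⁻¹ p : P) v) := by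
      simp [← Module.End.mul_apply, ← map_mul, mul_assoc]
    rw [push, push, push, push, mem_W.1 hv]
  obtain ⟨χ, hχ⟩ := hnil.exists_iInf_eigenspace_ne_bot
  have W_ne_bot : W ≠ ⊥ := by
    refine ne_bot_of_le_ne_bot hχ fun v hv ↦ mem_W.2 fun p q ↦ ?_
    have heigen (p : P) : ρ p v = χ p • v :=
      Module.End.mem_eigenspace_iff.1 ((Submodule.mem_iInf _).1 hv p)
    simp only [heigen, map_smul, smul_comm (χ p)]
  have W_eq_top := (hρ ⊤ inferInstance W fun g _ ↦ W_stable g).resolve_left W_ne_bot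
  exact LinearMap.ext fun v ↦ mem_W.1 (W_eq_top ▸ Submodule.mem_top) a b

-- The weight spaces of `P` are linearly independent, hence finite in number, and are permuted by
-- the whole group.
theorem IsStronglyIrreducible.exists_eq_smul_one_of_hasNilCommutators
    (hρ : IsStronglyIrreducible ρ) {P : Subgroup G} [P.Normal]
    (hnil : HasNilCommutators (ρ.comp P.subtype)) {p : G} (hp : p ∈ P) : ∃ c : K, ρ p = c • 1 := by
  rcases subsingleton_or_nontrivial V with hV | hV
  · exact ⟨0, Subsingleton.elim _ _⟩
  let weightSpace (χ : P → K) : Submodule K V := ⨅ p : P, Module.End.eigenspace (ρ p) (χ p)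
  have weightSpaces_independent : iSupIndep weightSpace := by
    refine (Module.End.independent_iInf_maxGenEigenspace_of_forall_mapsTo
      (fun p : P ↦ ρ p) fun p q c ↦ ?_).mono fun χ ↦
        iInf_mono fun _ ↦ Module.End.eigenspace_le_maxGenEigenspace
    exact Module.End.mapsTo_maxGenEigenspace_of_comm (hρ.commute_of_hasNilCommutators hnil q p) c
  obtain ⟨χ, hχ⟩ := hnil.exists_iInf_eigenspace_ne_bot
  have orbit_finite : (Set.range fun g ↦ (weightSpace χ).map (ρ g)).Finite := by
    refine ((Submodule.finite_ne_bot_of_iSupIndep weightSpaces_independent).image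
      weightSpace).subset ?_
    rintro _ ⟨g, rfl⟩
    have map_weightSpace := map_iInf_eigenspace_of_normal ρ P χ g
    exact ⟨_, fun h ↦ hχ (Submodule.map_injective_of_injective (ρ.apply_bijective g).injective
      (map_weightSpace.trans (h.trans (Submodule.map_bot _).symm))), map_weightSpace.symm⟩
  have weightSpace_eq_top :=
    (hρ.eq_bot_or_eq_top_of_finite_orbit orbit_finite).resolve_left hχ
  refine ⟨χ ⟨p, hp⟩, LinearMap.ext fun v ↦ Module.End.mem_eigenspace_iff.1 ?_⟩
  exact (Submodule.mem_iInf _).1 (weightSpace_eq_top.symm ▸ Submodule.mem_top) ⟨p, hp⟩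

end Scalars

theorem finite_setOf_det_eq_and_eq_smul [FiniteDimensional K V] {e : Module.End K V}
    (he : IsUnit e) (d : K) : {y | LinearMap.det y = d ∧ ∃ c : K, y = c • e}.Finite := by
  classical
  rcases subsingleton_or_nontrivial V with hV | hV
  · exact Set.toFinite _
  have hdet : LinearMap.det e ≠ 0 := (he.map LinearMap.det).ne_zero
  refine ((Polynomial.nthRoots (Module.finrank K V)
    (d / LinearMap.det e)).toFinset.finite_toSet.image (· • e)).subset ?_
  rintro _ ⟨hd, c, rfl⟩
  refine ⟨c, ?_, rfl⟩
  rw [LinearMap.det_smul] at hd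
  rw [SetLike.mem_coe, Multiset.mem_toFinset, Polynomial.mem_nthRoots Module.finrank_pos, ← hd,
    mul_div_cancel_right₀ _ hdet]

theorem det_representation_conj (ρ : Representation K G V) (g b : G) :
    LinearMap.det (ρ (g * b * g⁻¹)) = LinearMap.det (ρ b) := by
  rw [← MonoidHom.comp_apply, ← MonoidHom.comp_apply, map_mul, mul_comm, ← map_mul,
    inv_mul_cancel_left]

/-- The elements of `B` whose image under `ρ` is central in the image of `B`. -/
def preimageCenter (ρ : Representation K G V) (B : Subgroup G) : Subgroup G :=
  B ⊓ (Subgroup.centralizer (B.map ρ.asGroupHom.rangeRestrict)).comap ρ.asGroupHom.rangeRestrict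

theorem mem_preimageCenter {ρ : Representation K G V} {B : Subgroup G} {z : G} :
    z ∈ preimageCenter ρ B ↔ z ∈ B ∧ ∀ b ∈ B, Commute (ρ b) (ρ z) := by
  refine and_congr_right fun _ ↦ ⟨fun hz b hb ↦ ?_, fun hz ↦ Subgroup.mem_centralizer_iff.2 ?_⟩
  · have := Subgroup.mem_centralizer_iff.1 hz _ (Subgroup.mem_map_of_mem _ hb)
    exact congrArg (fun u : ρ.asGroupHom.range ↦ ((u : (Module.End K V)ˣ) : Module.End K V)) this
  · rintro _ ⟨b, hb, rfl⟩
    exact Subtype.ext (Units.ext (hz b hb))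

theorem preimageCenter_normal (ρ : Representation K G V) (B : Subgroup G) [B.Normal] :
    (preimageCenter ρ B).Normal := by
  have := ‹B.Normal›.map ρ.asGroupHom.rangeRestrict ρ.asGroupHom.rangeRestrict_surjective
  unfold preimageCenter
  infer_instance

theorem finite_range_conj_of_commutator_eq_smul_one [FiniteDimensional K V]
    (ρ : Representation K G V) {B : Subgroup G} {b : G}
    (hb : ∀ a ∈ B, ∃ c : K, ρ (a * b * a⁻¹ * b⁻¹) = c • 1) :
    (Set.range fun a : B ↦ ρ (a * b * (a : G)⁻¹)).Finite := by
  refine (finite_setOf_det_eq_and_eq_smul ((Group.isUnit b).map ρ) (LinearMap.det (ρ b))).subset ?_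
  rintro _ ⟨a, rfl⟩
  obtain ⟨c, hc⟩ := hb a a.2
  refine ⟨det_representation_conj ρ a b, c, ?_⟩
  calc ρ (a * b * (a : G)⁻¹) = ρ (a * b * (a : G)⁻¹ * b⁻¹) * ρ b := by
        rw [← map_mul, inv_mul_cancel_right]
    _ = c • ρ b := by rw [hc, smul_one_mul]

-- Conjugation by `a` on the image of `B` is determined by its effect on a finite spanning set.
theorem finiteIndex_preimageCenter [FiniteDimensional K V] {ρ : Representation K G V}
    {B : Subgroup G} (hB : ∀ b ∈ B, (Set.range fun a : B ↦ ρ (a * b * (a : G)⁻¹)).Finite) :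
    ((preimageCenter ρ B).subgroupOf B).FiniteIndex := by
  obtain ⟨f, hfB, hf_span, -⟩ := Submodule.exists_fun_fin_finrank_span_eq K (ρ '' B)
  choose t htB htf using hfB
  refine finiteIndex_of_finite_range (fun a : B ↦ fun i ↦ ρ (a * t i * (a : G)⁻¹))
    ((Set.Finite.pi' fun i ↦ hB (t i) (htB i)).subset ?_) fun a a' haa' ↦ ?_
  · rintro _ ⟨a, rfl⟩ i
    exact ⟨a, rfl⟩
  rw [Subgroup.mem_subgroupOf, mem_preimageCenter]
  refine ⟨(a⁻¹ * a').2, fun b hb ↦ ?_⟩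
  have hspan : ρ b ∈ Submodule.span K (Set.range f) :=
    hf_span.ge (Submodule.subset_span ⟨b, hb, rfl⟩)
  have commute_of_mem_span (x : Module.End K V) (hx : x ∈ Submodule.span K (Set.range f)) :
      Commute x (ρ (a⁻¹ * a' : B)) := by
    induction hx using Submodule.span_induction with
    | mem x hx =>
      obtain ⟨i, rfl⟩ := hx
      have hconj : ρ (a * t i * (a : G)⁻¹) = ρ (a' * t i * (a' : G)⁻¹) := congrFun haa' i
      have := congrArg (ρ (a : G)⁻¹ * · * ρ a') hconj
      simp only [← map_mul, mul_assoc, inv_mul_cancel_left, inv_mul_cancel, mul_one] at this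
      rw [← htf, Commute, SemiconjBy, ← map_mul, ← map_mul]
      simpa [mul_assoc] using this
    | zero => exact Commute.zero_left _
    | add x y _ _ hx hy => exact hx.add_left hy
    | smul c x _ hx => exact hx.smul_left c
  exact commute_of_mem_span _ hspan

theorem IsStronglyIrreducible.exists_eq_smul_one_of_commutators [IsAlgClosed K]
    [FiniteDimensional K V] {ρ : Representation K G V} (hρ : IsStronglyIrreducible ρ)
    {B : Subgroup G} [hB : B.Normal]
    (hcomm : ∀ a ∈ B, ∀ b ∈ B, ∃ c : K, ρ (a * b * a⁻¹ * b⁻¹) = c • 1) {b : G} (hb : b ∈ B) :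
    ∃ c : K, ρ b = c • 1 := by
  have := preimageCenter_normal ρ B
  have scalar_of_mem {z : G} (hz : z ∈ preimageCenter ρ B) : ∃ c : K, ρ z = c • 1 :=
    hρ.exists_eq_smul_one_of_hasNilCommutators (.of_commute fun x y ↦
      (mem_preimageCenter.1 y.2).2 x (mem_preimageCenter.1 x.2).1) hz
  have := finiteIndex_preimageCenter fun b hb ↦
    finite_range_conj_of_commutator_eq_smul_one ρ fun a ha ↦ hcomm a ha b hb
  refine hρ.exists_eq_smul_one_of_finite_conj ((Set.finite_iUnion
    fun q : B ⧸ (preimageCenter ρ B).subgroupOf B ↦ finite_setOf_det_eq_and_eq_smul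
      ((Group.isUnit (q.out : G)).map ρ) (LinearMap.det (ρ b))).subset ?_)
  rintro _ ⟨g, rfl⟩
  let x : B := ⟨g * b * g⁻¹, hB.conj_mem b hb g⟩
  obtain ⟨z, hz⟩ := QuotientGroup.mk_out_eq_mul ((preimageCenter ρ B).subgroupOf B) x
  obtain ⟨c, hc⟩ : ∃ c : K, ρ (z : B)⁻¹ = c • 1 := scalar_of_mem (inv_mem z.2)
  refine Set.mem_iUnion.2 ⟨x, det_representation_conj ρ g b, c, ?_⟩
  rw [hz]
  calc ρ x = ρ (x * z : B) * ρ (z : B)⁻¹ := by rw [← map_mul]; simp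
    _ = c • ρ (x * z : B) := by rw [hc, mul_smul_one]

theorem IsStronglyIrreducible.exists_eq_smul_one_of_isSolvable [IsAlgClosed K]
    [FiniteDimensional K V] {ρ : Representation K G V} (hρ : IsStronglyIrreducible ρ)
    [hG : Group.IsSolvable G] (g : G) : ∃ c : K, ρ g = c • 1 := by
  obtain ⟨n, hn⟩ := hG.solvable
  have scalar_of_derivedSeries (k : ℕ) :
      (∀ g ∈ derivedSeries G k, ∃ c : K, ρ g = c • 1) → ∀ g, ∃ c : K, ρ g = c • 1 := by
    induction k with
    | zero => exact fun h g ↦ h g (Subgroup.mem_top g)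
    | succ k ih =>
      exact fun h ↦ ih fun b hb ↦ hρ.exists_eq_smul_one_of_commutators (fun a ha b hb ↦
        h _ (Subgroup.commutator_mem_commutator ha hb)) hb
  refine scalar_of_derivedSeries n (fun g hg ↦ ⟨1, ?_⟩) g
  rw [hn, Subgroup.mem_bot] at hg
  simp [hg]

end StronglyIrreducible

universe u v w

theorem representation_induction {K : Type u} [Field K]
    {motive : ∀ {G : Type v} {V : Type w} [Group G] [AddCommGroup V] [Module K V]
      [FiniteDimensional K V], Representation K G V → Prop}
    (of_isStronglyIrreducible : ∀ {G : Type v} {V : Type w} [Group G] [AddCommGroup V] [Module K V]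
      [FiniteDimensional K V] (ρ : Representation K G V), IsStronglyIrreducible ρ → motive ρ)
    (of_finiteIndex : ∀ {G : Type v} {V : Type w} [Group G] [AddCommGroup V] [Module K V]
      [FiniteDimensional K V] (ρ : Representation K G V) (N : Subgroup G) [N.FiniteIndex],
      motive (ρ.comp N.subtype) → motive ρ)
    (of_extension : ∀ {G : Type v} {V : Type w} [Group G] [AddCommGroup V] [Module K V]
      [FiniteDimensional K V] (ρ : Representation K G V) (W : Submodule K V)
      (hW : ∀ g, W ≤ W.comap (ρ g)),
      motive (ρ.subrepresentation W hW) → motive (ρ.quotient W hW) → motive ρ)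
    {G : Type v} {V : Type w} [Group G] [AddCommGroup V] [Module K V] [FiniteDimensional K V]
    (ρ : Representation K G V) : motive ρ := by
  induction hn : Module.finrank K V using Nat.strong_induction_on generalizing G V with
  | _ n ih =>
  by_cases hρ : IsStronglyIrreducible ρ
  · exact of_isStronglyIrreducible ρ hρ
  simp only [IsStronglyIrreducible, not_forall, not_or] at hρ
  obtain ⟨N, hN, W, hW, hbot, htop⟩ := hρ
  have finrank_lt : Module.finrank K W < n := hn ▸ Submodule.finrank_lt htop
  have finrank_quotient_lt : Module.finrank K (V ⧸ W) < n := by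
    have := Submodule.finrank_quotient_add_finrank W
    have := Submodule.one_le_finrank_iff.2 hbot
    lia
  exact of_finiteIndex ρ N (of_extension _ W (fun g ↦ hW g g.2) (ih _ finrank_lt _ rfl)
    (ih _ finrank_quotient_lt _ rfl))

section Solvable

variable {K : Type u} [Field K] [IsAlgClosed K] {G : Type v} {V : Type w} [Group G]
  [AddCommGroup V] [Module K V] [FiniteDimensional K V]

theorem exists_finiteIndex_hasNilCommutators [Group.IsSolvable G] (ρ : Representation K G V) :
    ∃ N : Subgroup G, N.FiniteIndex ∧ HasNilCommutators (ρ.comp N.subtype) := by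
  suffices Group.IsSolvable G →
      ∃ N : Subgroup G, N.FiniteIndex ∧ HasNilCommutators (ρ.comp N.subtype) from this ‹_›
  apply representation_induction (ρ := ρ)
  case of_isStronglyIrreducible =>
    intro G V _ _ _ _ ρ hρ _
    refine ⟨⊤, inferInstance, .of_commute fun a b ↦ ?_⟩
    obtain ⟨c, hc⟩ := hρ.exists_eq_smul_one_of_isSolvable (a : G)
    change Commute (ρ a) (ρ b)
    rw [hc]
    exact (Commute.one_left _).smul_left c
  case of_finiteIndex =>
    intro G V _ _ _ _ ρ N _ ih _
    obtain ⟨P, hP, hnil⟩ := ih inferInstance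
    refine ⟨P.map N.subtype, finiteIndex_map_subtype P, hnil.of_mem_range ?_⟩
    rintro ⟨_, p, hp, rfl⟩
    exact apply_mem_range_asAlgebraHom (MonoidHom.comp _ P.subtype) ⟨p, hp⟩
  case of_extension =>
    intro G V _ _ _ _ ρ W hW ihW ihQ hG
    obtain ⟨N₁, hN₁, hnil₁⟩ := ihW hG
    obtain ⟨N₂, hN₂, hnil₂⟩ := ihQ hG
    refine ⟨N₁ ⊓ N₂, inferInstance, .of_extension (W := W) (fun g ↦ hW g)
      (hnil₁.of_mem_range fun g ↦ ?_) (hnil₂.of_mem_range fun g ↦ ?_)⟩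
    · exact apply_mem_range_asAlgebraHom (MonoidHom.comp _ N₁.subtype) ⟨g, g.2.1⟩
    · exact apply_mem_range_asAlgebraHom (MonoidHom.comp _ N₂.subtype) ⟨g, g.2.2⟩

theorem hasNilCommutators_powSubgroup_of_isSolvable (ρ : Representation K G V) {M : ℕ}
    (hM : ∀ g, ∀ k ≠ 0, ρ (g ^ M) ∈ Algebra.adjoin K {ρ (g ^ M) ^ k})
    (N : Subgroup G) [N.FiniteIndex] [Group.IsSolvable N] :
    HasNilCommutators (ρ.comp (powSubgroup G M).subtype) := by
  obtain ⟨P, hP, hnil⟩ := exists_finiteIndex_hasNilCommutators (ρ.comp N.subtype)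
  have := finiteIndex_map_subtype P
  set A := Representation.asAlgebraHom (MonoidHom.comp (ρ.comp N.subtype) P.subtype)
  have mem_of_mem_map (g : G) (hg : g ∈ P.map N.subtype) : ρ g ∈ A.range := by
    obtain ⟨p, hp, rfl⟩ := hg
    exact apply_mem_range_asAlgebraHom (MonoidHom.comp _ P.subtype) ⟨p, hp⟩
  have pow_mem (g : G) : ρ (g ^ M) ∈ A.range := by
    obtain ⟨k, hk, -, hkP⟩ := Subgroup.exists_pow_mem_of_index_ne_zero
      (Subgroup.FiniteIndex.index_ne_zero (H := P.map N.subtype)) (g ^ M)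
    refine Algebra.adjoin_le (Set.singleton_subset_iff.2 ?_) (hM g k hk.ne')
    rw [← map_pow]
    exact mem_of_mem_map _ hkP
  refine hnil.of_mem_range fun ⟨g, hg⟩ ↦ ?_
  change ρ g ∈ A.range
  induction hg using Subgroup.closure_induction'' with
  | mem x hx => obtain ⟨g, rfl⟩ := hx; exact pow_mem g
  | inv_mem x hx => obtain ⟨g, rfl⟩ := hx; exact inv_pow g M ▸ pow_mem g⁻¹
  | one => rw [map_one]; exact one_mem _
  | mul x y _ _ hx hy => rw [map_mul]; exact mul_mem hx hy

end Solvable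

section Traces

variable {K V : Type*} [Field K] [AddCommGroup V] [Module K V]

theorem HasNilCommutators.trace_eq {G : Type*} [Group G] {ρ : Representation K G V}
    (hρ : HasNilCommutators ρ) (a b c : G) :
    LinearMap.trace K V (ρ (a * b * c)) = LinearMap.trace K V (ρ (b * a * c)) := by
  have hnil := hρ (.single a 1) (.single b 1) (.single c 1)
  have := (LinearMap.isNilpotent_trace_of_isNilpotent hnil).eq_zero
  simp only [map_mul, map_sub, Representation.asAlgebraHom_single_one] at this
  rwa [LinearMap.trace_mul_comm, sub_mul, map_sub, sub_eq_zero, ← map_mul, ← map_mul, ← map_mul,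
    ← map_mul] at this

variable [FiniteDimensional K V]

open Polynomial in
theorem exists_isIdempotentElem_aeval_of_pow_mul (x : Module.End K V) :
    ∃ (m : ℕ) (p : K[X]), IsIdempotentElem (aeval x (p * X ^ (m + 1))) ∧
      (aeval x (p * X ^ (m + 1)) = 0 → x ^ m = 0) := by
  obtain ⟨q, hq, hdvd⟩ := exists_eq_pow_rootMultiplicity_mul_and_not_dvd (minpoly K x)
    (minpoly.ne_zero (Algebra.IsIntegral.isIntegral x)) 0
  set m := (minpoly K x).rootMultiplicity 0
  rw [map_zero, sub_zero] at hq hdvd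
  obtain ⟨a, b, hab⟩ : IsCoprime (X ^ (m + 1)) q :=
    IsCoprime.pow_left ((irreducible_X.coprime_iff_not_dvd).2 hdvd)
  have aeval_eq_zero : aeval x (X ^ m * q) = 0 := hq ▸ minpoly.aeval K x
  refine ⟨m, a, ?_, fun h ↦ ?_⟩
  · have hsub : a * X ^ (m + 1) * (a * X ^ (m + 1)) - a * X ^ (m + 1) =
        -(a * X * b) * (X ^ m * q) := by
      linear_combination (a * X ^ (m + 1)) * hab
    have := congrArg (aeval x) hsub
    rwa [map_mul _ (-(a * X * b)), aeval_eq_zero, mul_zero, map_sub, map_mul, sub_eq_zero] at this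
  · have hX : (X : K[X]) ^ m = X ^ m * (a * X ^ (m + 1)) + b * (X ^ m * q) := by
      linear_combination (-X ^ m) * hab
    have := congrArg (aeval x) hX
    rwa [map_add, map_mul, map_mul _ b, aeval_eq_zero, h, mul_zero, mul_zero, add_zero, map_pow,
      aeval_X] at this

open Polynomial in
theorem isNilpotent_of_trace_pow_succ_eq_zero [CharZero K] {x : Module.End K V}
    (hx : ∀ k : ℕ, LinearMap.trace K V (x ^ (k + 1)) = 0) : IsNilpotent x := by
  obtain ⟨m, p, hidem, hpow⟩ := exists_isIdempotentElem_aeval_of_pow_mul x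
  have trace_eq_zero (r : K[X]) : LinearMap.trace K V (aeval x (r * X ^ (m + 1))) = 0 := by
    induction r using Polynomial.induction_on' with
    | add p q hp hq => rw [add_mul, map_add, map_add, hp, hq, add_zero]
    | monomial n c =>
      rw [← C_mul_X_pow_eq_monomial, mul_assoc, ← pow_add, ← add_assoc, C_mul', map_smul,
        map_pow, aeval_X, map_smul, hx, smul_zero]
  exact ⟨m, hpow (LinearMap.IsIdempotentElem.eq_zero_of_trace_eq_zero hidem (trace_eq_zero p))⟩

theorem hasNilCommutators_of_trace [CharZero K] {G : Type*} [Group G] (ρ : Representation K G V)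
    (hρ : ∀ a b c, LinearMap.trace K V (ρ (a * b * c)) = LinearMap.trace K V (ρ (b * a * c))) :
    HasNilCommutators ρ := by
  have trace_eq (x y z : MonoidAlgebra K G) : LinearMap.trace K V (ρ.asAlgebraHom (x * y * z)) =
      LinearMap.trace K V (ρ.asAlgebraHom (y * x * z)) := by
    induction x using MonoidAlgebra.induction_linear with
    | zero => simp
    | add x x' hx hx' => simp only [add_mul, mul_add, map_add, hx, hx']
    | single a r =>
    induction y using MonoidAlgebra.induction_linear with
    | zero => simp
    | add y y' hy hy' => simp only [add_mul, mul_add, map_add, hy, hy']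
    | single b s =>
    induction z using MonoidAlgebra.induction_linear with
    | zero => simp
    | add z z' hz hz' => simp only [mul_add, map_add, hz, hz']
    | single c t =>
      simp only [MonoidAlgebra.single_mul_single, Representation.asAlgebraHom_single, map_smul,
        hρ a b c, mul_comm r s]
  intro x y z
  refine isNilpotent_of_trace_pow_succ_eq_zero fun k ↦ ?_
  rw [← map_pow, pow_succ, ← mul_assoc, map_mul, LinearMap.trace_mul_comm, ← map_mul, sub_mul,
    map_sub, map_sub, trace_eq, sub_self]

theorem finite_setOf_trace_of_pow_eq_one [IsAlgClosed K] {M : ℕ} (hM : M ≠ 0) :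
    {t : K | ∃ f : Module.End K V, f ^ M = 1 ∧ LinearMap.trace K V f = t}.Finite := by
  classical
  set R := (Polynomial.nthRoots M (1 : K)).toFinset
  refine ((Set.finite_Iic (Module.finrank K V • R.val)).image Multiset.sum).subset ?_
  rintro _ ⟨f, hf, rfl⟩
  have splits : f.charpoly.Splits := IsAlgClosed.splits _
  refine ⟨f.charpoly.roots, Multiset.le_iff_count.2 fun c ↦ ?_,
    (Module.End.trace_eq_sum_roots_charpoly_of_splits splits).symm⟩
  by_cases hc : c ∈ f.charpoly.roots
  · have mem_R : c ∈ R := by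
      rw [Polynomial.mem_roots f.charpoly_monic.ne_zero,
        ← Module.End.hasEigenvalue_iff_isRoot_charpoly] at hc
      obtain ⟨v, hv⟩ := hc.exists_hasEigenvector
      have := hv.pow_apply M
      rw [hf, Module.End.one_apply, ← one_smul K v, smul_comm, one_smul] at this
      rw [Multiset.mem_toFinset, Polynomial.mem_nthRoots (Nat.pos_of_ne_zero hM)]
      exact (smul_left_injective K hv.2 (by simpa using this)).symm
    rw [Multiset.count_nsmul, Multiset.count_eq_one_of_mem R.nodup mem_R, mul_one,
      ← f.charpoly_natDegree, splits.natDegree_eq_card_roots]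
    exact Multiset.count_le_card c _
  · simp [Multiset.count_eq_zero_of_notMem hc]

open Polynomial in
theorem eq_one_of_trace_mul_eq [CharZero K] {G : Type*} [Group G] (ρ : Representation K G V)
    {M : ℕ} (hM : M ≠ 0) {z : G} (hz : ρ z ^ M = 1)
    (htrace : ∀ a, LinearMap.trace K V (ρ (z * a)) = LinearMap.trace K V (ρ a)) : ρ z = 1 := by
  have trace_eq_zero (x : MonoidAlgebra K G) :
      LinearMap.trace K V ((1 - ρ z) * ρ.asAlgebraHom x) = 0 := by
    induction x using MonoidAlgebra.induction_linear with
    | zero => simp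
    | add x y hx hy => rw [map_add, mul_add, map_add, hx, hy, add_zero]
    | single a c => simp [sub_mul, ← map_mul, htrace]
  have nilpotent : IsNilpotent (1 - ρ z) := by
    refine isNilpotent_of_trace_pow_succ_eq_zero fun k ↦ ?_
    have := trace_eq_zero ((1 - .single z 1) ^ k)
    rwa [map_pow, map_sub, map_one, ρ.asAlgebraHom_single_one, ← pow_succ'] at this
  have semisimple : Module.End.IsSemisimple (ρ z) := by
    refine Module.End.isSemisimple_of_squarefree_aeval_eq_zero (p := X ^ M - C (1 : K))
      (separable_X_pow_sub_C 1 (Nat.cast_ne_zero.2 hM) one_ne_zero).squarefree ?_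
    simp [hz]
  have sub_semisimple : Module.End.IsSemisimple (1 - ρ z) := by
    have aeval_eq : aeval (ρ z : Module.End K V) (1 - X : K[X]) = 1 - ρ z := by simp
    exact aeval_eq ▸ semisimple.aeval (1 - X)
  exact (sub_eq_zero.1 (Module.End.eq_zero_of_isNilpotent_isSemisimple nilpotent
    sub_semisimple)).symm

-- Burnside: an element of bounded order is determined by its traces against a spanning set, and
-- the traces that occur are sums of roots of unity.
theorem finite_range_of_pow_eq_one [IsAlgClosed K] [CharZero K] {G : Type*} [Group G]
    (ρ : Representation K G V) {M : ℕ} (hM : M ≠ 0) (hρ : ∀ g, ρ g ^ M = 1) :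
    (Set.range ρ).Finite := by
  obtain ⟨b, hb, hspan, -⟩ := Submodule.exists_fun_fin_finrank_span_eq K (Set.range ρ)
  refine Set.Finite.of_finite_image
    (f := fun (x : Module.End K V) i ↦ LinearMap.trace K V (x * b i)) ?_ ?_
  · refine (Set.Finite.pi' fun _ ↦ finite_setOf_trace_of_pow_eq_one (V := V) hM).subset ?_
    rintro _ ⟨_, ⟨g, rfl⟩, rfl⟩ i
    obtain ⟨a, ha⟩ := hb i
    exact ⟨ρ (g * a), hρ _, by rw [map_mul, ha]⟩
  rintro _ ⟨g, rfl⟩ _ ⟨h, rfl⟩ hgh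
  have trace_eq (a : G) : LinearMap.trace K V (ρ g * ρ a) = LinearMap.trace K V (ρ h * ρ a) := by
    have eqOn := LinearMap.eqOn_span' (f := LinearMap.trace K V ∘ₗ LinearMap.mulLeft K (ρ g))
      (g := LinearMap.trace K V ∘ₗ LinearMap.mulLeft K (ρ h)) (s := Set.range b)
      (by rintro _ ⟨i, rfl⟩; exact congrFun hgh i)
    exact eqOn (hspan.symm ▸ Submodule.subset_span (Set.mem_range_self a))
  have := eq_one_of_trace_mul_eq ρ hM (hρ (h⁻¹ * g)) fun a ↦ ?_
  · rw [← mul_inv_cancel_left h g, map_mul, this, mul_one]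
  · rw [mul_assoc, map_mul, LinearMap.trace_mul_comm, ← map_mul, mul_assoc, map_mul, trace_eq,
      ← map_mul, ← mul_assoc, map_mul, LinearMap.trace_mul_comm, ← map_mul, inv_mul_cancel_left]

end Traces

section PowSubgroup

variable {G : Type*} [Group G] {M : ℕ}

theorem pow_mem_powSubgroup (g : G) : g ^ M ∈ powSubgroup G M :=
  Subgroup.subset_closure ⟨g, rfl⟩

theorem map_mem_powSubgroup {H : Type*} [Group H] (f : G →* H) {g : G}
    (hg : g ∈ powSubgroup G M) : f g ∈ powSubgroup H M := by
  suffices powSubgroup G M ≤ (powSubgroup H M).comap f from this hg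
  rw [powSubgroup, Subgroup.closure_le]
  rintro _ ⟨g, rfl⟩
  rw [SetLike.mem_coe, Subgroup.mem_comap, map_pow]
  exact pow_mem_powSubgroup (f g)

instance powSubgroup_normal : (powSubgroup G M).Normal where
  conj_mem _ hx g := map_mem_powSubgroup (MulAut.conj g).toMonoidHom hx

end PowSubgroup

theorem commutator_le_ker_of_commute {G H : Type*} [Group G] [Monoid H] (f : G →* H)
    {N : Subgroup G} (hf : ∀ a ∈ N, ∀ b ∈ N, Commute (f a) (f b)) : ⁅N, N⁆ ≤ f.ker := by
  rw [Subgroup.commutator_le]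
  intro a ha b hb
  rw [MonoidHom.mem_ker, commutatorElement_def, map_mul, map_mul, map_mul, (hf a ha b hb).eq,
    mul_assoc (f b), ← map_mul f a, mul_inv_cancel, map_one, mul_one, ← map_mul, mul_inv_cancel,
    map_one]

section SolvableImage

variable {K : Type u} [Field K] {G : Type v} {V : Type w} [Group G] [AddCommGroup V] [Module K V]

theorem HasSolvableImage.comp {ρ : Representation K G V} (hρ : HasSolvableImage ρ) {H : Type*}
    [Group H] (f : H →* G) : HasSolvableImage (ρ.comp f) := by
  obtain ⟨k, hk⟩ := hρ
  exact ⟨k, fun h hh ↦ hk (map_derivedSeries_le_derivedSeries f k ⟨h, hh, rfl⟩)⟩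

theorem HasSolvableImage.of_extension {ρ : Representation K G V} {W : Submodule K V}
    (hW : ∀ g, W ≤ W.comap (ρ g)) (hsub : HasSolvableImage (ρ.subrepresentation W hW))
    (hquot : HasSolvableImage (ρ.quotient W hW)) : HasSolvableImage ρ := by
  obtain ⟨k, hk⟩ := hsub
  obtain ⟨l, hl⟩ := hquot
  set D := derivedSeries G (max k l)
  have apply_eq {g : G} (hg : g ∈ D) {w : V} (hw : w ∈ W) : ρ g w = w := by
    have := hk (derivedSeries_antitone G (le_max_left k l) hg)
    simpa using congrArg (fun f ↦ (f ⟨w, hw⟩ : V)) (MonoidHom.mem_ker.1 this)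
  have apply_sub_mem {g : G} (hg : g ∈ D) (v : V) : ρ g v - v ∈ W := by
    have := hl (derivedSeries_antitone G (le_max_right k l) hg)
    rw [← Submodule.Quotient.eq]
    simpa using congrArg (fun f ↦ f (Submodule.Quotient.mk v)) (MonoidHom.mem_ker.1 this)
  refine ⟨max k l + 1, commutator_le_ker_of_commute ρ fun a ha b hb ↦ LinearMap.ext fun v ↦ ?_⟩
  have hab := apply_eq ha (apply_sub_mem hb v)
  have hba := apply_eq hb (apply_sub_mem ha v)
  rw [map_sub] at hab hba
  rw [Module.End.mul_apply, Module.End.mul_apply, sub_eq_iff_eq_add.1 hab,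
    sub_eq_iff_eq_add.1 hba]
  abel

variable [IsAlgClosed K] [CharZero K] [FiniteDimensional K V]

-- `M`-th powers act by scalars, so the conjugation action on `End V` has exponent `M` and
-- Burnside's theorem makes its kernel, which acts commutatively on `V`, of finite index.
theorem IsStronglyIrreducible.exists_finiteIndex_hasSolvableImage {ρ : Representation K G V}
    (hρ : IsStronglyIrreducible ρ) {M : ℕ} (hM : M ≠ 0)
    (hnil : HasNilCommutators (ρ.comp (powSubgroup G M).subtype)) :
    ∃ N : Subgroup G, N.FiniteIndex ∧ HasSolvableImage (ρ.comp N.subtype) := by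
  have pow_eq_one (g : G) : Representation.linHom ρ ρ g ^ M = 1 := by
    obtain ⟨c, hc⟩ := hρ.exists_eq_smul_one_of_hasNilCommutators hnil (pow_mem_powSubgroup g)
    rw [← map_pow]
    ext x v
    rw [Representation.linHom_apply, LinearMap.comp_apply, LinearMap.comp_apply, hc,
      LinearMap.smul_apply, Module.End.one_apply, ← map_smul,
      ← Module.End.one_apply (R := K) (ρ _ v), ← LinearMap.smul_apply, ← hc, ρ.self_inv_apply,
      Module.End.one_apply]
  have finite_range := finite_range_of_pow_eq_one _ hM pow_eq_one
  refine ⟨MonoidHom.ker (Representation.linHom ρ ρ), finiteIndex_of_finite_range _ finite_range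
    fun a b hab ↦ ?_, 1, ?_⟩
  · rw [MonoidHom.mem_ker, map_mul, ← hab, ← map_mul, inv_mul_cancel, map_one]
  refine commutator_le_ker_of_commute _ fun ⟨a, ha⟩ _ ⟨b, _⟩ _ ↦ ?_
  have conj_eq := LinearMap.congr_fun (MonoidHom.mem_ker.1 ha) (ρ b)
  rw [Representation.linHom_apply, Module.End.one_apply] at conj_eq
  refine LinearMap.ext fun v ↦ ?_
  simpa [ρ.inv_self_apply] using LinearMap.congr_fun conj_eq (ρ a v)

theorem exists_finiteIndex_hasSolvableImage (ρ : Representation K G V) {M : ℕ} (hM : M ≠ 0)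
    (hnil : HasNilCommutators (ρ.comp (powSubgroup G M).subtype)) :
    ∃ N : Subgroup G, N.FiniteIndex ∧ HasSolvableImage (ρ.comp N.subtype) := by
  revert hnil
  apply representation_induction (ρ := ρ)
  case of_isStronglyIrreducible =>
    intro G V _ _ _ _ ρ hρ hnil
    exact hρ.exists_finiteIndex_hasSolvableImage hM hnil
  case of_finiteIndex =>
    intro G V _ _ _ _ ρ N _ ih hnil
    obtain ⟨P, hP, hsol⟩ := ih <| hnil.of_mem_range fun g ↦ apply_mem_range_asAlgebraHom
      (ρ.comp (powSubgroup G M).subtype) ⟨((g : N) : G), map_mem_powSubgroup N.subtype g.2⟩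
    refine ⟨P.map N.subtype, finiteIndex_map_subtype P, ?_⟩
    let e := P.equivMapOfInjective N.subtype N.subtype_injective
    convert hsol.comp e.symm.toMonoidHom using 1
    ext g : 1
    obtain ⟨p, rfl⟩ := e.surjective g
    simp [e]
  case of_extension =>
    intro G V _ _ _ _ ρ W hW ihW ihQ hnil
    obtain ⟨N₁, hN₁, hsol₁⟩ := ihW (hnil.subrepresentation W fun g ↦ hW g)
    obtain ⟨N₂, hN₂, hsol₂⟩ := ihQ (hnil.quotient W fun g ↦ hW g)
    exact ⟨N₁ ⊓ N₂, inferInstance, .of_extension (W := W) (fun g ↦ hW g)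
      (hsol₁.comp (Subgroup.inclusion inf_le_left)) (hsol₂.comp (Subgroup.inclusion inf_le_right))⟩

theorem exists_finiteIndex_isSolvable_of_injective {ρ : Representation K G V}
    (hρ : Function.Injective ρ) {M : ℕ} (hM : M ≠ 0)
    (hnil : HasNilCommutators (ρ.comp (powSubgroup G M).subtype)) :
    ∃ N : Subgroup G, N.FiniteIndex ∧ Group.IsSolvable N := by
  obtain ⟨N, hN, k, hk⟩ := exists_finiteIndex_hasSolvableImage ρ hM hnil
  refine ⟨N, hN, k, (Subgroup.eq_bot_iff_forall _).2 fun g hg ↦ Subtype.ext (hρ ?_)⟩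
  exact (MonoidHom.mem_ker.1 (hk hg)).trans (map_one ρ).symm

end SolvableImage

section NeatElements

open Polynomial

theorem rootMultiplicity_expand_of_ne_zero {K : Type*} [Field K] {k : ℕ} (hk : (k : K) ≠ 0)
    {a : K} (ha : a ≠ 0) {q : K[X]} (hq : q ≠ 0) :
    (expand K k q).rootMultiplicity a = q.rootMultiplicity (a ^ k) := by
  classical
  have k_pos : 0 < k := Nat.pos_of_ne_zero fun h ↦ hk (by rw [h, Nat.cast_zero])
  obtain ⟨r, hr, hdvd⟩ := exists_eq_pow_rootMultiplicity_mul_and_not_dvd q hq (a ^ k)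
  set m := q.rootMultiplicity (a ^ k)
  have simple_root : (X ^ k - C (a ^ k)).roots.count a = 1 := by
    refine le_antisymm ?_ (Multiset.one_le_count_iff_mem.2 ?_)
    · rw [count_roots]
      exact rootMultiplicity_le_one_of_separable
        (separable_X_pow_sub_C _ hk (pow_ne_zero k ha)) a
    · exact (mem_roots (X_pow_sub_C_ne_zero k_pos _)).2 (by simp)
  have not_root : (expand K k r).rootMultiplicity a = 0 := by
    refine rootMultiplicity_eq_zero ?_
    rwa [IsRoot, expand_eval, ← IsRoot, ← dvd_iff_isRoot]
  have expand_eq : expand K k q = (X ^ k - C (a ^ k)) ^ m * expand K k r := by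
    conv_lhs => rw [hr]
    simp only [map_mul, map_pow, map_sub, expand_X, expand_C]
  rw [expand_eq, rootMultiplicity_mul (expand_eq ▸ (expand_ne_zero k_pos).2 hq), not_root,
    ← count_roots, roots_pow, Multiset.count_nsmul, simple_root, mul_one, add_zero]

theorem natDegree_le_of_dvd_expand {K : Type*} [Field K] {k : ℕ} (hk : (k : K) ≠ 0)
    {p q : K[X]} (hp : p.Splits) (hq : q ≠ 0) (hpq : p ∣ expand K k q) (hp₀ : ¬ p.IsRoot 0)
    (hinj : ∀ a ∈ p.roots, ∀ b ∈ p.roots, a ^ k = b ^ k → a = b) :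
    p.natDegree ≤ q.natDegree := by
  classical
  have k_pos : 0 < k := Nat.pos_of_ne_zero fun h ↦ hk (by rw [h, Nat.cast_zero])
  have roots_le : p.roots.map (· ^ k) ≤ q.roots := by
    refine Multiset.le_iff_count.2 fun c ↦ ?_
    by_cases hc : c ∈ p.roots.map (· ^ k)
    · obtain ⟨a, ha, rfl⟩ := Multiset.mem_map.1 hc
      have ha₀ : a ≠ 0 := by
        rintro rfl
        exact hp₀ (isRoot_of_mem_roots ha)
      rw [Multiset.count_map_eq_count _ _ (fun a ha b hb ↦ hinj a ha b hb) _ ha, count_roots,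
        count_roots, ← rootMultiplicity_expand_of_ne_zero hk ha₀ hq]
      exact rootMultiplicity_le_rootMultiplicity_of_dvd ((expand_ne_zero k_pos).2 hq) hpq a
    · rw [Multiset.count_eq_zero_of_notMem hc]
      exact zero_le
  calc p.natDegree = (p.roots.map (· ^ k)).card := by
        rw [Multiset.card_map, hp.natDegree_eq_card_roots]
    _ ≤ q.roots.card := Multiset.card_le_card roots_le
    _ ≤ q.natDegree := q.card_roots'

theorem finrank_adjoin_singleton {K A : Type*} [Field K] [Ring A] [Algebra K A] (x : A) :
    Module.finrank K (Algebra.adjoin K {x}) = (minpoly K x).natDegree := by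
  rw [Algebra.adjoin_singleton_eq_range_aeval, ← finrank_quotient_span_eq_natDegree,
    ← Ideal.submodule_span_eq, ← minpoly.ker_aeval_eq_span_minpoly,
    ← AlgHom.ker_rangeRestrict]
  exact ((Ideal.quotientKerAlgEquivOfSurjective
    (aeval (R := K) x).rangeRestrict_surjective).toLinearEquiv.finrank_eq).symm

-- The minimal polynomials of `h` and `h ^ k` have the same degree, so `K[h ^ k] = K[h]`.
theorem mem_adjoin_pow_of_eigenvalues {K V : Type*} [Field K] [IsAlgClosed K] [AddCommGroup V]
    [Module K V] [FiniteDimensional K V] {h : Module.End K V} (hh : Function.Injective h) {k : ℕ}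
    (hk : (k : K) ≠ 0)
    (hinj : ∀ a b, h.HasEigenvalue a → h.HasEigenvalue b → a ^ k = b ^ k → a = b) :
    h ∈ Algebra.adjoin K {h ^ k} := by
  have hasEigenvalue {a : K} (ha : a ∈ (minpoly K h).roots) : h.HasEigenvalue a :=
    Module.End.hasEigenvalue_of_isRoot (isRoot_of_mem_roots ha)
  have not_isRoot_zero : ¬ (minpoly K h).IsRoot 0 := fun h₀ ↦ by
    obtain ⟨v, hv⟩ := (Module.End.hasEigenvalue_of_isRoot h₀).exists_hasEigenvector
    exact hv.2 (hh (by rw [hv.apply_eq_smul, zero_smul, map_zero]))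
  have finrank_le : Module.finrank K (Algebra.adjoin K {h}) ≤
      Module.finrank K (Algebra.adjoin K {h ^ k}) := by
    rw [finrank_adjoin_singleton, finrank_adjoin_singleton]
    refine natDegree_le_of_dvd_expand hk (IsAlgClosed.splits _)
      (minpoly.ne_zero (Algebra.IsIntegral.isIntegral _)) (minpoly.dvd K h ?_) not_isRoot_zero
      fun a ha b hb ↦ hinj a b (hasEigenvalue ha) (hasEigenvalue hb)
    rw [expand_aeval, minpoly.aeval]
  have adjoin_le : Algebra.adjoin K {h ^ k} ≤ Algebra.adjoin K {h} :=
    Algebra.adjoin_singleton_le (pow_mem (Algebra.self_mem_adjoin_singleton K h) k)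
  have adjoin_eq := Submodule.eq_of_le_of_finrank_le
    (Subalgebra.toSubmodule.monotone adjoin_le) finrank_le
  rw [Subalgebra.toSubmodule.injective adjoin_eq]
  exact Algebra.self_mem_adjoin_singleton K h

theorem dvd_factorial_of_totient_le {m c : ℕ} (hm : 0 < m) (h : m.totient ≤ c) :
    m ∣ (2 * c).factorial := by
  rw [Nat.dvd_iff_prime_pow_dvd_dvd]
  intro p k hp hk
  rcases Nat.eq_zero_or_pos k with rfl | hk₀
  · simp
  apply Nat.dvd_factorial (pow_pos hp.pos _)
  have totient_le := Nat.le_of_dvd (Nat.totient_pos.2 hm) (Nat.totient_dvd_of_dvd hk)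
  rw [Nat.totient_prime_pow hp hk₀] at totient_le
  calc p ^ k = p ^ (k - 1) * p := by rw [← pow_succ, Nat.sub_add_cancel hk₀]
    _ ≤ p ^ (k - 1) * (2 * (p - 1)) := Nat.mul_le_mul_left _ (by have := hp.two_le; lia)
    _ = 2 * (p ^ (k - 1) * (p - 1)) := by ring
    _ ≤ 2 * c := by lia

end NeatElements

section BoundedPowers

variable {F : Type*} [Field F] [Algebra ℚ F] [FiniteDimensional ℚ F]

theorem pow_factorial_eq_one_of_pow_eq_one {c : ℕ} (hF : Module.finrank ℚ F ≤ c) {z : F} {j : ℕ}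
    (hj : j ≠ 0) (hz : z ^ j = 1) : z ^ (2 * c).factorial = 1 := by
  have orderOf_pos : 0 < orderOf z :=
    orderOf_pos_iff.2 (isOfFinOrder_iff_pow_eq_one.2 ⟨j, Nat.pos_of_ne_zero hj, hz⟩)
  have : CharZero F := algebraRat.charZero F
  have totient_le : (orderOf z).totient ≤ c := by
    have cyclotomic_eq : Polynomial.cyclotomic (orderOf z) ℚ = minpoly ℚ z := by
      convert Polynomial.cyclotomic_eq_minpoly_rat (IsPrimitiveRoot.orderOf z) orderOf_pos
      exact Subsingleton.elim _ _
    rw [← Polynomial.natDegree_cyclotomic (orderOf z) ℚ, cyclotomic_eq]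
    exact (minpoly.natDegree_le z).trans hF
  exact orderOf_dvd_iff_pow_eq_one.1 (dvd_factorial_of_totient_le orderOf_pos totient_le)

theorem neatExponent_ne_zero (D n : ℕ) : neatExponent D n ≠ 0 :=
  Nat.factorial_ne_zero _

theorem pow_neatExponent_eq_of_pow_eq {K : Type*} [Field K] [Algebra F K] {D : ℕ}
    (hF : Module.finrank ℚ F ≤ D) {p : Polynomial F} (hp : p.Monic) {x y : K}
    (hx : Polynomial.aeval x p = 0) (hy : Polynomial.aeval y p = 0) (hy₀ : y ≠ 0) {j : ℕ}
    (hj : j ≠ 0) (hxy : x ^ j = y ^ j) :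
    x ^ neatExponent D p.natDegree = y ^ neatExponent D p.natDegree := by
  have : CharZero F := algebraRat.charZero F
  have : CharZero K := charZero_of_injective_algebraMap (algebraMap F K).injective
  have isIntegral {t : K} (ht : Polynomial.aeval t p = 0) : IsIntegral F t := ⟨p, hp, ht⟩
  have finrank_le {t : K} (ht : Polynomial.aeval t p = 0) :
      Module.finrank F (IntermediateField.adjoin F {t}) ≤ p.natDegree := by
    rw [IntermediateField.adjoin.finrank (isIntegral ht)]
    exact Polynomial.natDegree_le_of_dvd (minpoly.dvd F t ht) hp.ne_zero
  have := IntermediateField.adjoin.finiteDimensional (isIntegral hx)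
  have := IntermediateField.adjoin.finiteDimensional (isIntegral hy)
  let E := IntermediateField.adjoin F {x} ⊔ IntermediateField.adjoin F {y}
  have : FiniteDimensional ℚ E := FiniteDimensional.trans ℚ F E
  have finrank_E_le : Module.finrank ℚ E ≤ D * p.natDegree ^ 2 := by
    rw [← Module.finrank_mul_finrank ℚ F E, sq]
    exact Nat.mul_le_mul hF ((IntermediateField.finrank_sup_le _ _).trans
      (Nat.mul_le_mul (finrank_le hx) (finrank_le hy)))
  have hxE : x ∈ E := (le_sup_left : IntermediateField.adjoin F {x} ≤ E)
    (IntermediateField.mem_adjoin_simple_self F x)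
  have hyE : y ∈ E := (le_sup_right : IntermediateField.adjoin F {y} ≤ E)
    (IntermediateField.mem_adjoin_simple_self F y)
  let z : E := ⟨x / y, div_mem hxE hyE⟩
  have hz : z ^ j = 1 := Subtype.ext <| by
    change (x / y) ^ j = 1
    rw [div_pow, hxy, div_self (pow_ne_zero j hy₀)]
  have := congrArg Subtype.val (pow_factorial_eq_one_of_pow_eq_one finrank_E_le hj hz)
  change (x / y) ^ neatExponent D p.natDegree = 1 at this
  rwa [div_pow, div_eq_one_iff_eq (pow_ne_zero _ hy₀)] at this

end BoundedPowers

section GLRep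

variable {n R K : Type*} [Fintype n] [DecidableEq n] [CommRing R] [Field K]

theorem glRep_apply (φ : R →+* K) (g : GL n R) :
    glRep φ g = Matrix.toLin' ((g : Matrix n n R).map φ) :=
  rfl

theorem glRep_injective {φ : R →+* K} (hφ : Function.Injective φ) :
    Function.Injective (glRep (n := n) φ) := fun _ _ hgh ↦
  Units.ext (Matrix.map_injective hφ (Matrix.toLin'.injective hgh))

theorem trace_glRep (φ : R →+* K) (g : GL n R) :
    LinearMap.trace K (n → K) (glRep φ g) = φ (g : Matrix n n R).trace := by
  rw [glRep_apply, Matrix.trace_toLin'_eq]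
  exact (AddMonoidHom.map_trace φ _).symm

theorem glRep_pow_neatExponent_mem_adjoin {F : Type*} [Field F] [Algebra ℚ F]
    [FiniteDimensional ℚ F] [Algebra F K] [IsAlgClosed K] {D : ℕ} (hF : Module.finrank ℚ F ≤ D)
    (g : GL n F) {k : ℕ} (hk : k ≠ 0) :
    glRep (algebraMap F K) (g ^ neatExponent D (Fintype.card n)) ∈
      Algebra.adjoin K {glRep (algebraMap F K) (g ^ neatExponent D (Fintype.card n)) ^ k} := by
  have : CharZero F := algebraRat.charZero F
  have : CharZero K := charZero_of_injective_algebraMap (algebraMap F K).injective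
  set M := neatExponent D (Fintype.card n) with hM
  set p := (g : Matrix n n F).charpoly
  have hM₀ : M ≠ 0 := neatExponent_ne_zero D _
  set f : Module.End K (n → K) := glRep (algebraMap F K) g
  have isUnit_f : IsUnit f := (Group.isUnit g).map _
  have charpoly_eq : f.charpoly = p.map (algebraMap F K) :=
    (Matrix.charpoly_toLin' _).trans (Matrix.charpoly_map _ _)
  have aeval_eq_zero {x : K} (hx : f.HasEigenvalue x) : Polynomial.aeval x p = 0 := by
    rwa [Module.End.hasEigenvalue_iff_isRoot_charpoly, charpoly_eq, Polynomial.IsRoot.def,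
      Polynomial.eval_map_algebraMap] at hx
  have exists_pow_eq {a : K} (ha : (f ^ M).HasEigenvalue a) :
      ∃ x, f.HasEigenvalue x ∧ x ^ M = a := by
    rw [Module.End.hasEigenvalue_iff_mem_spectrum,
      spectrum.map_pow_of_pos f (Nat.pos_of_ne_zero hM₀)] at ha
    obtain ⟨x, hx, rfl⟩ := ha
    exact ⟨x, Module.End.hasEigenvalue_iff_mem_spectrum.2 hx, rfl⟩
  rw [map_pow]
  refine mem_adjoin_pow_of_eigenvalues ((Module.End.isUnit_iff _).1 (isUnit_f.pow M)).1
    (Nat.cast_ne_zero.2 hk) fun a b ha hb hab ↦ ?_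
  obtain ⟨x, hx, rfl⟩ := exists_pow_eq ha
  obtain ⟨y, hy, rfl⟩ := exists_pow_eq hb
  have hy₀ : y ≠ 0 := by
    rintro rfl
    exact (spectrum.zero_notMem_iff K).2 isUnit_f (Module.End.hasEigenvalue_iff_mem_spectrum.1 hy)
  rw [← pow_mul, ← pow_mul] at hab
  rw [hM, ← Matrix.charpoly_natDegree_eq_dim (g : Matrix n n F)]
  exact pow_neatExponent_eq_of_pow_eq hF (Matrix.charpoly_monic _) (aeval_eq_zero hx)
    (aeval_eq_zero hy) hy₀ (mul_ne_zero hM₀ hk) hab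

end GLRep

section BoundedSpecialization

theorem span_range_quotient_mk_eq_top {k A R ι : Type*} [CommRing k] [CommRing A] [CommRing R]
    [Algebra k A] [Algebra A R] [Algebra k R] [IsScalarTower k A R] (e : A →ₐ[k] k) {Q : Ideal R}
    (hQ : RingHom.ker e ≤ Q.comap (algebraMap A R)) {v : ι → R}
    (hv : Submodule.span A (Set.range v) = ⊤) :
    Submodule.span k (Set.range fun i ↦ Ideal.Quotient.mk Q (v i)) = ⊤ := by
  have mk_smul (a : A) (r : R) :
      Ideal.Quotient.mk Q (a • r) = e a • Ideal.Quotient.mk Q r := by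
    have sub_mem : a - algebraMap k A (e a) ∈ RingHom.ker e := by
      simp [RingHom.mem_ker]
    have := Ideal.Quotient.eq_zero_iff_mem.2 (Q.mul_mem_right r (hQ sub_mem))
    rwa [map_sub, ← IsScalarTower.algebraMap_apply, sub_mul, map_sub, sub_eq_zero,
      ← Algebra.smul_def, ← Algebra.smul_def] at this
  let π : R →ₛₗ[(e : A →+* k)] R ⧸ Q :=
    { toFun := Ideal.Quotient.mk Q, map_add' := map_add _, map_smul' := mk_smul }
  have : RingHomSurjective (e : A →+* k) := ⟨fun c ↦ ⟨algebraMap k A c, e.commutes c⟩⟩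
  have := congrArg (Submodule.map π) hv
  rwa [Submodule.map_span, ← Set.range_comp, Submodule.map_top,
    LinearMap.range_eq_top.2 Ideal.Quotient.mk_surjective] at this

variable (k R : Type*) [Field k] [CommRing R] [IsDomain R] [Algebra k R] [Algebra.FiniteType k R]
  [Infinite k]

-- By Noether normalisation `R` is finite over a polynomial ring, and the residue fields above its
-- rational points have degree at most the number of module generators.
theorem exists_isMaximal_notMem_finrank_le : ∃ D, ∀ f : R, f ≠ 0 → ∃ Q : Ideal R,
    Q.IsMaximal ∧ f ∉ Q ∧ Module.Finite k (R ⧸ Q) ∧ Module.finrank k (R ⧸ Q) ≤ D := by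
  obtain ⟨s, g, g_injective, g_finite⟩ := exists_finite_inj_algHom_of_fg k R
  algebraize [g.toRingHom]
  have : Module.Finite (MvPolynomial (Fin s) k) R := g_finite
  have : IsScalarTower k (MvPolynomial (Fin s) k) R :=
    .of_algebraMap_eq fun c ↦ (g.commutes c).symm
  obtain ⟨D, v, hv⟩ := Module.Finite.exists_fin (R := MvPolynomial (Fin s) k) (M := R)
  refine ⟨D, fun f hf ↦ ?_⟩
  obtain ⟨a, ha, f_dvd⟩ := (Algebra.IsIntegral.isIntegral (R := MvPolynomial (Fin s) k)
    f).isAlgebraic.exists_nonzero_dvd (mem_nonZeroDivisors_of_ne_zero hf)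
  obtain ⟨x, hx⟩ : ∃ x, MvPolynomial.eval x a ≠ 0 := by
    contrapose! ha
    exact MvPolynomial.funext fun x ↦ (ha x).trans (map_zero _).symm
  let e : MvPolynomial (Fin s) k →ₐ[k] k := MvPolynomial.aeval x
  have ker_isMaximal : (RingHom.ker e).IsMaximal :=
    RingHom.ker_isMaximal_of_surjective _ fun c ↦ ⟨MvPolynomial.C c, e.commutes c⟩
  have ker_le : RingHom.ker (algebraMap (MvPolynomial (Fin s) k) R) ≤ RingHom.ker e :=
    ((RingHom.injective_iff_ker_eq_bot _).1 g_injective).trans_le bot_le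
  obtain ⟨Q, hQ, comap_eq⟩ := Ideal.exists_ideal_over_maximal_of_isIntegral (RingHom.ker e) ker_le
  have span_eq := span_range_quotient_mk_eq_top e comap_eq.ge hv
  refine ⟨Q, hQ, fun hfQ ↦ hx ?_, ⟨Submodule.fg_def.2 ⟨_, Set.finite_range _, span_eq⟩⟩,
    (finrank_le_of_span_eq_top span_eq).trans_eq (Fintype.card_fin D)⟩
  have : a ∈ RingHom.ker e := comap_eq ▸ Ideal.mem_comap.2 (Ideal.mem_of_dvd Q f_dvd hfQ)
  rwa [RingHom.mem_ker, MvPolynomial.aeval_eq_eval] at this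

theorem exists_algHom_apply_ne_zero_finrank_le : ∃ D, ∀ f : R, f ≠ 0 →
    ∃ (F : IntermediateField k (AlgebraicClosure k)) (_ : FiniteDimensional k F) (θ : R →ₐ[k] F),
      Module.finrank k F ≤ D ∧ θ f ≠ 0 := by
  obtain ⟨D, hD⟩ := exists_isMaximal_notMem_finrank_le k R
  refine ⟨D, fun f hf ↦ ?_⟩
  obtain ⟨Q, hQ, hfQ, finite_quotient, finrank_le⟩ := hD f hf
  let _ : Field (R ⧸ Q) := Ideal.Quotient.field Q
  let j : (R ⧸ Q) →ₐ[k] AlgebraicClosure k := IsAlgClosed.lift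
  let e : (R ⧸ Q) ≃ₐ[k] j.fieldRange := AlgEquiv.ofInjectiveField j
  refine ⟨j.fieldRange, .equiv e.toLinearEquiv, e.toAlgHom.comp (Ideal.Quotient.mkₐ k Q),
    e.toLinearEquiv.finrank_eq ▸ finrank_le, fun h ↦ hfQ ?_⟩
  exact Ideal.Quotient.eq_zero_iff_mem.1 (e.injective (h.trans (map_zero e).symm))

end BoundedSpecialization

section SemisimpleSpecialization

open Polynomial

theorem exists_mul_add_mul_eq_C_of_isCoprime_map {R L : Type*} [CommRing R] [IsDomain R] [Field L]
    [Algebra R L] [IsFractionRing R L] {p q : R[X]}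
    (h : IsCoprime (p.map (algebraMap R L)) (q.map (algebraMap R L))) :
    ∃ d ≠ 0, ∃ a b : R[X], a * p + b * q = C d := by
  obtain ⟨a, b, hab⟩ := h
  obtain ⟨s, hs, ha⟩ := IsLocalization.integerNormalization_spec (nonZeroDivisors R) a
  obtain ⟨t, ht, hb⟩ := IsLocalization.integerNormalization_spec (nonZeroDivisors R) b
  refine ⟨s * t, nonZeroDivisors.ne_zero (mul_mem hs ht),
    C t * IsLocalization.integerNormalization (nonZeroDivisors R) a,
    C s * IsLocalization.integerNormalization (nonZeroDivisors R) b,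
    Polynomial.map_injective _ (IsFractionRing.injective R L) ?_⟩
  simp only [Polynomial.map_add, Polynomial.map_mul, Polynomial.map_C, ha, hb, map_mul,
    Algebra.smul_def, IsScalarTower.algebraMap_apply R L L[X], algebraMap_eq]
  linear_combination C (algebraMap R L s) * C (algebraMap R L t) * hab

variable {n : Type*} [Fintype n]

theorem map_aeval_matrix [DecidableEq n] {R S : Type*} [CommRing R] [CommRing S] (φ : R →+* S)
    (A : Matrix n n R) (p : R[X]) : (aeval A p).map φ = aeval (A.map φ) (p.map φ) := by
  refine map_aeval_eq_aeval_map (T := S) (U := Matrix n n S) (ψ := φ.mapMatrix) ?_ p A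
  ext r i j
  simp [Matrix.algebraMap_matrix_apply, apply_ite φ]

theorem aeval_mulVecLin_eq_zero_iff [DecidableEq n] {K : Type*} [Field K] {A : Matrix n n K}
    {p : K[X]} :
    aeval A.mulVecLin p = 0 ↔ aeval A p = 0 := by
  have aeval_eq : aeval A.mulVecLin p = Matrix.toLinAlgEquiv' (aeval A p) :=
    aeval_algHom_apply (Matrix.toLinAlgEquiv' (R := K) (n := n)).toAlgHom A p
  rw [aeval_eq, map_eq_zero_iff _ Matrix.toLinAlgEquiv'.injective]

-- A Bézout identity for the minimal polynomial and its derivative specialises wherever its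
-- denominators do not vanish.
theorem exists_ne_zero_forall_isSemisimple_map {R L : Type*} [CommRing R] [IsDomain R] [Field L]
    [PerfectField L] [Algebra R L] [IsFractionRing R L] {A : Matrix n n R}
    (hA : Module.End.IsSemisimple (A.map (algebraMap R L)).mulVecLin) :
    ∃ d ≠ 0, ∀ {F : Type*} [Field F] (θ : R →+* F), θ d ≠ 0 →
      Module.End.IsSemisimple (A.map θ).mulVecLin := by
  classical
  set f : Module.End L (n → L) := (A.map (algebraMap R L)).mulVecLin
  obtain ⟨s, hs, map_eq⟩ :=
    IsLocalization.integerNormalization_spec (nonZeroDivisors R) (minpoly L f)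
  rw [← algebraMap_smul L, smul_eq_C_mul] at map_eq
  set p := IsLocalization.integerNormalization (nonZeroDivisors R) (minpoly L f)
  have aeval_eq_zero : aeval A p = 0 := by
    apply Matrix.map_injective (IsFractionRing.injective R L)
    beta_reduce
    rw [map_aeval_matrix, Matrix.map_zero _ (map_zero _), ← aeval_mulVecLin_eq_zero_iff, map_eq,
      map_mul, minpoly.aeval, mul_zero]
  have separable : (p.map (algebraMap R L)).Separable := by
    have hs₀ : algebraMap R L s ≠ 0 := IsFractionRing.to_map_ne_zero_of_mem_nonZeroDivisors hs
    rw [map_eq]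
    exact .unit_mul (isUnit_C.2 hs₀.isUnit)
      (PerfectField.separable_iff_squarefree.2 hA.minpoly_squarefree)
  rw [Separable, derivative_map] at separable
  obtain ⟨d, hd, a, b, hab⟩ := exists_mul_add_mul_eq_C_of_isCoprime_map separable
  refine ⟨d, hd, fun θ hθ ↦ Module.End.isSemisimple_of_squarefree_aeval_eq_zero
    (p := p.map θ) (Separable.squarefree ?_) ?_⟩
  · have map_hab := congrArg (Polynomial.map θ) hab
    simp only [Polynomial.map_add, Polynomial.map_mul, Polynomial.map_C, ← derivative_map]
      at map_hab
    refine ⟨C (θ d)⁻¹ * a.map θ, C (θ d)⁻¹ * b.map θ, ?_⟩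
    rw [mul_assoc, mul_assoc, ← mul_add, map_hab, ← C_mul, inv_mul_cancel₀ hθ, C_1]
  · rw [aeval_mulVecLin_eq_zero_iff, ← map_aeval_matrix, aeval_eq_zero,
      Matrix.map_zero _ (map_zero _)]

end SemisimpleSpecialization
section TraceCriterion

variable {n : Type*} [Fintype n] [DecidableEq n]

theorem trace_eq_of_isVirtuallySolvable {F : Type*} [Field F] [Algebra ℚ F] [FiniteDimensional ℚ F]
    {D : ℕ} (hF : Module.finrank ℚ F ≤ D) {Γ : Subgroup (GL n F)} (hΓ : IsVirtuallySolvable Γ)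
    (a b c : powSubgroup Γ (neatExponent D (Fintype.card n))) :
    ((a * b * c : Γ) : GL n F).1.trace = ((b * a * c : Γ) : GL n F).1.trace := by
  obtain ⟨N, hN, (hN_solvable : Group.IsSolvable N)⟩ := hΓ
  let K := AlgebraicClosure F
  let ρ : Representation K Γ (n → K) := (glRep (algebraMap F K)).comp Γ.subtype
  have hnil := hasNilCommutators_powSubgroup_of_isSolvable ρ
    (fun g k hk ↦ glRep_pow_neatExponent_mem_adjoin hF (g : GL n F) hk) N
  refine (algebraMap F K).injective ?_
  rw [← trace_glRep, ← trace_glRep]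
  exact hnil.trace_eq a b c

theorem isVirtuallySolvable_of_trace_eq {R : Type*} [CommRing R] [IsDomain R] [CharZero R]
    {Γ : Subgroup (GL n R)} {M : ℕ} (hM : M ≠ 0)
    (hΓ : ∀ a b c : powSubgroup Γ M,
      ((a * b * c : Γ) : GL n R).1.trace = ((b * a * c : Γ) : GL n R).1.trace) :
    IsVirtuallySolvable Γ := by
  let K := AlgebraicClosure (FractionRing R)
  have algebraMap_injective : Function.Injective (algebraMap R K) := by
    rw [IsScalarTower.algebraMap_eq R (FractionRing R) K]
    exact (algebraMap (FractionRing R) K).injective.comp (IsFractionRing.injective R _)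
  have : CharZero K := charZero_of_injective_algebraMap algebraMap_injective
  let ρ : Representation K Γ (n → K) := (glRep (algebraMap R K)).comp Γ.subtype
  have ρ_injective : Function.Injective ρ :=
    (glRep_injective algebraMap_injective).comp Γ.subtype_injective
  refine exists_finiteIndex_isSolvable_of_injective ρ_injective hM
    (hasNilCommutators_of_trace _ fun a b c ↦ ?_)
  exact (trace_glRep _ _).trans ((congrArg _ (hΓ a b c)).trans (trace_glRep _ _).symm)

end TraceCriterion

theorem stmt_3_general {R : Type*} [CommRing R] [IsDomain R] [Algebra ℚ R]
    (hfg : Algebra.FiniteType ℚ R) :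
    ∃ D, ∀ {n : Type*} [Fintype n] [DecidableEq n] {Γ : Subgroup (GL n R)},
      ¬ IsVirtuallySolvable Γ → ∀ {ι : Type*} [Finite ι] {A : ι → Matrix n n R},
      (∀ i, Module.End.IsSemisimple ((A i).map (algebraMap R (FractionRing R))).mulVecLin) →
      ∃ (F : IntermediateField ℚ (AlgebraicClosure ℚ)) (_ : FiniteDimensional ℚ F) (θ : R →ₐ[ℚ] F),
        Module.finrank ℚ F ≤ D ∧
        ¬ IsVirtuallySolvable (Γ.map (Matrix.GeneralLinearGroup.map θ.toRingHom)) ∧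
        ∀ i, Module.End.IsSemisimple ((A i).map θ.toRingHom).mulVecLin := by
  have : CharZero R := algebraRat.charZero R
  obtain ⟨D, hD⟩ := exists_algHom_apply_ne_zero_finrank_le ℚ R
  refine ⟨D, fun {n} _ _ {Γ} hΓ {ι} _ {A} hA ↦ ?_⟩
  obtain ⟨a, b, c, trace_ne⟩ : ∃ a b c : powSubgroup Γ (neatExponent D (Fintype.card n)),
      ((a * b * c : Γ) : GL n R).1.trace ≠ ((b * a * c : Γ) : GL n R).1.trace := by
    contrapose! hΓ
    exact isVirtuallySolvable_of_trace_eq (neatExponent_ne_zero D _) hΓ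
  choose d d_ne hd using fun i ↦ exists_ne_zero_forall_isSemisimple_map (hA i)
  have := Fintype.ofFinite ι
  obtain ⟨F, hF, θ, finrank_le, hθ⟩ := hD _ (mul_ne_zero (sub_ne_zero.2 trace_ne)
    (Finset.prod_ne_zero_iff.2 fun i (_ : i ∈ Finset.univ) ↦ d_ne i))
  rw [map_mul, map_prod, mul_ne_zero_iff, map_sub, sub_ne_zero, Finset.prod_ne_zero_iff] at hθ
  refine ⟨F, hF, θ, finrank_le, fun hsol ↦ hθ.1 ?_, fun i ↦ hd i _ (hθ.2 i (Finset.mem_univ i))⟩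
  let φ : Γ →* _ := (Matrix.GeneralLinearGroup.map θ.toRingHom).subgroupMap Γ
  have trace_φ (g : Γ) : (φ g : GL n F).1.trace = θ (g : GL n R).1.trace :=
    (AddMonoidHom.map_trace θ _).symm
  have := trace_eq_of_isVirtuallySolvable finrank_le hsol ⟨φ a, map_mem_powSubgroup φ a.2⟩
    ⟨φ b, map_mem_powSubgroup φ b.2⟩ ⟨φ c, map_mem_powSubgroup φ c.2⟩
  rwa [← map_mul, ← map_mul, ← map_mul, ← map_mul, trace_φ, trace_φ] at this

/-- Specialization: given a non-virtually solvable subgroup `Γ ⊂ GL_n(R)` over a finitely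
generated `ℚ`-algebra domain `R` and elements `γ₁, …, γ_r ∈ Γ` that are semi-simple over the
fraction field of `R`, there is a `ℚ`-algebra homomorphism `θ : R → F` to a number field `F`
(realized as a finite subextension of an algebraic closure of `ℚ`) such that the induced map
`Θ : GL_n(R) → GL_n(F)` sends `Γ` to a non-virtually solvable group and each `Θ(γ_i)` is
semi-simple. -/
theorem stmt_3 {R : Type*} [CommRing R] [IsDomain R] [Algebra ℚ R]
    (hfg : Algebra.FiniteType ℚ R) {n : ℕ} (hn : 1 ≤ n)
    (Γ : Subgroup (GL (Fin n) R)) (hΓ : ¬ IsVirtuallySolvable ↥Γ)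
    (r : ℕ) (γ : Fin r → GL (Fin n) R) (hmem : ∀ i, γ i ∈ Γ)
    (hss : ∀ i, Module.End.IsSemisimple
      (((γ i : Matrix (Fin n) (Fin n) R).map
        (algebraMap R (FractionRing R))).mulVecLin)) :
    ∃ (F : IntermediateField ℚ (AlgebraicClosure ℚ)) (_ : FiniteDimensional ℚ ↥F)
      (θ : R →ₐ[ℚ] ↥F),
      ¬ IsVirtuallySolvable
          ↥(Γ.map (Matrix.GeneralLinearGroup.map (θ.toRingHom :
              R →+* ↥F))) ∧
      ∀ i, IsSemisimpleElt
        (Matrix.GeneralLinearGroup.map (θ.toRingHom : R →+* ↥F) (γ i)) := by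
  obtain ⟨_, h⟩ := stmt_3_general hfg
  obtain ⟨F, hF, θ, -, hθ⟩ := h hΓ hss
  exact ⟨F, hF, θ, hθ⟩
end
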